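/- Orowan's law. Let N = 1, I_s = −(−Δ)^s (i.e. g ≡ C(1,s)), σ ≡ 0, and assume W satisfies (W). Let p₀, L₀ ∈ ℝ with p₀ ≠ 0. Then the effective Hamiltonian H̄ of the ergodicity theorem satisfies H̄(δp₀, δ^{2s}L₀)/δ^{1+2s} → c₀|p₀|L₀ as δ → 0⁺, where c₀ = (∫_ℝ (φ')²)^{−1} and φ is the layer solution. -/

import Mathlib

/-!
Write `θ = δ^(2s)`, `ε = δ|p₀|` and `I = ∫ (φ')²`. The proof traps the solution of the evolution
equation between travelling waves `h (p y + λ t) - p y` whose speed `λ = δ^(1+2s) |p₀| l / I`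
is explicit, with `l` slightly larger or smaller than `L₀`.

*The profile.* `h` superposes rescaled layers `Φ (x / ε)`, `Φ = φ + θ ψ`, centred at all integers,
plus the constant `θ l / α` (`Oro.cell_est`, `Oro.exists_profile`). Expanding `W'` around one layer,
the terms of order `θ` cancel when `ψ` solves the linearized equation
`-(-Δ)^s ψ - W''(φ) ψ = (l / α) (W''(φ) - α) + (l / I) φ'`, whose right-hand side is orthogonal to
`φ'`. An error `o(θ)` is sufficient, so `ψ` only has to solve this equation up to a small uniform
error, and then it may even be taken compactly supported (`Oro.approx_corrector`).

*The approximate corrector.* By Hahn–Banach it is enough that a continuous functional `Λ` on bounded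
continuous functions which annihilates the range of the linearized operator on compactly supported
functions also kills decaying right-hand sides orthogonal to `φ'` (`Oro.annih_kills`). Mollifying
`Λ` gives an integrable function `g` nearly in the kernel of the (symmetric) linearized operator. As
`φ' > 0` nearly lies in that kernel too, the ground state inequality `Oro.energy` shows that `g` is
nearly a multiple of `φ'`.

*Decay.* The interaction of distant layers is controlled through algebraic decay of `φ`, `φ'` and `φ''`,
obtained from a maximum principle with the barrier `(R + |x|)^(-(1+2s))` (`Oro.decay`,
`Oro.exists_dec`). Layers at positions `i` and `-i` are paired: `1 - φ(x)` and `φ(-x)` agree to higher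
order, with the evenness of `W` supplying the missing cancellation when `s < 1/2`.

*Comparison.* A viscosity subsolution lies below a smooth strict supersolution
(`Oro.comparison`): a slowly dilated cut-off localizes the maximum of the difference and perturbs the
fractional Laplacian by an arbitrarily small amount. Since `h x - x` is bounded, the slope of the
solution is at most `λ` (`Oro.slope_le`), and at least `λ` for the lower barrier by reflection
(`Oro.le_slope`).
-/

open MeasureTheory Filter Metric Set

noncomputable section

/-- The normalizing constant `C(1,s) = 4^s Γ(1/2+s) / (√π |Γ(−s)|)` of the fractional
Laplacian in dimension one. -/
noncomputable def C1s (s : ℝ) : ℝ :=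
  4 ^ s * Real.Gamma (1/2 + s) / (Real.sqrt Real.pi * |Real.Gamma (-s)|)

/-- `I^{1,r}[φ,x] = C(1,s) ∫_{|z|≤r} (φ(x+z) − φ(x) − φ'(x)z)|z|^{−1−2s} dz`. -/
noncomputable def fracI1 (s : ℝ) (φ : ℝ → ℝ) (r x : ℝ) : ℝ :=
  C1s s * ∫ z in {z : ℝ | |z| ≤ r}, (φ (x + z) - φ x - deriv φ x * z) / |z| ^ (1 + 2*s)

/-- `I^{2,r}[u,x] = C(1,s) ∫_{|z|>r} (u(x+z) − u(x))|z|^{−1−2s} dz`. -/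
noncomputable def fracI2 (s : ℝ) (u : ℝ → ℝ) (r x : ℝ) : ℝ :=
  C1s s * ∫ z in {z : ℝ | r < |z|}, (u (x + z) - u x) / |z| ^ (1 + 2*s)

/-- The one-dimensional fractional Laplacian `−(−Δ)^s u (x)`, defined as a principal value. -/
noncomputable def fracLap (s : ℝ) (u : ℝ → ℝ) (x : ℝ) : ℝ :=
  limUnder (nhdsWithin 0 (Ioi (0:ℝ)))
    (fun ρ => C1s s * ∫ y in {y : ℝ | ρ < |y|}, (u (x + y) - u x) / |y| ^ (1 + 2*s))

/-- The Heaviside function. -/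
noncomputable def heav (x : ℝ) : ℝ := if 0 ≤ x then 1 else 0

/-- Assumption (W): `W ∈ C^{4,β}(ℝ)` for some `β ∈ (0,1)`, 1-periodic, vanishing exactly on
`ℤ`, with `α = W''(0) > 0`, and even if `s < 1/2`. -/
def WAssump (s : ℝ) (W : ℝ → ℝ) : Prop :=
  (∃ β : ℝ, β ∈ Set.Ioo (0:ℝ) 1 ∧ ContDiff ℝ 4 W ∧
    ∃ Cβ : ℝ, ∀ x y : ℝ, |iteratedDeriv 4 W x - iteratedDeriv 4 W y| ≤ Cβ * |x - y| ^ β) ∧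
  (∀ v : ℝ, W (v + 1) = W v) ∧
  (∀ k : ℤ, W (k : ℝ) = 0) ∧
  (∀ v : ℝ, (∀ k : ℤ, (k : ℝ) ≠ v) → 0 < W v) ∧
  0 < iteratedDeriv 2 W 0 ∧
  (s < 1/2 → ∀ v : ℝ, W (-v) = W v)

/-- `φ` is the layer solution: `−(−Δ)^s φ = W'(φ)`, `φ' > 0`, `φ(−∞)=0`, `φ(+∞)=1`,
`φ(0)=1/2` (it is of class `C^{4,β}`). -/
def IsLayerSolution (s : ℝ) (W φ : ℝ → ℝ) : Prop :=
  ContDiff ℝ 4 φ ∧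
  (∀ x, fracLap s φ x = deriv W (φ x)) ∧
  (∀ x, 0 < deriv φ x) ∧
  Tendsto φ atBot (nhds 0) ∧ Tendsto φ atTop (nhds 1) ∧ φ 0 = 1/2

/-- `ψ` is the (bounded, `C^{3,β}`) corrector associated with `L`:
`−(−Δ)^s ψ = W''(φ)ψ + (L/W''(0))(W''(φ) − W''(0)) + cφ'` with `c = L/∫(φ')²` and
`ψ(±∞) = 0`. -/
def IsCorrector (s L : ℝ) (W φ ψ : ℝ → ℝ) : Prop :=
  ContDiff ℝ 3 ψ ∧ (∃ M, ∀ x, |ψ x| ≤ M) ∧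
  (∀ x, fracLap s ψ x =
    iteratedDeriv 2 W (φ x) * ψ x +
    (L / iteratedDeriv 2 W 0) * (iteratedDeriv 2 W (φ x) - iteratedDeriv 2 W 0) +
    (L / ∫ y : ℝ, (deriv φ y) ^ 2) * deriv φ x) ∧
  Tendsto ψ atBot (nhds 0) ∧ Tendsto ψ atTop (nhds 0)

/-- A smooth cutoff `τ` with `0 ≤ τ ≤ 1`, `τ = 1` on `[−R,R]`, `τ = 0` outside `[−2R,2R]`. -/
def IsCutoff (R : ℝ) (τc : ℝ → ℝ) : Prop :=
  ContDiff ℝ (⊤ : ℕ∞) τc ∧ (∀ x, 0 ≤ τc x ∧ τc x ≤ 1) ∧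
  (∀ x : ℝ, |x| ≤ R → τc x = 1) ∧ (∀ x : ℝ, 2*R ≤ |x| → τc x = 0)

/-- The ansatz `s_{δ,n}^L(x) = δ^{2s}L/α + Σ_{i=−n}^n φ(x_i) − n + δ^{2s} Σ_{i=−n}^n ψ(x_i)τ(x_i)`
with `x_i = (x−i)/(δ|p₀|)` (the case `s ≥ 1/2` corresponds to `τ ≡ 1`). -/
noncomputable def ansatz (s : ℝ) (φ ψ τc : ℝ → ℝ) (α L p₀ δ : ℝ) (n : ℕ) (x : ℝ) : ℝ :=
  δ ^ (2*s) * L / α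
    + (∑ i ∈ Finset.Icc (-(n:ℤ)) (n:ℤ), φ ((x - i) / (δ * |p₀|))) - n
    + δ ^ (2*s) *
        ∑ i ∈ Finset.Icc (-(n:ℤ)) (n:ℤ),
          ψ ((x - i) / (δ * |p₀|)) * τc ((x - i) / (δ * |p₀|))

/-- The nonlinear operator `NL_L^λ[h] = λh' − δ^{2s}L − δ^{2s}|p₀|^{2s}(−(−Δ)^s h) + W'(h)`. -/
noncomputable def NLop (s δ p₀ L lam : ℝ) (W h : ℝ → ℝ) (x : ℝ) : ℝ :=
  lam * deriv h x - δ ^ (2*s) * L - δ ^ (2*s) * |p₀| ^ (2*s) * fracLap s h x + deriv W (h x)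

end

noncomputable section

/-- Viscosity subsolution of the one-dimensional problem
`∂_t u = F(t, x, u, u_x, −(−Δ)^s u(t,·))` with initial datum `u₀`. -/
def IsSubsol1 (s : ℝ) (F : ℝ → ℝ → ℝ → ℝ → ℝ → ℝ)
    (u₀ : ℝ → ℝ) (u : ℝ → ℝ → ℝ) : Prop :=
  UpperSemicontinuousOn (fun q : ℝ × ℝ => u q.1 q.2) (Ici 0 ×ˢ univ) ∧
  (∀ T > 0, ∃ M, ∀ t ∈ Ioc (0:ℝ) T, ∀ x : ℝ, |u t x| ≤ M) ∧
  (∀ x, u 0 x ≤ u₀ x) ∧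
  ∀ t₀ x₀ : ℝ, 0 < t₀ →
    ∀ φ : ℝ → ℝ → ℝ, ContDiff ℝ 2 (fun q : ℝ × ℝ => φ q.1 q.2) →
    ∀ τ r : ℝ, 0 < τ → τ < t₀ → 0 < r →
    (∀ t x, t ∈ Ioo (t₀ - τ) (t₀ + τ) → |x - x₀| < r →
      u t x - φ t x ≤ u t₀ x₀ - φ t₀ x₀) →
    deriv (fun t => φ t x₀) t₀ -
      F t₀ x₀ (u t₀ x₀) (deriv (fun x => φ t₀ x) x₀)
        (fracI1 s (fun x => φ t₀ x) r x₀ + fracI2 s (fun x => u t₀ x) r x₀) ≤ 0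

/-- Viscosity supersolution of the one-dimensional problem. -/
def IsSupersol1 (s : ℝ) (F : ℝ → ℝ → ℝ → ℝ → ℝ → ℝ)
    (u₀ : ℝ → ℝ) (u : ℝ → ℝ → ℝ) : Prop :=
  LowerSemicontinuousOn (fun q : ℝ × ℝ => u q.1 q.2) (Ici 0 ×ˢ univ) ∧
  (∀ T > 0, ∃ M, ∀ t ∈ Ioc (0:ℝ) T, ∀ x : ℝ, |u t x| ≤ M) ∧
  (∀ x, u₀ x ≤ u 0 x) ∧
  ∀ t₀ x₀ : ℝ, 0 < t₀ →
    ∀ φ : ℝ → ℝ → ℝ, ContDiff ℝ 2 (fun q : ℝ × ℝ => φ q.1 q.2) →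
    ∀ τ r : ℝ, 0 < τ → τ < t₀ → 0 < r →
    (∀ t x, t ∈ Ioo (t₀ - τ) (t₀ + τ) → |x - x₀| < r →
      u t₀ x₀ - φ t₀ x₀ ≤ u t x - φ t x) →
    0 ≤ deriv (fun t => φ t x₀) t₀ -
      F t₀ x₀ (u t₀ x₀) (deriv (fun x => φ t₀ x) x₀)
        (fracI1 s (fun x => φ t₀ x) r x₀ + fracI2 s (fun x => u t₀ x) r x₀)

/-- Viscosity solution of the one-dimensional problem. -/
def IsSol1 (s : ℝ) (F : ℝ → ℝ → ℝ → ℝ → ℝ → ℝ)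
    (u₀ : ℝ → ℝ) (u : ℝ → ℝ → ℝ) : Prop :=
  ContinuousOn (fun q : ℝ × ℝ => u q.1 q.2) (Ici 0 ×ˢ univ) ∧
  IsSubsol1 s F u₀ u ∧ IsSupersol1 s F u₀ u

/-- `w(τ,y)/τ → lam` as `τ → +∞`, locally uniformly in `y`. -/
def SlopeLim1 (w : ℝ → ℝ → ℝ) (lam : ℝ) : Prop :=
  ∀ ε > 0, ∀ R > 0, ∃ T : ℝ, ∀ τ, T ≤ τ → ∀ y : ℝ, |y| ≤ R → |w τ y / τ - lam| ≤ ε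

end

namespace Oro

/-! ### The fractional Laplacian through second differences -/

lemma C1s_pos {s : ℝ} (hs : s ∈ Ioo (0:ℝ) 1) : 0 < C1s s := by
  unfold C1s
  have h1 : 0 < Real.Gamma (1/2 + s) := Real.Gamma_pos_of_pos (by linarith [hs.1])
  have h2 : Real.Gamma (-s) ≠ 0 := by
    apply Real.Gamma_ne_zero
    intro m hm
    have : s = m := by linarith
    rcases Nat.eq_zero_or_pos m with h | h
    · subst h; simp at this; linarith [hs.1]
    · have : (1:ℝ) ≤ m := by exact_mod_cast h
      linarith [hs.2]
  have h3 := abs_pos.mpr h2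
  have h4 : (0:ℝ) < 4 ^ s := by positivity
  positivity

/-- The symmetric second difference of `u` at `x` with step `z`. -/
def sd (u : ℝ → ℝ) (x z : ℝ) : ℝ := u (x + z) + u (x - z) - 2 * u x

/-- The operator `−(−Δ)^s` written through second differences. On bounded `C²` functions the
integral converges absolutely and the value agrees with the principal value. -/
noncomputable def J (s : ℝ) (u : ℝ → ℝ) (x : ℝ) : ℝ :=
  C1s s * ∫ z in Ioi (0:ℝ), sd u x z / z ^ (1 + 2*s)

/-- Absolute convergence of the integral that defines `J s u x`. -/
def Good (s : ℝ) (u : ℝ → ℝ) (x : ℝ) : Prop :=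
  IntegrableOn (fun z => sd u x z / z ^ (1 + 2*s)) (Ioi (0:ℝ))

lemma sd_continuous {u : ℝ → ℝ} (hu : Continuous u) (x : ℝ) : Continuous (sd u x) := by
  unfold sd; fun_prop

lemma small_int {s : ℝ} (hs : s ∈ Ioo (0:ℝ) 1) {a : ℝ} (ha : 0 < a) :
    IntegrableOn (fun z : ℝ => z^2 / z ^ (1 + 2*s)) (Ioc 0 a) ∧
    ∫ z in Ioc 0 a, z^2 / z ^ (1 + 2*s) = a ^ (2 - 2*s) / (2 - 2*s) := by
  have he : ∀ z ∈ Ioc (0:ℝ) a, z ^ (1 - 2*s) = z^2 / z ^ (1 + 2*s) := by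
    intro z hz
    rw [← Real.rpow_natCast, ← Real.rpow_sub hz.1]; congr 1; push_cast; ring
  have h1 : IntervalIntegrable (fun z : ℝ => z ^ (1 - 2*s)) volume 0 a :=
    intervalIntegral.intervalIntegrable_rpow' (by linarith [hs.2])
  rw [intervalIntegrable_iff_integrableOn_Ioc_of_le ha.le] at h1
  refine ⟨h1.congr_fun he measurableSet_Ioc, ?_⟩
  rw [← setIntegral_congr_fun measurableSet_Ioc he, ← intervalIntegral.integral_of_le ha.le,
    integral_rpow (Or.inl (by linarith [hs.2])), Real.zero_rpow (by linarith [hs.2])]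
  rw [sub_zero]; congr 1 <;> [congr 1; skip] <;> ring

lemma large_int {s : ℝ} (hs : s ∈ Ioo (0:ℝ) 1) {a : ℝ} (ha : 0 < a) :
    IntegrableOn (fun z : ℝ => 1 / z ^ (1 + 2*s)) (Ioi a) ∧
    ∫ z in Ioi a, 1 / z ^ (1 + 2*s) = a ^ (-(2*s)) / (2*s) := by
  have he : ∀ z ∈ Ioi a, z ^ (-(1 + 2*s)) = 1 / z ^ (1 + 2*s) := by
    intro z hz
    rw [Real.rpow_neg (ha.trans hz).le, one_div]
  refine ⟨(integrableOn_Ioi_rpow_of_lt (by linarith [hs.1]) ha).congr_fun he measurableSet_Ioi, ?_⟩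
  rw [← setIntegral_congr_fun measurableSet_Ioi he, integral_Ioi_rpow_of_lt (by linarith [hs.1]) ha]
  rw [neg_div, ← div_neg]
  congr 1 <;> [congr 1; skip] <;> ring

/-- Splitting the singular integral at `a`: quadratic control below, a bound above. -/
lemma kernel_bound {s : ℝ} (hs : s ∈ Ioo (0:ℝ) 1) {f : ℝ → ℝ} (hf : Continuous f) {a A B : ℝ}
    (ha : 0 < a) (h1 : ∀ z ∈ Ioc 0 a, |f z| ≤ A * z^2) (h2 : ∀ z, a < z → |f z| ≤ B) :
    IntegrableOn (fun z => f z / z ^ (1 + 2*s)) (Ioi 0) ∧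
    |∫ z in Ioi (0:ℝ), f z / z ^ (1 + 2*s)| ≤
      A * (a ^ (2 - 2*s) / (2 - 2*s)) + B * (a ^ (-(2*s)) / (2*s)) := by
  have hmeas : Measurable (fun z => f z / z ^ (1 + 2*s)) :=
    hf.measurable.div (measurable_id.pow_const _)
  obtain ⟨s1, s2⟩ := small_int hs ha
  obtain ⟨l1, l2⟩ := large_int hs ha
  have b1 : ∀ z ∈ Ioc 0 a, ‖f z / z ^ (1 + 2*s)‖ ≤ A * (z^2 / z ^ (1 + 2*s)) := by
    intro z hz
    have : 0 < z ^ (1+2*s) := Real.rpow_pos_of_pos hz.1 _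
    rw [norm_div, Real.norm_eq_abs, Real.norm_of_nonneg this.le, ← mul_div_assoc]
    gcongr; exact h1 z hz
  have b2 : ∀ z ∈ Ioi a, ‖f z / z ^ (1 + 2*s)‖ ≤ B * (1 / z ^ (1 + 2*s)) := by
    intro z hz
    have : 0 < z ^ (1+2*s) := Real.rpow_pos_of_pos (ha.trans hz) _
    rw [norm_div, Real.norm_eq_abs, Real.norm_of_nonneg this.le, ← mul_div_assoc, mul_one]
    gcongr; exact h2 z hz
  have i1 : IntegrableOn (fun z => f z / z ^ (1 + 2*s)) (Ioc 0 a) :=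
    Integrable.mono' (s1.const_mul A) hmeas.aestronglyMeasurable
      ((ae_restrict_iff' measurableSet_Ioc).2 (ae_of_all _ b1))
  have i2 : IntegrableOn (fun z => f z / z ^ (1 + 2*s)) (Ioi a) :=
    Integrable.mono' (l1.const_mul B) hmeas.aestronglyMeasurable
      ((ae_restrict_iff' measurableSet_Ioi).2 (ae_of_all _ b2))
  have hU : Ioi (0:ℝ) = Ioc 0 a ∪ Ioi a := (Ioc_union_Ioi_eq_Ioi ha.le).symm
  refine ⟨by rw [hU]; exact i1.union i2, ?_⟩
  rw [hU, setIntegral_union (Ioc_disjoint_Ioi le_rfl) measurableSet_Ioi i1 i2]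
  refine (abs_add_le _ _).trans (add_le_add ?_ ?_)
  · rw [← s2, ← integral_const_mul, ← Real.norm_eq_abs]
    exact norm_integral_le_of_norm_le (s1.const_mul A)
      ((ae_restrict_iff' measurableSet_Ioc).2 (ae_of_all _ b1))
  · rw [← l2, ← integral_const_mul, ← Real.norm_eq_abs]
    exact norm_integral_le_of_norm_le (l1.const_mul B)
      ((ae_restrict_iff' measurableSet_Ioi).2 (ae_of_all _ b2))

lemma good_of_bound {s : ℝ} (hs : s ∈ Ioo (0:ℝ) 1) {u : ℝ → ℝ} (hu : Continuous u) {x a A B : ℝ}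
    (ha : 0 < a) (h1 : ∀ z ∈ Ioc 0 a, |sd u x z| ≤ A * z^2) (h2 : ∀ z, a < z → |sd u x z| ≤ B) :
    Good s u x := (kernel_bound hs (sd_continuous hu x) ha h1 h2).1

lemma J_bound {s : ℝ} (hs : s ∈ Ioo (0:ℝ) 1) {u : ℝ → ℝ} (hu : Continuous u) {x a A B : ℝ}
    (ha : 0 < a) (h1 : ∀ z ∈ Ioc 0 a, |sd u x z| ≤ A * z^2) (h2 : ∀ z, a < z → |sd u x z| ≤ B) :
    |J s u x| ≤ C1s s * (A * (a ^ (2 - 2*s) / (2 - 2*s)) + B * (a ^ (-(2*s)) / (2*s))) := by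
  unfold J
  rw [abs_mul, abs_of_pos (C1s_pos hs)]
  exact mul_le_mul_of_nonneg_left (kernel_bound hs (sd_continuous hu x) ha h1 h2).2 (C1s_pos hs).le

lemma Good.add {s : ℝ} {u v : ℝ → ℝ} {x : ℝ} (hu : Good s u x) (hv : Good s v x) :
    Good s (fun y => u y + v y) x := by
  unfold Good at *
  refine (Integrable.add hu hv).congr (ae_of_all _ fun z => ?_)
  simp only [Pi.add_apply, sd]; ring

lemma Good.const_mul {s : ℝ} {u : ℝ → ℝ} {x : ℝ} (hu : Good s u x) (c : ℝ) :
    Good s (fun y => c * u y) x := by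
  unfold Good at *
  refine (Integrable.const_mul hu c).congr (ae_of_all _ fun z => ?_)
  simp only [sd]; ring

lemma J_add {s : ℝ} {u v : ℝ → ℝ} {x : ℝ} (hu : Good s u x) (hv : Good s v x) :
    J s (fun y => u y + v y) x = J s u x + J s v x := by
  unfold J Good at *
  rw [← mul_add, ← integral_add hu hv]
  congr 2; funext z; simp only [sd]; ring

lemma J_const_mul (s : ℝ) (u : ℝ → ℝ) (x c : ℝ) :
    J s (fun y => c * u y) x = c * J s u x := by
  unfold J
  rw [mul_left_comm c, ← integral_const_mul c]
  congr 2; funext z; simp only [sd]; ring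

/-- Additive linear perturbations do not change second differences. -/
lemma sd_add_affine (u : ℝ → ℝ) (a c x z : ℝ) :
    sd (fun y => u y + a * y + c) x z = sd u x z := by
  simp only [sd]; ring

lemma sd_comp_affine (u : ℝ → ℝ) (a c x z : ℝ) :
    sd (fun y => u (a * y + c)) x z = sd u (a * x + c) (|a| * z) := by
  simp only [sd]
  rcases abs_cases a with ⟨h, _⟩ | ⟨h, _⟩ <;> rw [h]
  · ring_nf
  · have e1 : a * (x + z) + c = a * x + c - -a * z := by ring
    have e2 : a * (x - z) + c = a * x + c + -a * z := by ring
    rw [e1, e2]; ring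

lemma scale_aux {s a z : ℝ} (ha : 0 < a) (hz : 0 < z) (t : ℝ) :
    t / z ^ (1 + 2*s) = a ^ (1 + 2*s) * (t / (a * z) ^ (1 + 2*s)) := by
  rw [Real.mul_rpow ha.le hz.le]
  have := (Real.rpow_pos_of_pos ha (1+2*s)).ne'
  have := (Real.rpow_pos_of_pos hz (1+2*s)).ne'
  field_simp

lemma J_comp_affine (s : ℝ) (u : ℝ → ℝ) {a : ℝ} (ha : a ≠ 0) (c x : ℝ) :
    J s (fun y => u (a * y + c)) x = |a| ^ (2*s) * J s u (a * x + c) := by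
  have ha' : 0 < |a| := abs_pos.2 ha
  unfold J
  rw [mul_left_comm]
  congr 1
  have h1 : ∫ z in Ioi (0:ℝ), sd (fun y => u (a * y + c)) x z / z ^ (1 + 2*s) =
      ∫ z in Ioi (0:ℝ), (fun t => |a| ^ (1 + 2*s) * (sd u (a * x + c) t / t ^ (1 + 2*s))) (|a| * z) := by
    refine setIntegral_congr_fun measurableSet_Ioi fun z hz => ?_
    simp only [sd_comp_affine]
    exact scale_aux ha' hz _
  have h2 := integral_comp_mul_left_Ioi
    (fun t => |a| ^ (1 + 2*s) * (sd u (a * x + c) t / t ^ (1 + 2*s))) 0 ha'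
  rw [h1, h2, mul_zero, integral_const_mul, smul_eq_mul, ← mul_assoc]
  congr 1
  rw [Real.rpow_add ha', Real.rpow_one, ← mul_assoc, inv_mul_cancel₀ ha'.ne', one_mul]

lemma Good.comp_affine {s : ℝ} {u : ℝ → ℝ} {a : ℝ} (ha : a ≠ 0) {c x : ℝ}
    (h : Good s u (a * x + c)) : Good s (fun y => u (a * y + c)) x := by
  have ha' : 0 < |a| := abs_pos.2 ha
  unfold Good at *
  have h2 : IntegrableOn (fun t => |a| ^ (1 + 2*s) * (sd u (a * x + c) t / t ^ (1 + 2*s)))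
      (Ioi (|a| * 0)) := by rw [mul_zero]; exact Integrable.const_mul h _
  have h3 := (integrableOn_Ioi_comp_mul_left_iff _ 0 ha').2 h2
  refine h3.congr_fun (fun z hz => ?_) measurableSet_Ioi
  simp only [sd_comp_affine]
  exact (scale_aux ha' hz _).symm

/-- One-sided Taylor bound for the second difference. -/
lemma sd_le_of_deriv2 {u : ℝ → ℝ} {u' u'' : ℝ → ℝ} {x z M : ℝ} (hz : 0 ≤ z)
    (h1 : ∀ y ∈ Icc (x - z) (x + z), HasDerivAt u (u' y) y)
    (h2 : ∀ y ∈ Icc (x - z) (x + z), HasDerivAt u' (u'' y) y)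
    (hM : ∀ y ∈ Icc (x - z) (x + z), u'' y ≤ M) : sd u x z ≤ M * z^2 := by
  have hd : ∀ t ∈ Icc 0 z, u' (x + t) - u' (x - t) ≤ M * (2 * t) := by
    intro t ht
    have := Convex.image_sub_le_mul_sub_of_deriv_le (convex_Icc (x - z) (x + z))
      (f := u') (C := M) (fun y hy => (h2 y hy).continuousAt.continuousWithinAt)
      (fun y hy => (h2 y (interior_subset hy)).differentiableAt.differentiableWithinAt)
      (fun y hy => by rw [(h2 y (interior_subset hy)).deriv]; exact hM y (interior_subset hy))
      (x - t) ⟨by linarith [ht.2], by linarith [ht.1]⟩ (x + t) ⟨by linarith [ht.1], by linarith [ht.2]⟩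
      (by linarith [ht.1])
    calc _ ≤ _ := this
      _ = _ := by ring
  have hG : ∀ t ∈ Icc 0 z, HasDerivAt (fun t => u (x + t) + u (x - t) - 2 * u x - M * t^2)
      (u' (x + t) - u' (x - t) - M * (2 * t)) t := by
    intro t ht
    have a1 := (h1 (x + t) ⟨by linarith [ht.1], by linarith [ht.2]⟩).comp_const_add x t
    have a2 := (h1 (x - t) ⟨by linarith [ht.2], by linarith [ht.1]⟩).comp_const_sub x t
    have a3 := (((hasDerivAt_pow 2 t).const_mul M))
    exact (((a1.add a2).sub_const (2 * u x)).sub a3).congr_deriv (by push_cast; ring)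
  have hanti := antitoneOn_of_deriv_nonpos (convex_Icc 0 z)
    (fun t ht => (hG t ht).continuousAt.continuousWithinAt)
    (fun t ht => (hG t (interior_subset ht)).differentiableAt.differentiableWithinAt)
    (fun t ht => by
      rw [(hG t (interior_subset ht)).deriv]; linarith [hd t (interior_subset ht)])
  have := hanti ⟨le_rfl, hz⟩ ⟨hz, le_rfl⟩ hz
  simp only [sd]
  simp at this
  linarith

lemma sd_abs_le_of_deriv2 {u : ℝ → ℝ} {u' u'' : ℝ → ℝ} {x z M : ℝ} (hz : 0 ≤ z)
    (h1 : ∀ y ∈ Icc (x - z) (x + z), HasDerivAt u (u' y) y)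
    (h2 : ∀ y ∈ Icc (x - z) (x + z), HasDerivAt u' (u'' y) y)
    (hM : ∀ y ∈ Icc (x - z) (x + z), |u'' y| ≤ M) : |sd u x z| ≤ M * z^2 := by
  rw [abs_le]
  constructor
  · have := sd_le_of_deriv2 (u := fun y => - u y) (u' := fun y => - u' y) (u'' := fun y => - u'' y)
      hz (fun y hy => (h1 y hy).neg) (fun y hy => (h2 y hy).neg)
      (fun y hy => (neg_le_abs _).trans (hM y hy))
    have e : sd (fun y => - u y) x z = - sd u x z := by simp only [sd]; ring
    rw [e] at this; linarith
  · exact sd_le_of_deriv2 hz h1 h2 (fun y hy => (le_abs_self _).trans (hM y hy))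

lemma c2_hasDeriv {u : ℝ → ℝ} (hu : ContDiff ℝ 2 u) :
    (∀ y, HasDerivAt u (deriv u y) y) ∧ (∀ y, HasDerivAt (deriv u) (deriv (deriv u) y) y) ∧
    Continuous (deriv u) ∧ Continuous (deriv (deriv u)) := by
  have h1 : ContDiff ℝ 1 (deriv u) := by
    have : ContDiff ℝ (1 + 1) u := by norm_num; exact hu
    exact ((contDiff_succ_iff_deriv (n := 1)).1 this).2.2
  exact ⟨fun y => (hu.differentiable (by norm_num) y).hasDerivAt,
    fun y => (h1.differentiable (by norm_num) y).hasDerivAt, h1.continuous,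
    h1.continuous_deriv (by norm_num)⟩

lemma c2_sd_bound {u : ℝ → ℝ} (hu : ContDiff ℝ 2 u) (x r : ℝ) :
    ∃ A, 0 ≤ A ∧ ∀ z ∈ Ioc 0 r, |sd u x z| ≤ A * z^2 := by
  obtain ⟨h1, h2, -, h3⟩ := c2_hasDeriv hu
  obtain ⟨A, hA⟩ := (isCompact_Icc (a := x - r) (b := x + r)).exists_bound_of_continuousOn
    h3.continuousOn
  refine ⟨max A 0, le_max_right _ _, fun z hz => sd_abs_le_of_deriv2 hz.1.le (fun y _ => h1 y) (fun y _ => h2 y)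
    (fun y hy => ?_)⟩
  exact (hA y ⟨by linarith [hy.1, hz.2], by linarith [hy.2, hz.2]⟩).trans (le_max_left _ _)

lemma sd_bdd {u : ℝ → ℝ} {M : ℝ} (h : ∀ x, |u x| ≤ M) (x z : ℝ) : |sd u x z| ≤ 4 * M := by
  have a1 := abs_le.1 (h (x + z)); have a2 := abs_le.1 (h (x - z)); have a3 := abs_le.1 (h x)
  simp only [sd]
  rw [abs_le]; constructor <;> linarith

lemma good_of_c2 {s : ℝ} (hs : s ∈ Ioo (0:ℝ) 1) {u : ℝ → ℝ} (hu : ContDiff ℝ 2 u) {M : ℝ}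
    (hM : ∀ x, |u x| ≤ M) (x : ℝ) : Good s u x := by
  obtain ⟨A, -, hA⟩ := c2_sd_bound hu x 1
  exact good_of_bound hs hu.continuous one_pos hA (fun z _ => sd_bdd hM x z)

/-! ### Agreement with the principal value and with the viscosity splitting -/

lemma integral_symm {F : ℝ → ℝ} (hF : Integrable F) :
    ∫ z, F z = ∫ z in Ioi (0:ℝ), (F z + F (-z)) := by
  have h1 := integral_comp_neg_Ioi (0:ℝ) F
  have hn : IntegrableOn (fun z => F (-z)) (Ioi 0) := hF.comp_neg.integrableOn
  rw [integral_add hF.integrableOn hn, h1, neg_zero, add_comm,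
    ← setIntegral_union (Iic_disjoint_Ioi le_rfl) measurableSet_Ioi hF.integrableOn hF.integrableOn,
    Iic_union_Ioi, setIntegral_univ]

lemma integrable_of_abs {F : ℝ → ℝ} (h1 : IntegrableOn F (Ioi 0))
    (h2 : IntegrableOn (fun z => F (-z)) (Ioi 0)) : Integrable F := by
  have h3 : IntegrableOn F (Iio 0) := by
    have := (Measure.measurePreserving_neg (volume : Measure ℝ)).integrableOn_comp_preimage
      (Homeomorph.neg ℝ).measurableEmbedding (f := F) (s := Iio 0)
    refine this.1 ?_
    simpa [Function.comp_def] using h2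
  rw [← integrableOn_univ, ← Iio_union_Ici (a := (0:ℝ))]
  exact h3.union ((integrableOn_Ici_iff_integrableOn_Ioi (by simp)).2 h1)

lemma far_integral {s : ℝ} (hs : s ∈ Ioo (0:ℝ) 1) {u : ℝ → ℝ} (hu : Continuous u) {M : ℝ}
    (hM : ∀ x, |u x| ≤ M) (x : ℝ) {r : ℝ} (hr : 0 < r) :
    IntegrableOn (fun z => sd u x z / z ^ (1 + 2*s)) (Ioi r) ∧
    ∫ z in {z : ℝ | r < |z|}, (u (x + z) - u x) / |z| ^ (1 + 2*s) =
      ∫ z in Ioi r, sd u x z / z ^ (1 + 2*s) := by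
  have hS : MeasurableSet {z : ℝ | r < |z|} := measurableSet_lt measurable_const measurable_abs
  have key : ∀ ε : ℝ, (ε = 1 ∨ ε = -1) →
      IntegrableOn (fun z => (u (x + ε * z) - u x) / z ^ (1 + 2*s)) (Ioi r) := by
    intro ε _
    refine Integrable.mono' ((large_int hs hr).1.const_mul (2 * M)) ?_ ?_
    · have : Continuous (fun z => u (x + ε * z) - u x) := by fun_prop
      exact (this.measurable.div (measurable_id.pow_const _)).aestronglyMeasurable
    · refine (ae_restrict_iff' measurableSet_Ioi).2 (ae_of_all _ fun z hz => ?_)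
      have : 0 < z ^ (1+2*s) := Real.rpow_pos_of_pos (hr.trans hz) _
      rw [norm_div, Real.norm_eq_abs, Real.norm_of_nonneg this.le, ← mul_div_assoc, mul_one]
      gcongr
      have a1 := abs_le.1 (hM (x + ε * z)); have a3 := abs_le.1 (hM x)
      rw [abs_le]; constructor <;> linarith
  have k1 := key 1 (Or.inl rfl)
  have k2 := key (-1) (Or.inr rfl)
  have hsum : ∀ z, sd u x z / z ^ (1 + 2*s) =
      (u (x + 1 * z) - u x) / z ^ (1 + 2*s) + (u (x + (-1) * z) - u x) / z ^ (1 + 2*s) := by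
    intro z; rw [← add_div]; congr 1; simp only [sd]; ring_nf
  have hgood : IntegrableOn (fun z => sd u x z / z ^ (1 + 2*s)) (Ioi r) := by
    refine (Integrable.add k1 k2).congr (ae_of_all _ fun z => ?_)
    simp only [Pi.add_apply]; rw [hsum z]
  refine ⟨hgood, ?_⟩
  set F : ℝ → ℝ := ({z : ℝ | r < |z|}).indicator (fun z => (u (x + z) - u x) / |z| ^ (1 + 2*s)) with hF
  have e1 : ∀ z ∈ Ioi (0:ℝ), F z = (Ioi r).indicator (fun z => (u (x + 1 * z) - u x) / z ^ (1 + 2*s)) z := by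
    intro z hz
    have hz' : |z| = z := abs_of_pos hz
    by_cases h : r < z
    · rw [hF, indicator_of_mem (by simpa [hz'] using h), indicator_of_mem (by simpa using h), hz', one_mul]
    · rw [hF, indicator_of_notMem (by simpa [hz'] using h), indicator_of_notMem (by simpa using h)]
  have e2 : ∀ z ∈ Ioi (0:ℝ), F (-z) = (Ioi r).indicator (fun z => (u (x + (-1) * z) - u x) / z ^ (1 + 2*s)) z := by
    intro z hz
    have hz' : |z| = z := abs_of_pos hz
    by_cases h : r < z
    · rw [hF, indicator_of_mem (by simpa [hz'] using h), indicator_of_mem (by simpa using h), abs_neg, hz']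
      congr 3; ring
    · rw [hF, indicator_of_notMem (by simpa [hz'] using h), indicator_of_notMem (by simpa using h)]
  have i1 : IntegrableOn F (Ioi 0) :=
    (((integrable_indicator_iff measurableSet_Ioi).2 k1).integrableOn).congr_fun
      (fun z hz => (e1 z hz).symm) measurableSet_Ioi
  have i2 : IntegrableOn (fun z => F (-z)) (Ioi 0) :=
    (((integrable_indicator_iff measurableSet_Ioi).2 k2).integrableOn).congr_fun
      (fun z hz => (e2 z hz).symm) measurableSet_Ioi
  rw [← integral_indicator hS, integral_symm (integrable_of_abs i1 i2), ← integral_indicator measurableSet_Ioi,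
    ← integral_indicator measurableSet_Ioi]
  refine integral_congr_ae (ae_of_all _ fun z => ?_)
  by_cases hz : z ∈ Ioi (0:ℝ)
  · rw [indicator_of_mem hz]
    rw [e1 z hz, e2 z hz]
    by_cases h : z ∈ Ioi r
    · simp only [indicator_of_mem h]; rw [hsum z]
    · simp only [indicator_of_notMem h]; simp
  · rw [indicator_of_notMem hz, indicator_of_notMem]
    intro h; exact hz (hr.trans h)

lemma fracLap_eq_J {s : ℝ} (hs : s ∈ Ioo (0:ℝ) 1) {u : ℝ → ℝ} (hu : ContDiff ℝ 2 u) {M : ℝ}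
    (hM : ∀ x, |u x| ≤ M) (x : ℝ) : fracLap s u x = J s u x := by
  unfold fracLap
  apply Tendsto.limUnder_eq
  have hg := good_of_c2 hs hu hM x
  have h1 : Tendsto (fun ρ : ℝ => ∫ z in Ioi ρ, sd u x z / z ^ (1 + 2*s)) (nhdsWithin 0 (Ioi 0))
      (nhds (∫ z in Ioi (0:ℝ), sd u x z / z ^ (1 + 2*s))) := by
    have : ∀ ρ ∈ Ioi (0:ℝ), ∫ z in Ioi (0:ℝ), (Ioi ρ).indicator (fun z => sd u x z / z ^ (1 + 2*s)) z =
      ∫ z in Ioi ρ, sd u x z / z ^ (1 + 2*s) := by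
      intro ρ hρ
      rw [setIntegral_indicator measurableSet_Ioi]
      congr 2
      ext z; simp only [mem_inter_iff, mem_Ioi]
      exact ⟨fun h => h.2, fun h => ⟨lt_trans hρ h, h⟩⟩
    refine Tendsto.congr' (eventually_nhdsWithin_of_forall this) ?_
    refine tendsto_integral_filter_of_dominated_convergence
      (fun z => ‖sd u x z / z ^ (1 + 2*s)‖) ?_ ?_ hg.norm ?_
    · exact Eventually.of_forall fun ρ => hg.1.indicator measurableSet_Ioi
    · exact Eventually.of_forall fun ρ => ae_of_all _ fun z => norm_indicator_le_norm_self _ _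
    · refine (ae_restrict_iff' measurableSet_Ioi).2 (ae_of_all _ fun z hz => ?_)
      refine tendsto_const_nhds.congr' ?_
      have : ∀ᶠ ρ : ℝ in nhdsWithin 0 (Ioi 0), ρ < z :=
        nhdsWithin_le_nhds (eventually_lt_nhds hz)
      filter_upwards [this] with ρ hρ
      rw [indicator_of_mem (show z ∈ Ioi ρ from hρ)]
  refine Tendsto.const_mul _ (h1.congr' (eventually_nhdsWithin_of_forall fun ρ hρ => ?_))
  exact (far_integral hs hu.continuous hM x hρ).2.symm

lemma near_integral {s : ℝ} (hs : s ∈ Ioo (0:ℝ) 1) {u : ℝ → ℝ} (hu : ContDiff ℝ 2 u)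
    (x : ℝ) {r : ℝ} (hr : 0 < r) :
    IntegrableOn (fun z => sd u x z / z ^ (1 + 2*s)) (Ioc 0 r) ∧
    ∫ z in {z : ℝ | |z| ≤ r}, (u (x + z) - u x - deriv u x * z) / |z| ^ (1 + 2*s) =
      ∫ z in Ioc 0 r, sd u x z / z ^ (1 + 2*s) := by
  obtain ⟨h1, h2, -, h3⟩ := c2_hasDeriv hu
  obtain ⟨A, hA⟩ := (isCompact_Icc (a := x - r) (b := x + r)).exists_bound_of_continuousOn
    h3.continuousOn
  have hA0 : 0 ≤ A := (norm_nonneg _).trans (hA x ⟨by linarith, by linarith⟩)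
  have hlip : ∀ y ∈ Icc (x - r) (x + r), |deriv u y - deriv u x| ≤ A * |y - x| := by
    intro y hy
    exact (convex_Icc (x - r) (x + r)).norm_image_sub_le_of_norm_hasDerivWithin_le
      (fun t ht => (h2 t).hasDerivWithinAt) hA ⟨by linarith, by linarith⟩ hy
  have htay : ∀ z, |z| ≤ r → |u (x + z) - u x - deriv u x * z| ≤ A * |z| * |z| := by
    intro z hz
    have hz' := abs_le.1 hz
    have hsub : uIcc x (x + z) ⊆ Icc (x - r) (x + r) := by
      apply uIcc_subset_Icc <;> constructor <;> linarith
    have := (convex_uIcc x (x + z)).norm_image_sub_le_of_norm_hasDerivWithin_le (C := A * |z|)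
      (f := fun y => u y - deriv u x * y) (f' := fun y => deriv u y - deriv u x)
      (fun t ht => ((h1 t).sub (by simpa using (hasDerivAt_id t).const_mul (deriv u x))).hasDerivWithinAt)
      (fun t ht => by
        refine (hlip t (hsub ht)).trans (mul_le_mul_of_nonneg_left ?_ hA0)
        have := abs_sub_left_of_mem_uIcc ht
        simpa using this) left_mem_uIcc right_mem_uIcc
    simp only [Real.norm_eq_abs] at this
    have e : u (x + z) - deriv u x * (x + z) - (u x - deriv u x * x) = u (x + z) - u x - deriv u x * z := by ring
    rw [e] at this
    simpa using this
  have hS : MeasurableSet {z : ℝ | |z| ≤ r} := measurableSet_le measurable_abs measurable_const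
  have key : ∀ ε : ℝ, (ε = 1 ∨ ε = -1) →
      IntegrableOn (fun z => (u (x + ε * z) - u x - deriv u x * (ε * z)) / z ^ (1 + 2*s)) (Ioc 0 r) := by
    intro ε hε
    have hε' : |ε| = 1 := by rcases hε with rfl | rfl <;> simp
    refine Integrable.mono' ((small_int hs hr).1.const_mul A) ?_ ?_
    · have hc := hu.continuous
      have : Continuous (fun z => u (x + ε * z) - u x - deriv u x * (ε * z)) := by fun_prop
      exact (this.measurable.div (measurable_id.pow_const _)).aestronglyMeasurable
    · refine (ae_restrict_iff' measurableSet_Ioc).2 (ae_of_all _ fun z hz => ?_)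
      have : 0 < z ^ (1+2*s) := Real.rpow_pos_of_pos hz.1 _
      rw [norm_div, Real.norm_eq_abs, Real.norm_of_nonneg this.le, ← mul_div_assoc]
      gcongr
      have hz2 : |ε * z| = z := by rw [abs_mul, hε', one_mul, abs_of_pos hz.1]
      have := htay (ε * z) (by rw [hz2]; exact hz.2)
      rw [hz2] at this
      calc _ ≤ _ := this
        _ = _ := by ring
  have k1 := key 1 (Or.inl rfl)
  have k2 := key (-1) (Or.inr rfl)
  have hsum : ∀ z, sd u x z / z ^ (1 + 2*s) =
      (u (x + 1 * z) - u x - deriv u x * (1 * z)) / z ^ (1 + 2*s)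
        + (u (x + (-1) * z) - u x - deriv u x * ((-1) * z)) / z ^ (1 + 2*s) := by
    intro z; rw [← add_div]; congr 1; simp only [sd]; ring_nf
  refine ⟨?_, ?_⟩
  · refine (Integrable.add k1 k2).congr (ae_of_all _ fun z => ?_)
    simp only [Pi.add_apply]; rw [hsum z]
  set F : ℝ → ℝ := ({z : ℝ | |z| ≤ r}).indicator
    (fun z => (u (x + z) - u x - deriv u x * z) / |z| ^ (1 + 2*s)) with hF
  have e1 : ∀ z ∈ Ioi (0:ℝ), F z = (Ioc 0 r).indicator
      (fun z => (u (x + 1 * z) - u x - deriv u x * (1 * z)) / z ^ (1 + 2*s)) z := by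
    intro z hz
    have hz' : |z| = z := abs_of_pos hz
    by_cases h : z ≤ r
    · rw [hF, indicator_of_mem (by simpa [hz'] using h), indicator_of_mem (show z ∈ Ioc 0 r from ⟨hz, h⟩), hz', one_mul]
    · rw [hF, indicator_of_notMem (by simpa [hz'] using h), indicator_of_notMem (fun hh => h hh.2)]
  have e2 : ∀ z ∈ Ioi (0:ℝ), F (-z) = (Ioc 0 r).indicator
      (fun z => (u (x + (-1) * z) - u x - deriv u x * ((-1) * z)) / z ^ (1 + 2*s)) z := by
    intro z hz
    have hz' : |z| = z := abs_of_pos hz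
    by_cases h : z ≤ r
    · rw [hF, indicator_of_mem (by simpa [hz'] using h), indicator_of_mem (show z ∈ Ioc 0 r from ⟨hz, h⟩), abs_neg, hz',
        neg_one_mul]
    · rw [hF, indicator_of_notMem (by simpa [hz'] using h), indicator_of_notMem (fun hh => h hh.2)]
  have i1 : IntegrableOn F (Ioi 0) :=
    (((integrable_indicator_iff measurableSet_Ioc).2 k1).integrableOn).congr_fun
      (fun z hz => (e1 z hz).symm) measurableSet_Ioi
  have i2 : IntegrableOn (fun z => F (-z)) (Ioi 0) :=
    (((integrable_indicator_iff measurableSet_Ioc).2 k2).integrableOn).congr_fun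
      (fun z hz => (e2 z hz).symm) measurableSet_Ioi
  rw [← integral_indicator hS, integral_symm (integrable_of_abs i1 i2), ← integral_indicator measurableSet_Ioi,
    ← integral_indicator measurableSet_Ioc]
  refine integral_congr_ae (ae_of_all _ fun z => ?_)
  by_cases hz : z ∈ Ioi (0:ℝ)
  · rw [indicator_of_mem hz]
    rw [e1 z hz, e2 z hz]
    by_cases h : z ∈ Ioc 0 r
    · simp only [indicator_of_mem h]; rw [hsum z]
    · simp only [indicator_of_notMem h]; simp
  · rw [indicator_of_notMem hz, indicator_of_notMem]
    intro h; exact hz h.1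

/-- If `u - v` has a global maximum at `x`, the viscosity splitting with test function `v` is
bounded by `J s v x`. -/
lemma split_le_J {s : ℝ} (hs : s ∈ Ioo (0:ℝ) 1) {u v : ℝ → ℝ} (hu : Continuous u)
    (hv : ContDiff ℝ 2 v) {M : ℝ} (hMu : ∀ x, |u x| ≤ M) (hMv : ∀ x, |v x| ≤ M) (x : ℝ)
    (hmax : ∀ y, u y - v y ≤ u x - v x) {r : ℝ} (hr : 0 < r) :
    fracI1 s v r x + fracI2 s u r x ≤ J s v x := by
  obtain ⟨n1, n2⟩ := near_integral hs hv x hr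
  obtain ⟨f1, f2⟩ := far_integral hs hu hMu x hr
  obtain ⟨g1, -⟩ := far_integral hs hv.continuous hMv x hr
  unfold fracI1 fracI2 J
  rw [n2, f2, ← mul_add, ← Ioc_union_Ioi_eq_Ioi hr.le,
    setIntegral_union (Ioc_disjoint_Ioi le_rfl) measurableSet_Ioi n1 g1]
  refine mul_le_mul_of_nonneg_left (add_le_add le_rfl ?_) (C1s_pos hs).le
  refine setIntegral_mono_on f1 g1 measurableSet_Ioi fun z hz => ?_
  have : 0 < z ^ (1+2*s) := Real.rpow_pos_of_pos (hr.trans hz) _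
  gcongr
  have a1 := hmax (x + z); have a2 := hmax (x - z)
  simp only [sd]; linarith

/-! ### Algebraic decay by a barrier -/

/-- The barrier `(R + |x|)^{-(1+2s)}`. -/
noncomputable def wt (s R x : ℝ) : ℝ := (R + |x|) ^ (-(1 + 2*s))

lemma wt_pos {s R : ℝ} (hR : 0 < R) (x : ℝ) : 0 < wt s R x :=
  Real.rpow_pos_of_pos (by have := abs_nonneg x; linarith) _

lemma wt_continuous {s R : ℝ} (hR : 0 < R) : Continuous (wt s R) := by
  unfold wt
  refine Continuous.rpow_const (by fun_prop) fun x => Or.inl ?_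
  have := abs_nonneg x; linarith

lemma wt_neg (s R x : ℝ) : wt s R (-x) = wt s R x := by simp [wt]

lemma wt_le_one {s R : ℝ} (hs : s ∈ Ioo (0:ℝ) 1) (hR : 1 ≤ R) (x : ℝ) : wt s R x ≤ 1 := by
  unfold wt
  apply Real.rpow_le_one_of_one_le_of_nonpos
  · have := abs_nonneg x; linarith
  · linarith [hs.1]

lemma wt_half_int {s R : ℝ} (hs : s ∈ Ioo (0:ℝ) 1) (hR : 0 < R) :
    IntegrableOn (wt s R) (Ioi 0) ∧ ∫ t in Ioi (0:ℝ), wt s R t = R ^ (-(2*s)) / (2*s) := by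
  obtain ⟨h1, h2⟩ := large_int hs hR
  have e : ∀ t ∈ Ioi (0:ℝ), 1 / (t + R) ^ (1 + 2*s) = wt s R t := by
    intro t ht
    unfold wt
    rw [abs_of_pos ht, Real.rpow_neg (by linarith [mem_Ioi.1 ht]), one_div, add_comm]
  have mp := measurePreserving_add_right (volume : Measure ℝ) R
  have me : MeasurableEmbedding (fun t : ℝ => t + R) := measurableEmbedding_addRight R
  have hpre : (fun t : ℝ => t + R) ⁻¹' (Ioi R) = Ioi 0 := by ext t; simp
  constructor
  · have := (mp.integrableOn_comp_preimage me).2 h1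
    rw [hpre] at this
    exact this.congr_fun e measurableSet_Ioi
  · rw [← h2, ← mp.setIntegral_preimage_emb me (fun z => 1 / z ^ (1 + 2*s)) (Ioi R), hpre]
    exact setIntegral_congr_fun measurableSet_Ioi fun t ht => (e t ht).symm

lemma wt_integrable {s R : ℝ} (hs : s ∈ Ioo (0:ℝ) 1) (hR : 0 < R) : Integrable (wt s R) := by
  have := (wt_half_int hs hR).1
  refine integrable_of_abs this ?_
  simpa only [wt_neg] using this

lemma wt_integral {s R : ℝ} (hs : s ∈ Ioo (0:ℝ) 1) (hR : 0 < R) :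
    ∫ t, wt s R t = R ^ (-(2*s)) / s := by
  rw [integral_symm (wt_integrable hs hR)]
  simp only [wt_neg]
  rw [integral_add (wt_half_int hs hR).1 (wt_half_int hs hR).1, (wt_half_int hs hR).2]
  have := hs.1.ne'
  field_simp; ring

lemma wt_translate {s R : ℝ} (hs : s ∈ Ioo (0:ℝ) 1) (hR : 0 < R) (x : ℝ) :
    IntegrableOn (fun z => wt s R (x + z) + wt s R (x - z)) (Ioi 0) ∧
    ∫ z in Ioi (0:ℝ), (wt s R (x + z) + wt s R (x - z)) = R ^ (-(2*s)) / s := by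
  have h := (wt_integrable hs hR).comp_add_left x
  have h' : Integrable (fun z => wt s R (x - z)) := by
    have := h.comp_neg
    simpa [sub_eq_add_neg] using this
  refine ⟨(h.add h').integrableOn, ?_⟩
  have := integral_symm h
  simp only [← sub_eq_add_neg] at this
  rw [← this, integral_add_left_eq_self (wt s R) x, wt_integral hs hR]

lemma sd_wt_abs (s R x z : ℝ) : sd (wt s R) |x| z = sd (wt s R) x z := by
  rcases abs_cases x with ⟨h, _⟩ | ⟨h, _⟩ <;> rw [h]
  simp only [sd]
  rw [← wt_neg s R (-x + z), ← wt_neg s R (-x - z), wt_neg s R x]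
  ring_nf

lemma sd_wt_near {s R : ℝ} (hs : s ∈ Ioo (0:ℝ) 1) (hR : 0 < R) {x z : ℝ} (hx : R < x) (hz : 0 ≤ z)
    (hz2 : z ≤ (R + x) / 4) :
    sd (wt s R) x z ≤ (12 * 2 ^ (5:ℝ) * (R + x) ^ (-(1 + 2*s) - 2)) * z^2 := by
  have hy : 0 < R + x := by linarith
  have hloc : ∀ t ∈ Icc (x - z) (x + z), (R + x) / 4 < t := fun t ht => by linarith [ht.1]
  have hsd : sd (wt s R) x z = sd (fun t => (R + t) ^ (-(1 + 2*s))) x z := by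
    simp only [sd, wt]
    rw [abs_of_pos (by linarith : 0 < x + z), abs_of_pos (by linarith : 0 < x - z),
      abs_of_pos (by linarith : 0 < x)]
  rw [hsd]
  refine sd_le_of_deriv2 (u' := fun t => (-(1+2*s)) * (R + t) ^ (-(1 + 2*s) - 1))
    (u'' := fun t => (-(1+2*s)) * ((-(1+2*s) - 1) * (R + t) ^ (-(1 + 2*s) - 1 - 1))) hz ?_ ?_ ?_
  · intro t ht
    have : R + t ≠ 0 := by linarith [hloc t ht]
    have h := (((hasDerivAt_id t).const_add R).rpow_const (p := -(1+2*s)) (Or.inl this))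
    exact h.congr_deriv (by simp only [id]; ring)
  · intro t ht
    have : R + t ≠ 0 := by linarith [hloc t ht]
    have h := (((hasDerivAt_id t).const_add R).rpow_const (p := -(1+2*s) - 1) (Or.inl this)).const_mul (-(1+2*s))
    exact h.congr_deriv (by simp only [id]; ring)
  · intro t ht
    have h1 : (R + x) / 2 ≤ R + t := by linarith [ht.1]
    have e : -(1+2*s) - 1 - 1 = -(1+2*s) - 2 := by ring
    have h2 : (R + t) ^ (-(1 + 2*s) - 2) ≤ ((R + x) / 2) ^ (-(1 + 2*s) - 2) :=
      Real.rpow_le_rpow_of_nonpos (by linarith) h1 (by linarith [hs.1])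
    have h3 : ((R + x) / 2) ^ (-(1 + 2*s) - 2) ≤ 2 ^ (5:ℝ) * (R + x) ^ (-(1 + 2*s) - 2) := by
      rw [Real.div_rpow hy.le (by norm_num), div_eq_mul_inv, ← Real.rpow_neg (by norm_num : (0:ℝ) ≤ 2),
        mul_comm]
      gcongr
      · norm_num
      · linarith [hs.2]
    have hp : 0 ≤ (R + t) ^ (-(1 + 2*s) - 2) := Real.rpow_nonneg (by linarith) _
    rw [e]
    have h12 : (1 + 2*s) * (2 + 2*s) ≤ 12 := by nlinarith [hs.1, hs.2]
    have e3 : -(1+2*s) * ((-(1+2*s) - 1) * (R + t) ^ (-(1 + 2*s) - 2)) =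
      ((1+2*s) * (2+2*s)) * (R + t) ^ (-(1 + 2*s) - 2) := by ring
    rw [e3]
    refine (mul_le_mul h12 (h2.trans h3) hp (by norm_num)).trans (le_of_eq ?_)
    ring

/-- At a contact point far from the origin, `J` of a function lying below the barrier is small
relative to the barrier itself. -/
lemma barrier_J {s : ℝ} (hs : s ∈ Ioo (0:ℝ) 1) : ∃ C : ℝ, 0 < C ∧ ∀ R : ℝ, 1 ≤ R → ∀ x : ℝ, R < |x| →
    ∀ (u : ℝ → ℝ) (Q : ℝ), 0 ≤ Q → Good s u x → (∀ z, 0 < z → sd u x z ≤ Q * sd (wt s R) x z) →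
    J s u x ≤ Q * (C * R ^ (-(2*s))) * wt s R x := by
  have hs0 := hs.1
  have hs1 := hs.2
  refine ⟨C1s s * (12 * 2 ^ (5:ℝ) / (2 - 2*s) + 4 ^ (1 + 2*s) / s), ?_, ?_⟩
  · have := C1s_pos hs
    have : 0 < 2 - 2*s := by linarith
    positivity
  intro R hR x hx u Q hQ hg hle
  have hR0 : 0 < R := by linarith
  set y := R + |x| with hy
  have hy0 : 0 < y := by linarith
  have ha : 0 < y / 4 := by linarith
  obtain ⟨s1, s2⟩ := small_int hs ha
  obtain ⟨t1, t2⟩ := wt_translate hs hR0 x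
  set c₁ : ℝ := 12 * 2 ^ (5:ℝ) * y ^ (-(1 + 2*s) - 2) with hc₁
  have hc₁0 : 0 ≤ c₁ := by positivity
  set G : ℝ → ℝ := fun z => Q * ((Ioc 0 (y/4)).indicator (fun z => c₁ * (z^2 / z ^ (1 + 2*s))) z
    + (y/4) ^ (-(1+2*s)) * (wt s R (x + z) + wt s R (x - z))) with hG
  have i1 : Integrable (fun z => (Ioc 0 (y/4)).indicator (fun z => c₁ * (z^2 / z ^ (1 + 2*s))) z)
      (volume.restrict (Ioi 0)) :=
    ((integrable_indicator_iff measurableSet_Ioc).2 (s1.const_mul c₁)).integrableOn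
  have i2 : Integrable (fun z => (y/4) ^ (-(1+2*s)) * (wt s R (x + z) + wt s R (x - z)))
      (volume.restrict (Ioi 0)) := Integrable.const_mul t1 _
  have iG : IntegrableOn G (Ioi 0) := (i1.add i2).const_mul Q
  have hp : ∀ z, 0 < z → sd u x z / z ^ (1 + 2*s) ≤ G z := by
    intro z hz
    have hzp : 0 < z ^ (1+2*s) := Real.rpow_pos_of_pos hz _
    have hw : 0 ≤ wt s R (x + z) + wt s R (x - z) :=
      add_nonneg (wt_pos hR0 _).le (wt_pos hR0 _).le
    have hyp : 0 ≤ (y/4) ^ (-(1+2*s)) := by positivity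
    have step : sd (wt s R) x z / z ^ (1 + 2*s) ≤ (Ioc 0 (y/4)).indicator (fun z => c₁ * (z^2 / z ^ (1 + 2*s))) z
        + (y/4) ^ (-(1+2*s)) * (wt s R (x + z) + wt s R (x - z)) := by
      by_cases h : z ≤ y/4
      · rw [indicator_of_mem (show z ∈ Ioc 0 (y/4) from ⟨hz, h⟩)]
        have h1 := sd_wt_near hs hR0 hx hz.le h
        rw [sd_wt_abs] at h1
        have h2 : sd (wt s R) x z / z ^ (1 + 2*s) ≤ c₁ * (z^2 / z ^ (1 + 2*s)) := by
          rw [← mul_div_assoc]; gcongr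
        have := mul_nonneg hyp hw
        linarith
      · rw [indicator_of_notMem (fun hh => h hh.2), zero_add]
        push Not at h
        have h1 : sd (wt s R) x z ≤ wt s R (x + z) + wt s R (x - z) := by
          simp only [sd]; linarith [(wt_pos hR0 x : 0 < wt s R x)]
        have h2 : (z ^ (1+2*s))⁻¹ ≤ (y/4) ^ (-(1+2*s)) := by
          rw [← Real.rpow_neg hz.le]
          exact Real.rpow_le_rpow_of_nonpos ha h.le (by linarith)
        rw [div_eq_mul_inv, mul_comm]
        calc _ ≤ (z ^ (1+2*s))⁻¹ * (wt s R (x + z) + wt s R (x - z)) := by gcongr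
          _ ≤ _ := by gcongr
    calc sd u x z / z ^ (1 + 2*s) ≤ (Q * sd (wt s R) x z) / z ^ (1 + 2*s) := by
          gcongr; exact hle z hz
      _ = Q * (sd (wt s R) x z / z ^ (1 + 2*s)) := by ring
      _ ≤ G z := by simp only [hG]; gcongr
  have hint_eq : ∫ z in Ioi (0:ℝ), G z = Q * (c₁ * ((y/4) ^ (2 - 2*s) / (2 - 2*s)) +
      (y/4) ^ (-(1+2*s)) * (R ^ (-(2*s)) / s)) := by
    rw [hG, integral_const_mul, integral_add i1 i2, integral_const_mul, t2,
      setIntegral_indicator measurableSet_Ioc, integral_const_mul]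
    rw [show Ioi (0:ℝ) ∩ Ioc 0 (y/4) = Ioc 0 (y/4) from inter_eq_right.2 fun z hz => hz.1, s2]
  have hI : ∫ z in Ioi (0:ℝ), sd u x z / z ^ (1 + 2*s) ≤ ∫ z in Ioi (0:ℝ), G z :=
    setIntegral_mono_on hg iG measurableSet_Ioi fun z hz => hp z hz
  have hwt : wt s R x = y ^ (-(1+2*s)) := rfl
  have b1 : c₁ * ((y/4) ^ (2 - 2*s) / (2 - 2*s)) ≤
      12 * 2 ^ (5:ℝ) / (2 - 2*s) * R ^ (-(2*s)) * wt s R x := by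
    have h0 : 0 < 2 - 2*s := by linarith
    have h1 : (y/4) ^ (2 - 2*s) ≤ y ^ (2 - 2*s) := by
      apply Real.rpow_le_rpow ha.le _ h0.le; linarith
    have h2 : y ^ (-(1 + 2*s) - 2) * y ^ (2 - 2*s) = y ^ (-(2*s)) * y ^ (-(1+2*s)) := by
      rw [← Real.rpow_add hy0, ← Real.rpow_add hy0]; congr 1; ring
    have h3 : y ^ (-(2*s)) ≤ R ^ (-(2*s)) :=
      Real.rpow_le_rpow_of_nonpos hR0 (by linarith [abs_nonneg x]) (by linarith)
    calc c₁ * ((y/4) ^ (2 - 2*s) / (2 - 2*s)) ≤ c₁ * (y ^ (2 - 2*s) / (2 - 2*s)) := by gcongr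
      _ = 12 * 2 ^ (5:ℝ) / (2 - 2*s) * (y ^ (-(1 + 2*s) - 2) * y ^ (2 - 2*s)) := by rw [hc₁]; ring
      _ = 12 * 2 ^ (5:ℝ) / (2 - 2*s) * (y ^ (-(2*s)) * y ^ (-(1+2*s))) := by rw [h2]
      _ ≤ 12 * 2 ^ (5:ℝ) / (2 - 2*s) * (R ^ (-(2*s)) * y ^ (-(1+2*s))) := by gcongr
      _ = _ := by rw [hwt]; ring
  have b2 : (y/4) ^ (-(1+2*s)) * (R ^ (-(2*s)) / s) = 4 ^ (1 + 2*s) / s * R ^ (-(2*s)) * wt s R x := by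
    rw [Real.div_rpow hy0.le (by norm_num), hwt, Real.rpow_neg (by norm_num : (0:ℝ) ≤ 4), div_inv_eq_mul]
    ring
  unfold J
  have hC := C1s_pos hs
  calc C1s s * ∫ z in Ioi (0:ℝ), sd u x z / z ^ (1 + 2*s) ≤ C1s s * (Q *
        (12 * 2 ^ (5:ℝ) / (2 - 2*s) * R ^ (-(2*s)) * wt s R x + 4 ^ (1 + 2*s) / s * R ^ (-(2*s)) * wt s R x)) := by
        refine mul_le_mul_of_nonneg_left (hI.trans ?_) hC.le
        rw [hint_eq, b2]; gcongr
    _ = _ := by ring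

/-- Maximum principle with the barrier `wt`: a function vanishing at infinity and satisfying
`J u ≥ α' u - A wt` where it is positive and `|x| > R` decays like the barrier. -/
lemma decay {s : ℝ} (hs : s ∈ Ioo (0:ℝ) 1) {α' : ℝ} (hα : 0 < α') :
    ∃ R₁ : ℝ, 1 ≤ R₁ ∧ ∀ R : ℝ, R₁ ≤ R → ∀ u : ℝ → ℝ, Continuous u → Tendsto u (cocompact ℝ) (nhds 0) →
    ∀ M A : ℝ, 0 ≤ M → 0 ≤ A → (∀ x, |x| ≤ R → u x ≤ M) →
    (∀ x, R < |x| → 0 < u x → Good s u x ∧ α' * u x - A * wt s R x ≤ J s u x) →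
    ∀ x, u x ≤ (M * (2*R) ^ (1 + 2*s) + 2 * A / α') * wt s R x := by
  obtain ⟨C, hC, hJ⟩ := barrier_J hs
  have hs0 := hs.1
  have hlim : Tendsto (fun R : ℝ => C * R ^ (-(2*s))) atTop (nhds (C * 0)) :=
    (tendsto_rpow_neg_atTop (by linarith : 0 < 2*s)).const_mul C
  rw [mul_zero] at hlim
  have hev : ∀ᶠ R : ℝ in atTop, C * R ^ (-(2*s)) ≤ α'/2 :=
    (hlim.eventually_lt_const (by linarith : (0:ℝ) < α'/2)).mono fun _ h => h.le
  obtain ⟨R₁, hR₁⟩ := eventually_atTop.1 hev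
  refine ⟨max R₁ 1, le_max_right _ _, ?_⟩
  intro R hR u hu hu0 M A hM hA hin hout x₁
  have hR1 : 1 ≤ R := (le_max_right _ _).trans hR
  have hR0 : 0 < R := by linarith
  have hsm := hR₁ R ((le_max_left _ _).trans hR)
  set Q := M * (2*R) ^ (1 + 2*s) + 2 * A / α' with hQ
  have hQ0 : 0 ≤ Q := by positivity
  by_contra hcon
  push Not at hcon
  have hev2 : ∀ᶠ x in cocompact ℝ, u x - Q * wt s R x ≤ u x₁ - Q * wt s R x₁ := by
    filter_upwards [hu0.eventually_lt_const (by linarith : (0:ℝ) < u x₁ - Q * wt s R x₁)] with x hx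
    have := mul_nonneg hQ0 (wt_pos (s := s) hR0 x).le
    linarith
  have hcont : Continuous (fun x => u x - Q * wt s R x) := by
    have := wt_continuous (s := s) hR0
    fun_prop
  obtain ⟨x, hx⟩ := hcont.exists_forall_ge' x₁ hev2
  have hpos : Q * wt s R x < u x := by linarith [hx x₁]
  have hw := wt_pos (s := s) hR0 x
  have hfar : R < |x| := by
    by_contra h
    push Not at h
    have h1 := hin x h
    have h2 : M ≤ M * (2*R) ^ (1 + 2*s) * wt s R x := by
      rw [mul_assoc]
      refine le_mul_of_one_le_right hM ?_
      unfold wt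
      have hx0 : 0 < R + |x| := by linarith [abs_nonneg x]
      rw [Real.rpow_neg hx0.le, ← div_eq_mul_inv, one_le_div (Real.rpow_pos_of_pos hx0 _)]
      exact Real.rpow_le_rpow hx0.le (by linarith) (by linarith)
    have h3 : M * (2*R) ^ (1 + 2*s) * wt s R x ≤ Q * wt s R x := by
      refine mul_le_mul_of_nonneg_right ?_ hw.le
      rw [hQ]; have : 0 ≤ 2 * A / α' := by positivity
      linarith
    linarith
  obtain ⟨hg, hge⟩ := hout x hfar (lt_of_le_of_lt (by positivity) hpos)
  have hle := hJ R hR1 x hfar u Q hQ0 hg (fun z _ => by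
    have a1 := hx (x + z); have a2 := hx (x - z)
    simp only [sd]; linarith)
  have h4 : Q * (C * R ^ (-(2*s))) * wt s R x ≤ Q * (α'/2) * wt s R x := by gcongr
  have h5 : α' * (Q * wt s R x) < α' * u x := mul_lt_mul_of_pos_left hpos hα
  have h6 : (2 * A / α') ≤ Q := by rw [hQ]; have : 0 ≤ M * (2*R) ^ (1 + 2*s) := by positivity
                                   linarith
  have h7 : A * wt s R x ≤ (α'/2 * Q) * wt s R x := by
    refine mul_le_mul_of_nonneg_right ?_ hw.le
    calc A = α'/2 * (2 * A / α') := by field_simp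
      _ ≤ _ := by gcongr
  nlinarith

/-! ### The potential and the layer solution -/

/-- The properties of `W' = W1` and `W'' = W2` used below; `K` bounds `W2` and its Lipschitz
constant, and `α = W''(0)`. -/
structure Pot (s : ℝ) (W1 W2 : ℝ → ℝ) (α K : ℝ) : Prop where
  d1 : ∀ v, HasDerivAt W1 (W2 v) v
  lip : ∀ u v, |W2 u - W2 v| ≤ K * |u - v|
  bd : ∀ v, |W2 v| ≤ K
  per1 : ∀ v, W1 (v + 1) = W1 v
  per2 : ∀ v, W2 (v + 1) = W2 v
  zero : W1 0 = 0
  at0 : W2 0 = α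
  pos : 0 < α
  odd : s < 1/2 → ∀ v, W1 (-v) = - W1 v

lemma exists_bound_periodic {f : ℝ → ℝ} (hf : Continuous f) (hp : ∀ v, f (v + 1) = f v) :
    ∃ K, 0 ≤ K ∧ ∀ v, |f v| ≤ K := by
  obtain ⟨K, hK⟩ := (isCompact_Icc (a := (0:ℝ)) (b := 1)).exists_bound_of_continuousOn hf.continuousOn
  refine ⟨K, (norm_nonneg _).trans (hK 0 ⟨le_rfl, zero_le_one⟩), fun v => ?_⟩
  have hp' : Function.Periodic f 1 := hp
  obtain ⟨y, hy, e⟩ := hp'.exists_mem_Ico₀ one_pos v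
  rw [e]
  exact hK y ⟨hy.1, hy.2.le⟩

lemma deriv_periodic {f : ℝ → ℝ} (hp : ∀ v, f (v + 1) = f v) (v : ℝ) : deriv f (v + 1) = deriv f v := by
  have : f = fun v => f (v + 1) := by funext v; rw [hp]
  conv_rhs => rw [this]
  rw [deriv_comp_add_const]

lemma exists_pot {s : ℝ} {W : ℝ → ℝ} (hW : WAssump s W) :
    ∃ K, 0 < K ∧ Pot s (deriv W) (deriv (deriv W)) (iteratedDeriv 2 W 0) K := by
  obtain ⟨⟨β, -, hc, -⟩, hper, hz, hpos, hα, heven⟩ := hW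
  have c1 : ContDiff ℝ 3 (deriv W) := by
    have : ContDiff ℝ (3 + 1) W := by norm_num; exact hc
    exact ((contDiff_succ_iff_deriv (n := 3)).1 this).2.2
  have c2 : ContDiff ℝ 2 (deriv (deriv W)) := by
    have : ContDiff ℝ (2 + 1) (deriv W) := by norm_num; exact c1
    exact ((contDiff_succ_iff_deriv (n := 2)).1 this).2.2
  have c3 : ContDiff ℝ 1 (deriv (deriv (deriv W))) := by
    have : ContDiff ℝ (1 + 1) (deriv (deriv W)) := by norm_num; exact c2
    exact ((contDiff_succ_iff_deriv (n := 1)).1 this).2.2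
  have p1 := deriv_periodic hper
  have p2 := deriv_periodic p1
  have p3 := deriv_periodic p2
  obtain ⟨K2, hK2, b2⟩ := exists_bound_periodic c2.continuous p2
  obtain ⟨K3, hK3, b3⟩ := exists_bound_periodic c3.continuous p3
  refine ⟨K2 + K3 + 1, by positivity, ?_, ?_, ?_, p1, p2, ?_, ?_, hα, ?_⟩
  · exact fun v => (c1.differentiable (by norm_num) v).hasDerivAt
  · intro u v
    have h : |deriv (deriv W) u - deriv (deriv W) v| ≤ K3 * |u - v| :=
      convex_univ.norm_image_sub_le_of_norm_hasDerivWithin_le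
        (fun t _ => ((c2.differentiable (by norm_num) t).hasDerivAt).hasDerivWithinAt)
        (fun t _ => b3 t) (mem_univ v) (mem_univ u)
    refine h.trans (mul_le_mul_of_nonneg_right (by linarith) (abs_nonneg _))
  · exact fun v => (b2 v).trans (by linarith)
  · have hmin : IsLocalMin W 0 := by
      refine Eventually.of_forall fun v => ?_
      have h0 : W 0 = 0 := by simpa using hz 0
      rw [h0]
      by_cases h : ∃ k : ℤ, (k:ℝ) = v
      · obtain ⟨k, rfl⟩ := h; rw [hz]
      · push Not at h; exact (hpos v h).le
    exact hmin.deriv_eq_zero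
  · rw [iteratedDeriv_succ, iteratedDeriv_one]
  · intro h v
    have e := heven h
    have : W = fun v => W (-v) := by funext v; rw [e]
    have h1 : deriv W v = - deriv W (-v) := by
      conv_lhs => rw [this]
      rw [deriv_comp_neg]
    linarith

namespace Pot
variable {s α K : ℝ} {W1 W2 : ℝ → ℝ}

lemma K_pos (P : Pot s W1 W2 α K) : 0 < K := by
  have h := P.bd 0; rw [P.at0, abs_of_pos P.pos] at h; linarith [P.pos]

lemma one (P : Pot s W1 W2 α K) : W1 1 = 0 := by
  have := P.per1 0; rw [zero_add] at this; rw [this, P.zero]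

lemma sub_one1 (P : Pot s W1 W2 α K) (v : ℝ) : W1 (v - 1) = W1 v := by
  have := P.per1 (v - 1); rw [sub_add_cancel] at this; exact this.symm

lemma sub_one2 (P : Pot s W1 W2 α K) (v : ℝ) : W2 (v - 1) = W2 v := by
  have := P.per2 (v - 1); rw [sub_add_cancel] at this; exact this.symm

/-- Mean value theorem for `W1`. -/
lemma mvt (P : Pot s W1 W2 α K) (a b : ℝ) :
    ∃ ξ ∈ uIcc a b, W1 a - W1 b = W2 ξ * (a - b) := by
  have key : ∀ a b : ℝ, a < b → ∃ ξ ∈ uIcc a b, W1 a - W1 b = W2 ξ * (a - b) := by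
    intro a b h
    obtain ⟨c, hc, e⟩ := exists_hasDerivAt_eq_slope W1 W2 h
      (fun t _ => (P.d1 t).continuousAt.continuousWithinAt) (fun t _ => P.d1 t)
    refine ⟨c, by rw [uIcc_of_le h.le]; exact ⟨hc.1.le, hc.2.le⟩, ?_⟩
    rw [e]; have : b - a ≠ 0 := by linarith
    field_simp; ring
  rcases lt_trichotomy a b with h | h | h
  · exact key a b h
  · subst h; exact ⟨a, left_mem_uIcc, by ring⟩
  · obtain ⟨ξ, h1, h2⟩ := key b a h
    exact ⟨ξ, by rw [uIcc_comm]; exact h1, by linarith⟩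

lemma lip1 (P : Pot s W1 W2 α K) (a b : ℝ) : |W1 a - W1 b| ≤ K * |a - b| := by
  obtain ⟨ξ, -, e⟩ := P.mvt a b
  rw [e, abs_mul]; gcongr; exact P.bd ξ

lemma taylor (P : Pot s W1 W2 α K) (a c : ℝ) : |W1 a - W1 c - W2 c * (a - c)| ≤ K * (a - c)^2 := by
  obtain ⟨ξ, hξ, e⟩ := P.mvt a c
  rw [e, ← sub_mul, abs_mul, ← sq_abs (a - c), sq, ← mul_assoc]
  gcongr
  refine (P.lip ξ c).trans (mul_le_mul_of_nonneg_left ?_ P.K_pos.le)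
  rw [uIcc_comm] at hξ
  exact abs_sub_left_of_mem_uIcc hξ

/-- Second order cancellation for a pair of values close to `0` and `1`; in the even case the
quadratic error is absent. -/
lemma pair (P : Pot s W1 W2 α K) (a b : ℝ) :
    |W1 a + W1 b - α * (a + b - 1)| ≤ K * (|a| + |b - 1|) * |a + b - 1|
      + (if s < 1/2 then 0 else K * (a^2 + (b-1)^2)) := by
  have hK := P.K_pos
  split_ifs with h
  · have h1 : W1 b = - W1 (1 - b) := by
      rw [← P.odd h, ← P.sub_one1]; congr 1; ring
    obtain ⟨ξ, hξ, e⟩ := P.mvt a (1 - b)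
    have e2 : W1 a + W1 b - α * (a + b - 1) = (W2 ξ - W2 0) * (a + b - 1) := by
      rw [h1, P.at0]; linear_combination e
    rw [e2, abs_mul, add_zero]
    gcongr
    refine (P.lip ξ 0).trans (mul_le_mul_of_nonneg_left ?_ hK.le)
    rw [sub_zero]
    have h3 := hξ.1; have h4 := hξ.2
    have a1 := neg_abs_le a; have a2 := le_abs_self a
    have a3 := neg_abs_le (b-1); have a4 := le_abs_self (b-1)
    have a5 := abs_nonneg a; have a6 := abs_nonneg (b-1)
    rw [abs_le]
    constructor
    · refine le_trans ?_ h3; apply le_inf <;> linarith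
    · refine h4.trans ?_; apply sup_le <;> linarith
  · have t1 := P.taylor a 0
    have t2 := P.taylor (b - 1) 0
    rw [P.zero, P.at0, sub_zero, sub_zero] at t1
    rw [P.zero, P.at0, sub_zero, sub_zero, P.sub_one1] at t2
    have : 0 ≤ K * (|a| + |b - 1|) * |a + b - 1| := by positivity
    rw [abs_le] at *
    constructor <;> nlinarith [t1.1, t1.2, t2.1, t2.2]

lemma near0 (P : Pot s W1 W2 α K) {v : ℝ} (hv : |v| ≤ α / (4*K)) : α / 2 ≤ W2 v := by
  have h := P.lip v 0
  rw [P.at0, sub_zero] at h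
  have hK := P.K_pos
  have : K * |v| ≤ α / 4 := by
    calc K * |v| ≤ K * (α / (4*K)) := by gcongr
      _ = α / 4 := by field_simp
  have := (abs_le.1 h).1
  linarith [P.pos]

lemma near1 (P : Pot s W1 W2 α K) {v : ℝ} (hv : |v - 1| ≤ α / (4*K)) : α / 2 ≤ W2 v := by
  rw [← P.sub_one2]; exact P.near0 hv
end Pot

/-- The properties of the layer solution used below. -/
structure Lay (s : ℝ) (W1 φ : ℝ → ℝ) : Prop where
  c2 : ContDiff ℝ 2 φ
  eq : ∀ x, J s φ x = W1 (φ x)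
  dpos : ∀ x, 0 < deriv φ x
  bot : Tendsto φ atBot (nhds 0)
  top : Tendsto φ atTop (nhds 1)

lemma mono_of_dpos {φ : ℝ → ℝ} (h : ∀ x, 0 < deriv φ x) : StrictMono φ := strictMono_of_deriv_pos h

lemma range_of_mono {φ : ℝ → ℝ} (h : StrictMono φ) (hb : Tendsto φ atBot (nhds 0))
    (ht : Tendsto φ atTop (nhds 1)) (x : ℝ) : 0 < φ x ∧ φ x < 1 := by
  have h1 : ∀ y, 0 ≤ φ y := fun y => h.monotone.le_of_tendsto hb y
  have h2 : ∀ y, φ y ≤ 1 := fun y => h.monotone.ge_of_tendsto ht y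
  exact ⟨(h1 (x - 1)).trans_lt (h (by linarith)), (h (by linarith : x < x + 1)).trans_le (h2 _)⟩

lemma exists_lay {s : ℝ} (hs : s ∈ Ioo (0:ℝ) 1) {W φ : ℝ → ℝ} (hφ : IsLayerSolution s W φ) :
    Lay s (deriv W) φ := by
  obtain ⟨hc, he, hd, hb, ht, -⟩ := hφ
  have c2 : ContDiff ℝ 2 φ := hc.of_le (by norm_num)
  refine ⟨c2, fun x => ?_, hd, hb, ht⟩
  rw [← he x, fracLap_eq_J hs c2 (M := 1)]
  intro y
  obtain ⟨h1, h2⟩ := range_of_mono (mono_of_dpos hd) hb ht y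
  rw [abs_of_pos h1]; exact h2.le

namespace Lay
variable {s : ℝ} {W1 φ : ℝ → ℝ}

lemma mono (L : Lay s W1 φ) : StrictMono φ := mono_of_dpos L.dpos
lemma pos (L : Lay s W1 φ) (x : ℝ) : 0 < φ x := (range_of_mono L.mono L.bot L.top x).1
lemma lt_one (L : Lay s W1 φ) (x : ℝ) : φ x < 1 := (range_of_mono L.mono L.bot L.top x).2
lemma abs_le_one (L : Lay s W1 φ) (x : ℝ) : |φ x| ≤ 1 := by
  rw [abs_of_pos (L.pos x)]; exact (L.lt_one x).le
lemma cont (L : Lay s W1 φ) : Continuous φ := L.c2.continuous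
lemma good (hs : s ∈ Ioo (0:ℝ) 1) (L : Lay s W1 φ) (x : ℝ) : Good s φ x := good_of_c2 hs L.c2 L.abs_le_one x

lemma J_shift (L : Lay s W1 φ) (h x : ℝ) : J s (fun y => φ (y + h)) x = W1 (φ (x + h)) := by
  have := J_comp_affine s φ (one_ne_zero) h x
  simp only [one_mul, abs_one, Real.one_rpow] at this
  rw [this, L.eq]

lemma good_shift (hs : s ∈ Ioo (0:ℝ) 1) (L : Lay s W1 φ) (h x : ℝ) : Good s (fun y => φ (y + h)) x := by
  have := Good.comp_affine (s := s) (u := φ) (one_ne_zero) (c := h) (x := x) (L.good hs _)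
  simpa only [one_mul] using this

/-- Beyond some radius the values of `φ` on a unit neighbourhood stay close to `0` or `1`. -/
lemma far (L : Lay s W1 φ) {r : ℝ} (hr : 0 < r) : ∃ R₀ : ℝ, ∀ x, R₀ < |x| →
    ((x < 0 ∧ ∀ y, |y - x| ≤ 1 → |φ y| ≤ r ∧ |φ (-y) - 1| ≤ r) ∨
     (0 < x ∧ ∀ y, |y - x| ≤ 1 → |φ y - 1| ≤ r ∧ |φ (-y)| ≤ r)) := by
  have h1 : ∀ᶠ x in atBot, |φ x| ≤ r := by
    filter_upwards [L.bot.eventually (Metric.closedBall_mem_nhds 0 hr)] with x hx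
    simpa using hx
  have h2 : ∀ᶠ x in atTop, |φ x - 1| ≤ r := by
    filter_upwards [L.top.eventually (Metric.closedBall_mem_nhds 1 hr)] with x hx
    simpa [Real.dist_eq] using hx
  obtain ⟨a, ha⟩ := eventually_atBot.1 h1
  obtain ⟨b, hb⟩ := eventually_atTop.1 h2
  refine ⟨|a| + |b| + 1, fun x hx => ?_⟩
  have a1 := neg_abs_le a; have b1 := le_abs_self b
  have a2 := abs_nonneg a; have b2 := abs_nonneg b
  rcases abs_cases x with ⟨h, h'⟩ | ⟨h, h'⟩
  · refine Or.inr ⟨by linarith, fun y hy => ?_⟩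
    have := abs_le.1 hy
    exact ⟨hb y (by linarith), ha (-y) (by linarith)⟩
  · refine Or.inl ⟨by linarith, fun y hy => ?_⟩
    have := abs_le.1 hy
    exact ⟨ha y (by linarith), hb (-y) (by linarith)⟩

lemma diff_tendsto (L : Lay s W1 φ) (h : ℝ) : Tendsto (fun x => φ (x + h) - φ x) (cocompact ℝ) (nhds 0) := by
  rw [cocompact_eq_atBot_atTop, tendsto_sup]
  constructor
  · have := (L.bot.comp (tendsto_atBot_add_const_right _ h tendsto_id)).sub L.bot
    simpa [Function.comp_def] using this
  · have := (L.top.comp (tendsto_atTop_add_const_right _ h tendsto_id)).sub L.top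
    simpa [Function.comp_def] using this
end Lay

/-! ### Decay of the layer solution -/

/-- Decay estimates for the layer solution, with barrier radius `R` and a common constant `Q`. -/
structure Dec (s : ℝ) (φ : ℝ → ℝ) (R Q : ℝ) : Prop where
  hR : 1 ≤ R
  hQ : 0 < Q
  d1 : ∀ x h, |h| ≤ 1 → |φ (x + h) - φ x| ≤ Q * |h| * wt s R x
  d2 : ∀ x h, 0 ≤ h → h ≤ 1 → |sd φ x h| ≤ Q * h^2 * wt s R x
  p1 : ∀ x, |deriv φ x| ≤ Q * wt s R x
  p2 : ∀ x, |deriv (deriv φ) x| ≤ Q * wt s R x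
  tl : ∀ x, 0 ≤ x → φ (-x) ≤ Q * (R + x) ^ (-(2*s))
  tr : ∀ x, 0 ≤ x → 1 - φ x ≤ Q * (R + x) ^ (-(2*s))
  sym : ∀ x, |φ x + φ (-x) - 1| ≤ Q * wt s R x

lemma deriv2_le_of_sd {u u' u'' : ℝ → ℝ} (h1 : ∀ y, HasDerivAt u (u' y) y)
    (h2 : ∀ y, HasDerivAt u' (u'' y) y) (hc : Continuous u'') {x A : ℝ}
    (hA : ∀ h, 0 ≤ h → h ≤ 1 → sd u x h ≤ A * h^2) : u'' x ≤ A := by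
  by_contra hcon
  push Not at hcon
  obtain ⟨c, hc1, hc2⟩ := exists_between hcon
  have hev : ∀ᶠ y in nhds x, c < u'' y := hc.continuousAt.eventually (lt_mem_nhds hc2)
  obtain ⟨ρ, hρ, hb⟩ := Metric.eventually_nhds_iff.1 hev
  set h := min (ρ/2) 1 with hh
  have h0 : 0 < h := lt_min (by linarith) one_pos
  have hl : h ≤ ρ/2 := min_le_left _ _
  have k := sd_le_of_deriv2 (u := fun y => - u y) (u' := fun y => - u' y) (u'' := fun y => - u'' y)
    (x := x) (M := -c) h0.le (fun y _ => (h1 y).neg) (fun y _ => (h2 y).neg) (fun y hy => by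
      have : c < u'' y := hb (by rw [Real.dist_eq, abs_lt]; constructor <;> linarith [hy.1, hy.2])
      linarith)
  have e : sd (fun y => - u y) x h = - sd u x h := by simp only [sd]; ring
  rw [e] at k
  have := hA h h0.le (min_le_right _ _)
  nlinarith [sq_pos_of_pos h0]

lemma tail_bound {s : ℝ} (hs : s ∈ Ioo (0:ℝ) 1) {R Q : ℝ} (hR : 1 ≤ R) {f f' : ℝ → ℝ} {l : ℝ}
    (hf : ∀ x, HasDerivAt f (f' x) x) (hb : ∀ x, f' x ≤ Q * wt s R x) (hl : Tendsto f atTop (nhds l))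
    {x : ℝ} (hx : 0 ≤ x) : l - f x ≤ Q / (2*s) * (R + x) ^ (-(2*s)) := by
  have hs0 := hs.1
  set g : ℝ → ℝ := fun x => f x + Q / (2*s) * (R + x) ^ (-(2*s)) with hg
  have hd : ∀ y ∈ Ici (0:ℝ), HasDerivAt g (f' y - Q * wt s R y) y := by
    intro y hy
    have hy' : 0 ≤ y := hy
    have hne : R + y ≠ 0 := by linarith
    have h := ((((hasDerivAt_id y).const_add R).rpow_const (p := -(2*s)) (Or.inl hne)).const_mul (Q/(2*s)))
    refine ((hf y).add h).congr_deriv ?_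
    simp only [id, wt, abs_of_nonneg hy']
    rw [show -(2*s) - 1 = -(1 + 2*s) by ring]
    field_simp; ring
  have hanti : AntitoneOn g (Ici 0) := antitoneOn_of_deriv_nonpos (convex_Ici 0)
    (fun y hy => (hd y hy).continuousAt.continuousWithinAt)
    (fun y hy => (hd y (interior_subset hy)).differentiableAt.differentiableWithinAt)
    (fun y hy => by rw [(hd y (interior_subset hy)).deriv]; linarith [hb y])
  have hlim : Tendsto g atTop (nhds (l + Q/(2*s) * 0)) := by
    refine hl.add (Tendsto.const_mul _ ?_)
    exact (tendsto_rpow_neg_atTop (by linarith : 0 < 2*s)).comp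
      (tendsto_atTop_add_const_left _ R tendsto_id)
  rw [mul_zero, add_zero] at hlim
  have : l ≤ g x := by
    refine le_of_tendsto hlim ?_
    filter_upwards [eventually_ge_atTop x] with y hy
    exact hanti hx (hx.trans hy : (0:ℝ) ≤ y) hy
  simp only [hg] at this
  linarith

set_option maxHeartbeats 1000000 in
/-- Difference quotients of `φ` satisfy the linearized equation, so `decay` applies to them; the
antisymmetry defect `φ x + φ (-x) - 1` is handled in the same way through `Pot.pair`. -/
lemma exists_dec {s : ℝ} (hs : s ∈ Ioo (0:ℝ) 1) {W1 W2 φ : ℝ → ℝ} {α K : ℝ} (P : Pot s W1 W2 α K)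
    (L : Lay s W1 φ) : ∃ R Q, Dec s φ R Q := by
  have hs0 := hs.1
  have hK := P.K_pos
  have hα := P.pos
  obtain ⟨R₁, hR₁, hdec⟩ := decay hs (half_pos hα)
  set r := α / (4*K) with hr
  have hr0 : 0 < r := by positivity
  obtain ⟨R₀, hfar⟩ := L.far hr0
  set R := max R₁ R₀ with hRdef
  have hR : 1 ≤ R := hR₁.trans (le_max_left _ _)
  have hR0 : 0 < R := by linarith
  have hRR : R₀ ≤ R := le_max_right _ _
  have hdec := hdec R (le_max_left _ _)
  obtain ⟨D1, D2, cd1, cd2⟩ := c2_hasDeriv L.c2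
  obtain ⟨M, hM⟩ := (isCompact_Icc (a := -R-1) (b := R+1)).exists_bound_of_continuousOn cd1.continuousOn
  obtain ⟨M2, hM2⟩ := (isCompact_Icc (a := -R-1) (b := R+1)).exists_bound_of_continuousOn cd2.continuousOn
  have hM0 : 0 ≤ M := (norm_nonneg _).trans (hM 0 ⟨by linarith, by linarith⟩)
  have hM20 : 0 ≤ M2 := (norm_nonneg _).trans (hM2 0 ⟨by linarith, by linarith⟩)
  -- convexity of the potential along the segments involved
  have hconv : ∀ x, R < |x| → ∀ h, |h| ≤ 1 → ∀ ξ ∈ uIcc (φ (x + h)) (φ x), α/2 ≤ W2 ξ := by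
    intro x hx h hh ξ hξ
    rcases hfar x (hRR.trans_lt hx) with ⟨_, hn⟩ | ⟨_, hn⟩
    · apply P.near0
      have b1 := abs_le.1 (hn (x+h) (by simpa using hh)).1
      have b2 := abs_le.1 (hn x (by simp)).1
      exact abs_le.2 ⟨(le_inf b1.1 b2.1).trans hξ.1, hξ.2.trans (sup_le b1.2 b2.2)⟩
    · apply P.near1
      have b1 := abs_le.1 (hn (x+h) (by simpa using hh)).1
      have b2 := abs_le.1 (hn x (by simp)).1
      have c1 : 1 - r ≤ ξ := le_trans (le_inf (by linarith) (by linarith)) hξ.1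
      have c2 : ξ ≤ 1 + r := hξ.2.trans (sup_le (by linarith) (by linarith))
      exact abs_le.2 ⟨by linarith, by linarith⟩
  set Q1 := M * (2*R) ^ (1 + 2*s) + 2 * 0 / (α/2) with hQ1
  have hQ10 : 0 ≤ Q1 := by rw [mul_zero, zero_div, add_zero] at hQ1; rw [hQ1]; positivity
  -- first difference quotients
  have hd1 : ∀ x h, |h| ≤ 1 → |φ (x + h) - φ x| ≤ Q1 * |h| * wt s R x := by
    intro x h hh
    rcases eq_or_ne h 0 with rfl | hne
    · simp
    have hsign : ∀ x, |φ (x + h) - φ x| = |h| * (h⁻¹ * (φ (x+h) + (-1) * φ x)) := by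
      intro x
      rcases lt_or_gt_of_ne hne with h' | h'
      · rw [abs_of_neg h', abs_of_neg (by linarith [L.mono (by linarith : x + h < x)])]; field_simp; ring
      · rw [abs_of_pos h', abs_of_pos (by linarith [L.mono (by linarith : x < x + h)])]; field_simp; ring
    have hcont := L.cont
    have key := hdec (fun x => h⁻¹ * (φ (x+h) + (-1) * φ x)) (by fun_prop) (by
      have := (L.diff_tendsto h).const_mul h⁻¹
      rw [mul_zero] at this
      refine this.congr fun x => by ring) M 0 hM0 le_rfl ?_ ?_ x
    · rw [hsign]
      calc _ ≤ |h| * (Q1 * wt s R x) := by gcongr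
        _ = _ := by ring
    · intro x hx
      have hx' := abs_le.1 hx
      have hh' := abs_le.1 hh
      have hb : |φ (x + h) - φ x| ≤ M * |(x + h) - x| :=
        (convex_Icc (-R-1) (R+1)).norm_image_sub_le_of_norm_hasDerivWithin_le
          (fun t _ => (D1 t).hasDerivWithinAt) hM ⟨by linarith, by linarith⟩ ⟨by linarith, by linarith⟩
      rw [hsign, add_sub_cancel_left, mul_comm M] at hb
      exact le_of_mul_le_mul_left hb (abs_pos.2 hne)
    · intro x hx hpos
      have g1 := L.good_shift hs h x
      have g2 := (L.good hs x).const_mul (-1)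
      refine ⟨(g1.add g2).const_mul _, ?_⟩
      rw [J_const_mul, J_add g1 g2, L.J_shift, J_const_mul, L.eq]
      obtain ⟨ξ, hξ, e⟩ := P.mvt (φ (x+h)) (φ x)
      have e2 : h⁻¹ * (W1 (φ (x + h)) + -1 * W1 (φ x)) = W2 ξ * (h⁻¹ * (φ (x+h) + (-1) * φ x)) := by
        linear_combination h⁻¹ * e
      rw [e2, zero_mul, sub_zero]
      exact mul_le_mul_of_nonneg_right (hconv x hx h hh ξ hξ) hpos.le
  set Q2 := M2 * (2*R) ^ (1 + 2*s) + 2 * (2 * K * Q1^2) / (α/2) with hQ2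
  have hQ20 : 0 ≤ Q2 := by positivity
  -- second difference quotients, with either sign
  have hd2' : ∀ σ : ℝ, (σ = 1 ∨ σ = -1) → ∀ h, 0 < h → h ≤ 1 → ∀ x, σ * sd φ x h ≤ Q2 * h^2 * wt s R x := by
    intro σ hσ h h0 hh x
    have hσ' : |σ| = 1 := by rcases hσ with rfl | rfl <;> simp
    have hcont := L.cont
    have hsdc : ∀ x, sd φ x h = (φ (x + h) - φ x) + (φ (x + -h) - φ x) := by
      intro x; simp only [sd, ← sub_eq_add_neg]; ring
    have hden : ∀ x, (σ / h^2) * ((φ (x+h) + φ (x + -h)) + (-2) * φ x) = σ / h^2 * sd φ x h := by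
      intro x; rw [hsdc]; ring
    have key := hdec (fun x => (σ / h^2) * ((φ (x+h) + φ (x + -h)) + (-2) * φ x)) (by fun_prop) (by
      have := ((L.diff_tendsto h).add (L.diff_tendsto (-h))).const_mul (σ / h^2)
      rw [add_zero, mul_zero] at this
      refine this.congr fun x => by ring) M2 (2 * K * Q1^2) hM20 (by positivity) ?_ ?_ x
    · simp only [hden] at key
      have : σ * sd φ x h = h^2 * (σ / h^2 * sd φ x h) := by field_simp
      rw [this]
      calc _ ≤ h^2 * (Q2 * wt s R x) := by gcongr
        _ = _ := by ring
    · intro x hx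
      have hx' := abs_le.1 hx
      rw [hden]
      have := sd_abs_le_of_deriv2 (u := φ) (x := x) h0.le (fun y _ => D1 y) (fun y _ => D2 y)
        (M := M2) (fun y hy => hM2 y ⟨by linarith [hy.1], by linarith [hy.2]⟩)
      have h3 : σ * sd φ x h ≤ M2 * h^2 := by
        refine (le_abs_self _).trans ?_
        rw [abs_mul, hσ', one_mul]; exact this
      rw [div_mul_eq_mul_div, div_le_iff₀ (by positivity)]; exact h3
    · intro x hx hpos
      have g1 := L.good_shift hs h x
      have g2 := L.good_shift hs (-h) x
      have g3 := (L.good hs x).const_mul (-2)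
      refine ⟨((g1.add g2).add g3).const_mul _, ?_⟩
      rw [J_const_mul, J_add (g1.add g2) g3, J_add g1 g2, L.J_shift, L.J_shift, J_const_mul, L.eq]
      rw [hden] at hpos ⊢
      have t1 := P.taylor (φ (x+h)) (φ x)
      have t2 := P.taylor (φ (x + -h)) (φ x)
      have w1 := wt_le_one hs hR x
      have w0 := wt_pos (s := s) hR0 x
      have q1 : ∀ k, |k| = h → (φ (x+k) - φ x)^2 ≤ Q1^2 * h^2 * wt s R x := by
        intro k hk
        have h5 := hd1 x k (by rw [hk]; exact hh)
        rw [← sq_abs]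
        calc |φ (x+k) - φ x|^2 ≤ (Q1 * |k| * wt s R x)^2 := by gcongr
          _ = Q1^2 * h^2 * (wt s R x * wt s R x) := by rw [hk]; ring
          _ ≤ Q1^2 * h^2 * (wt s R x * 1) := by gcongr
          _ = _ := by ring
      have q1a := q1 h (abs_of_pos h0)
      have q1b := q1 (-h) (by rw [abs_neg, abs_of_pos h0])
      have hE : |W1 (φ (x + h)) + W1 (φ (x + -h)) + -2 * W1 (φ x) - W2 (φ x) * sd φ x h| ≤
          2 * K * Q1^2 * h^2 * wt s R x := by
        have : W1 (φ (x + h)) + W1 (φ (x + -h)) + -2 * W1 (φ x) - W2 (φ x) * sd φ x h =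
          (W1 (φ (x+h)) - W1 (φ x) - W2 (φ x) * (φ (x+h) - φ x)) +
          (W1 (φ (x + -h)) - W1 (φ x) - W2 (φ x) * (φ (x + -h) - φ x)) := by rw [hsdc]; ring
        rw [this]
        refine (abs_add_le _ _).trans ((add_le_add t1 t2).trans ?_)
        have := mul_le_mul_of_nonneg_left (add_le_add q1a q1b) hK.le
        linarith
      have hW2 := hconv x hx 0 (by simp) (φ x) right_mem_uIcc
      have hE2 : |σ / h^2 * (W1 (φ (x + h)) + W1 (φ (x + -h)) + -2 * W1 (φ x) - W2 (φ x) * sd φ x h)| ≤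
          2 * K * Q1^2 * wt s R x := by
        rw [abs_mul, abs_div, hσ', abs_of_pos (by positivity : 0 < h^2), div_mul_eq_mul_div, one_mul,
          div_le_iff₀ (by positivity)]
        calc _ ≤ _ := hE
          _ = _ := by ring
      have hE3 := (abs_le.1 hE2).1
      have := mul_le_mul_of_nonneg_right hW2 hpos.le
      calc α/2 * (σ / h^2 * sd φ x h) - 2 * K * Q1^2 * wt s R x
          ≤ W2 (φ x) * (σ / h^2 * sd φ x h) + σ / h^2 *
            (W1 (φ (x + h)) + W1 (φ (x + -h)) + -2 * W1 (φ x) - W2 (φ x) * sd φ x h) := by linarith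
        _ = _ := by ring
  have hd2 : ∀ x h, 0 ≤ h → h ≤ 1 → |sd φ x h| ≤ Q2 * h^2 * wt s R x := by
    intro x h h0 hh
    rcases h0.eq_or_lt with rfl | h0
    · simp [sd]; linarith
    rw [abs_le]
    have a1 := hd2' 1 (Or.inl rfl) h h0 hh x
    have a2 := hd2' (-1) (Or.inr rfl) h h0 hh x
    constructor <;> linarith
  have hp1 : ∀ x, |deriv φ x| ≤ Q1 * wt s R x := by
    intro x
    have w0 := wt_pos (s := s) hR0 x
    refine (D1 x).le_of_lip' (by positivity) ?_
    filter_upwards [Metric.ball_mem_nhds x one_pos] with y hy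
    have := hd1 x (y - x) (by rw [← Real.dist_eq]; exact hy.le)
    rw [add_sub_cancel] at this
    simp only [Real.norm_eq_abs]
    calc _ ≤ _ := this
      _ = _ := by ring
  have hp2 : ∀ x, |deriv (deriv φ) x| ≤ Q2 * wt s R x := by
    intro x
    rw [abs_le']
    constructor
    · refine deriv2_le_of_sd D1 D2 cd2 fun h h0 hh => ?_
      have := (le_abs_self _).trans (hd2 x h h0 hh)
      linarith
    · refine deriv2_le_of_sd (u := fun y => - φ y) (u'' := fun y => - deriv (deriv φ) y)
        (fun y => (D1 y).neg) (fun y => (D2 y).neg) cd2.neg fun h h0 hh => ?_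
      have := (neg_le_abs _).trans (hd2 x h h0 hh)
      have e : sd (fun y => - φ y) x h = - sd φ x h := by simp only [sd]; ring
      rw [e]; linarith
  set T := Q1 / (2*s) with hT
  have hT0 : 0 ≤ T := by positivity
  have htr : ∀ x, 0 ≤ x → 1 - φ x ≤ T * (R + x) ^ (-(2*s)) := fun x hx =>
    tail_bound hs hR D1 (fun y => (le_abs_self _).trans (hp1 y)) L.top hx
  have htl : ∀ x, 0 ≤ x → φ (-x) ≤ T * (R + x) ^ (-(2*s)) := by
    intro x hx
    have := tail_bound hs hR (f := fun x => - φ (-x)) (f' := fun x => deriv φ (-x)) (l := 0) (Q := Q1)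
      (fun y => by
        have := ((D1 (-y)).scomp y (hasDerivAt_neg y)).neg
        exact this.congr_deriv (by simp))
      (fun y => by rw [← wt_neg]; exact (le_abs_self _).trans (hp1 (-y)))
      (by simpa using (L.bot.comp tendsto_neg_atTop_atBot).neg) hx
    simpa using this
  set Q3 := 1 * (2*R) ^ (1 + 2*s) + 2 * (2 * K * T^2) / (α/2) with hQ3
  have hQ30 : 0 ≤ Q3 := by positivity
  have Jneg : ∀ x, J s (fun y => φ (-y)) x = W1 (φ (-x)) := by
    intro x
    have := J_comp_affine s φ (show (-1:ℝ) ≠ 0 by norm_num) 0 x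
    simp only [neg_one_mul, add_zero, abs_neg, abs_one, Real.one_rpow, one_mul] at this
    rw [this, L.eq]
  have Gneg : ∀ x, Good s (fun y => φ (-y)) x := by
    intro x
    have := Good.comp_affine (s := s) (u := φ) (show (-1:ℝ) ≠ 0 by norm_num) (c := 0) (x := x) (L.good hs _)
    simpa only [neg_one_mul, add_zero] using this
  have hsym' : ∀ σ : ℝ, (σ = 1 ∨ σ = -1) → ∀ x, σ * (φ x + φ (-x) + (-1)) ≤ Q3 * wt s R x := by
    intro σ hσ x
    have hσ' : |σ| = 1 := by rcases hσ with rfl | rfl <;> simp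
    have hcont := L.cont
    refine hdec (fun x => σ * (φ x + φ (-x) + (-1))) (by fun_prop) ?_ 1 (2 * K * T^2) zero_le_one
      (by positivity) ?_ ?_ x
    · rw [cocompact_eq_atBot_atTop, tendsto_sup]
      constructor
      · have := (((L.bot.add (L.top.comp tendsto_neg_atBot_atTop)).add_const (-1))).const_mul σ
        simpa [Function.comp_def] using this
      · have := (((L.top.add (L.bot.comp tendsto_neg_atTop_atBot)).add_const (-1))).const_mul σ
        simpa [Function.comp_def] using this
    · intro x _
      refine (le_abs_self _).trans ?_
      rw [abs_mul, hσ', one_mul, abs_le]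
      constructor <;> linarith [L.pos x, L.pos (-x), L.lt_one x, L.lt_one (-x)]
    · intro x hx hpos
      have gc : Good s (fun _ => (-1:ℝ)) x := by
        unfold Good; simp only [sd]; norm_num
      have Jc : J s (fun _ => (-1:ℝ)) x = 0 := by
        unfold J; simp only [sd]; norm_num
      have g1 := L.good hs x
      refine ⟨(((g1.add (Gneg x)).add gc)).const_mul σ, ?_⟩
      rw [J_const_mul, J_add (g1.add (Gneg x)) gc, J_add g1 (Gneg x), Jneg, Jc, L.eq, add_zero]
      have w0 := wt_pos (s := s) hR0 x
      -- the pair estimate, with `a` the value close to `0` and `b` the value close to `1`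
      have main : ∀ a b, |a| ≤ r → |b - 1| ≤ r → |a| ≤ T * (R + |x|) ^ (-(2*s)) →
          |b - 1| ≤ T * (R + |x|) ^ (-(2*s)) → 0 < σ * (a + b + (-1)) →
          α/2 * (σ * (a + b + (-1))) - 2 * K * T^2 * wt s R x ≤ σ * (W1 a + W1 b) := by
        intro a b ha hb ha2 hb2 hp
        have hpair := P.pair a b
        have hE : (if s < 1/2 then 0 else K * (a^2 + (b-1)^2)) ≤ 2 * K * T^2 * wt s R x := by
          split_ifs with h
          · positivity
          · have hy : 1 ≤ R + |x| := by linarith [abs_nonneg x]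
            have hsq : ∀ c, |c| ≤ T * (R + |x|) ^ (-(2*s)) → c^2 ≤ T^2 * wt s R x := by
              intro c hc
              rw [← sq_abs]
              calc |c|^2 ≤ (T * (R + |x|) ^ (-(2*s)))^2 := by gcongr
                _ = T^2 * ((R + |x|) ^ (-(2*s) + -(2*s))) := by
                  rw [Real.rpow_add (by linarith)]; ring
                _ ≤ T^2 * wt s R x := by
                  unfold wt
                  gcongr
                  linarith
            have := mul_le_mul_of_nonneg_left (add_le_add (hsq a ha2) (hsq (b-1) hb2)) hK.le
            linarith
        have habs : |a + b - 1| = σ * (a + b + (-1)) := by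
          rw [← abs_of_pos hp, abs_mul, hσ', one_mul]; congr 1
        have h4 : K * (|a| + |b - 1|) ≤ α/2 := by
          calc K * (|a| + |b - 1|) ≤ K * (r + r) := by gcongr
            _ = α/2 := by rw [hr]; field_simp; norm_num
        have h5 : K * (|a| + |b - 1|) * |a + b - 1| ≤ α/2 * (σ * (a + b + (-1))) := by
          rw [← habs]; gcongr
        have h6 : |σ * (W1 a + W1 b - α * (a + b - 1))| ≤ α/2 * (σ * (a + b + (-1))) + 2 * K * T^2 * wt s R x := by
          rw [abs_mul, hσ', one_mul]; linarith
        have := (abs_le.1 h6).1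
        nlinarith
      rcases hfar x (hRR.trans_lt hx) with ⟨hx0, hn⟩ | ⟨hx0, hn⟩
      · obtain ⟨n1, n2⟩ := hn x (by simp)
        refine main _ _ n1 n2 ?_ ?_ hpos
        · rw [abs_of_pos (L.pos x), abs_of_neg hx0]
          simpa using htl (-x) (by linarith)
        · rw [abs_of_neg (by linarith [L.lt_one (-x)]), abs_of_neg hx0]
          have := htr (-x) (by linarith)
          linarith
      · obtain ⟨n1, n2⟩ := hn x (by simp)
        have := main _ _ n2 n1 ?_ ?_ (by rw [add_comm (φ (-x))]; exact hpos)
        · rw [add_comm (φ x), add_comm (W1 (φ x))]; exact this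
        · rw [abs_of_pos (L.pos _), abs_of_pos hx0]
          exact htl x hx0.le
        · rw [abs_of_neg (by linarith [L.lt_one x]), abs_of_pos hx0]
          have := htr x hx0.le
          linarith
  have hw0 : ∀ x, 0 ≤ wt s R x := fun x => (wt_pos hR0 x).le
  refine ⟨R, Q1 + Q2 + T + Q3 + 1, hR, by positivity, ?_, ?_, ?_, ?_, ?_, ?_, ?_⟩
  · intro x h hh
    refine (hd1 x h hh).trans ?_
    have := hw0 x
    gcongr; linarith
  · intro x h h0 hh
    refine (hd2 x h h0 hh).trans ?_
    have := hw0 x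
    gcongr; linarith
  · intro x
    exact (hp1 x).trans (mul_le_mul_of_nonneg_right (by linarith) (hw0 x))
  · intro x
    exact (hp2 x).trans (mul_le_mul_of_nonneg_right (by linarith) (hw0 x))
  · intro x hx
    exact (htl x hx).trans (mul_le_mul_of_nonneg_right (by linarith) (Real.rpow_nonneg (by linarith) _))
  · intro x hx
    exact (htr x hx).trans (mul_le_mul_of_nonneg_right (by linarith) (Real.rpow_nonneg (by linarith) _))
  · intro x
    have a1 := hsym' 1 (Or.inl rfl) x
    have a2 := hsym' (-1) (Or.inr rfl) x
    refine le_trans (b := Q3 * wt s R x) ?_ (mul_le_mul_of_nonneg_right (by linarith) (hw0 x))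
    rw [abs_le]; constructor <;> linarith

/-! ### An energy inequality -/

lemma cross_ineq {a b a' b' : ℝ} (hb : 0 < b) (hb' : 0 < b') :
    (a * b' - b * a')^2 / ((|a| + b) * (|a'| + b')) ≤
      (a / (|a| + b) - a' / (|a'| + b')) * (a * b' - b * a') := by
  have hp : 0 < |a| + b := by positivity
  have hp' : 0 < |a'| + b' := by positivity
  rw [div_sub_div _ _ hp.ne' hp'.ne', div_mul_eq_mul_div]
  gcongr
  rcases abs_cases a with ⟨h, h1⟩ | ⟨h, h1⟩ <;> rcases abs_cases a' with ⟨h', h1'⟩ | ⟨h', h1'⟩ <;>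
    rw [h, h']
  · exact le_of_eq (by ring)
  · nlinarith [mul_nonneg h1 hb'.le, mul_nonneg (neg_nonneg.2 h1'.le) hb.le,
      mul_nonneg h1 (neg_nonneg.2 h1'.le),
      mul_nonneg (mul_nonneg h1 (neg_nonneg.2 h1'.le)) (add_nonneg (mul_nonneg h1 hb'.le) (mul_nonneg (neg_nonneg.2 h1'.le) hb.le))]
  · nlinarith [mul_nonneg (mul_nonneg h1' (neg_nonneg.2 h1.le)) (add_nonneg (mul_nonneg h1' hb.le) (mul_nonneg (neg_nonneg.2 h1.le) hb'.le))]
  · exact le_of_eq (by ring)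

/-- If `d > 0` and `g` nearly solve the same linear equation, in the sense that
`e = g J d - d J g` is small in `L¹`, then `g` is nearly proportional to `d` on every window. -/
lemma energy {s : ℝ} (hs : s ∈ Ioo (0:ℝ) 1) {g d e : ℝ → ℝ} (hg : Continuous g) (hd : Continuous d)
    (ig : Integrable g) (id' : Integrable d) (hd0 : ∀ x, 0 < d x) {A : ℝ}
    (hgA : ∀ x z, 0 < z → |sd g x z| ≤ A * z^2) (hdA : ∀ x z, 0 < z → |sd d x z| ≤ A * z^2)
    (hgG : ∀ x, Good s g x) (hdG : ∀ x, Good s d x)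
    (he : ∀ x, g x * J s d x - d x * J s g x = e x) (ie : Integrable e) {N : ℝ} (hN : 0 < N) :
    ∫ q in Icc (-N) N ×ˢ Icc (-N) N, (g q.1 * d q.2 - d q.1 * g q.2)^2 /
        ((|g q.1| + d q.1) * (|g q.2| + d q.2)) ≤
      2 * (2*N) ^ (1 + 2*s) / C1s s * ∫ x, |e x| := by
  have hC := C1s_pos hs
  have hs0 := hs.1; have hs1 := hs.2
  set w : Set (ℝ × ℝ) := Icc (-N) N ×ˢ Icc (-N) N with hw
  set P : ℝ → ℝ := fun x => |g x| + d x with hP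
  have hP0 : ∀ x, 0 < P x := fun x => by have := hd0 x; simp only [hP]; positivity
  have iP : Integrable P := ig.abs.add id'
  have hPc : Continuous P := by simp only [hP]; fun_prop
  set X : ℝ × ℝ → ℝ := fun q => g q.1 * d q.2 - d q.1 * g q.2 with hX
  have hXc : Continuous X := by simp only [hX]; fun_prop
  set m : ℝ → ℝ := fun x => g x / P x with hm
  have hmc : Continuous m := hg.div hPc fun x => (hP0 x).ne'
  have hm1 : ∀ x, |m x| ≤ 1 := by
    intro x
    simp only [hm]
    rw [abs_div, abs_of_pos (hP0 x), div_le_one (hP0 x)]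
    simp only [hP]; linarith [hd0 x]
  have iX : Integrable X (volume.prod volume) := (ig.mul_prod id').sub (id'.mul_prod ig)
  set Y : ℝ × ℝ → ℝ := fun q => X q ^ 2 / (P q.1 * P q.2) with hY
  have hYc : Continuous Y := by
    simp only [hY]
    exact (hXc.pow 2).div (by fun_prop) fun q => (mul_pos (hP0 _) (hP0 _)).ne'
  have hY0 : ∀ q, 0 ≤ Y q := fun q => by
    simp only [hY]; have := hP0 q.1; have := hP0 q.2; positivity
  have hwc : IsCompact w := isCompact_Icc.prod isCompact_Icc
  have iY : IntegrableOn Y w := hYc.continuousOn.integrableOn_compact hwc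
  have hNN : (0:ℝ) < (2*N) ^ (-(1+2*s)) := Real.rpow_pos_of_pos (by linarith) _
  -- the inequality with a regularised kernel
  have key : ∀ η : ℝ, 0 < η → η ≤ 2*N → (2*N) ^ (-(1+2*s)) * ∫ q in w, Y q ≤
      2 * ((∫ x, |e x|) / C1s s + (A * (η ^ (2 - 2*s) / (2 - 2*s))) * ∫ x, P x) := by
    intro η hη hηN
    set k : ℝ → ℝ := fun z => (max |z| η) ^ (-(1+2*s)) with hk
    have hmx : ∀ z : ℝ, 0 < max |z| η := fun z => lt_max_of_lt_right hη
    have hk0 : ∀ z, 0 < k z := fun z => Real.rpow_pos_of_pos (hmx z) _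
    have hkc : Continuous k := by
      simp only [hk]
      exact Continuous.rpow_const (by fun_prop) fun z => Or.inl (hmx z).ne'
    have hkb : ∀ z, k z ≤ η ^ (-(1+2*s)) := fun z =>
      Real.rpow_le_rpow_of_nonpos hη (le_max_right _ _) (by linarith)
    have hke : ∀ z, k (-z) = k z := fun z => by simp only [hk, abs_neg]
    set Kb := η ^ (-(1+2*s)) with hKb
    have hKb0 : 0 ≤ Kb := (hk0 0).le.trans (hkb 0)
    -- bounded continuous multiples of `X` are integrable
    have iXm : ∀ c : ℝ × ℝ → ℝ, Continuous c → (∀ q, |c q| ≤ 2 * Kb) →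
        Integrable (fun q => c q * X q) (volume.prod volume) := fun c hc hb =>
      iX.bdd_mul hc.aestronglyMeasurable (c := 2 * Kb) (ae_of_all _ hb)
    have hc1 : Continuous (fun q : ℝ × ℝ => m q.1 * k (q.2 - q.1)) := by fun_prop
    have hb1 : ∀ q : ℝ × ℝ, |m q.1 * k (q.2 - q.1)| ≤ 2 * Kb := by
      intro q
      rw [abs_mul, abs_of_pos (hk0 _)]
      calc |m q.1| * k (q.2 - q.1) ≤ 1 * Kb := mul_le_mul (hm1 _) (hkb _) (hk0 _).le zero_le_one
        _ ≤ 2 * Kb := by linarith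
    have i1 := iXm _ hc1 hb1
    have hc2 : Continuous (fun q : ℝ × ℝ => m q.2 * k (q.2 - q.1)) := by fun_prop
    have hb2 : ∀ q : ℝ × ℝ, |m q.2 * k (q.2 - q.1)| ≤ 2 * Kb := by
      intro q
      rw [abs_mul, abs_of_pos (hk0 _)]
      calc |m q.2| * k (q.2 - q.1) ≤ 1 * Kb := mul_le_mul (hm1 _) (hkb _) (hk0 _).le zero_le_one
        _ ≤ 2 * Kb := by linarith
    have i2 := iXm _ hc2 hb2
    set T := ∫ q, m q.1 * k (q.2 - q.1) * X q ∂(volume.prod volume : Measure (ℝ × ℝ)) with hT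
    have hT2 : ∫ q, m q.2 * k (q.2 - q.1) * X q ∂(volume.prod volume : Measure (ℝ × ℝ)) = - T := by
      rw [hT, ← integral_prod_swap, ← integral_neg]
      refine integral_congr_ae (ae_of_all _ fun q => ?_)
      simp only [Prod.fst_swap, Prod.snd_swap, hX]
      rw [← hke, neg_sub]; ring
    have h2T : 2 * T = ∫ q, (m q.1 - m q.2) * X q * k (q.2 - q.1) ∂(volume.prod volume : Measure (ℝ × ℝ)) := by
      have : ∫ q, (m q.1 - m q.2) * X q * k (q.2 - q.1) ∂(volume.prod volume : Measure (ℝ × ℝ)) =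
          ∫ q, (m q.1 * k (q.2 - q.1) * X q - m q.2 * k (q.2 - q.1) * X q) ∂(volume.prod volume : Measure (ℝ × ℝ)) :=
        integral_congr_ae (ae_of_all _ fun q => by ring)
      rw [this, integral_sub i1 i2, hT2]; ring
    have i3 : Integrable (fun q : ℝ × ℝ => (m q.1 - m q.2) * X q * k (q.2 - q.1)) (volume.prod volume) :=
      (i1.sub i2).congr (ae_of_all _ fun q => by simp only [Pi.sub_apply]; ring)
    have hptw : ∀ q, Y q ≤ (m q.1 - m q.2) * X q := fun q => cross_ineq (hd0 _) (hd0 _)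
    have hlow : (2*N) ^ (-(1+2*s)) * ∫ q in w, Y q ≤ 2 * T := by
      rw [h2T, ← integral_const_mul]
      have s1 : ∫ q in w, (2*N) ^ (-(1+2*s)) * Y q ≤ ∫ q in w, (m q.1 - m q.2) * X q * k (q.2 - q.1) := by
        refine setIntegral_mono_on (iY.const_mul _) i3.integrableOn hwc.measurableSet fun q hq => ?_
        have hkN : (2*N) ^ (-(1+2*s)) ≤ k (q.2 - q.1) := by
          refine Real.rpow_le_rpow_of_nonpos (hmx _) (max_le ?_ hηN) (by linarith)
          rw [abs_le]; constructor <;> linarith [hq.1.1, hq.1.2, hq.2.1, hq.2.2]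
        rw [mul_comm]
        exact mul_le_mul (hptw q) hkN hNN.le ((hY0 q).trans (hptw q))
      refine s1.trans (setIntegral_le_integral i3 (ae_of_all _ fun q => ?_))
      exact mul_nonneg ((hY0 q).trans (hptw q)) (hk0 _).le
    -- Fubini and the comparison with the singular kernel
    have hTF : T = ∫ x, m x * ∫ y, k (y - x) * X (x, y) := by
      rw [hT, integral_prod _ i1]
      refine integral_congr_ae (ae_of_all _ fun x => ?_)
      simp only
      rw [← integral_const_mul]
      refine integral_congr_ae (ae_of_all _ fun y => ?_)
      simp only; ring
    set c_η := A * (η ^ (2 - 2*s) / (2 - 2*s)) with hcη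
    have hinner : ∀ x, |∫ y, k (y - x) * X (x, y)| ≤ |e x| / C1s s + c_η * P x := by
      intro x
      have jx : Integrable (fun y => k (y - x) * X (x, y)) := by
        have : Integrable (fun y => X (x, y)) := (id'.const_mul (g x)).sub (ig.const_mul (d x))
        refine this.bdd_mul (c := Kb) (by fun_prop) (ae_of_all _ fun y => ?_)
        rw [Real.norm_of_nonneg (hk0 _).le]; exact hkb _
      have jx' : Integrable (fun z => k z * X (x, x + z)) := by
        have := jx.comp_add_left x
        simpa using this
      have eq1 : ∫ y, k (y - x) * X (x, y) = ∫ z, k z * X (x, x + z) := by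
        rw [← integral_add_left_eq_self _ x]; simp
      have eq2 := integral_symm jx'
      have eq3 : ∀ z, k z * X (x, x + z) + k (-z) * X (x, x + -z) =
          k z * (g x * sd d x z - d x * sd g x z) := by
        intro z; rw [hke]; simp only [hX, sd, sub_eq_add_neg]; ring
      simp only [eq3] at eq2
      have j1 : IntegrableOn (fun z => k z * (g x * sd d x z - d x * sd g x z)) (Ioi 0) := by
        refine (jx'.integrableOn.add (jx'.comp_neg).integrableOn).congr (ae_of_all _ fun z => ?_)
        simp only [Pi.add_apply]; exact eq3 z
      have j2 : IntegrableOn (fun z => g x * (sd d x z / z ^ (1+2*s)) - d x * (sd g x z / z ^ (1+2*s))) (Ioi 0) :=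
        (Integrable.const_mul (hdG x) _).sub (Integrable.const_mul (hgG x) _)
      have eq4 : e x / C1s s = ∫ z in Ioi (0:ℝ), (g x * (sd d x z / z ^ (1+2*s)) - d x * (sd g x z / z ^ (1+2*s))) := by
        rw [integral_sub (Integrable.const_mul (hdG x) _) (Integrable.const_mul (hgG x) _),
          integral_const_mul, integral_const_mul, ← he x]
        simp only [J]; field_simp
      have hdiff : |(∫ y, k (y - x) * X (x, y)) - e x / C1s s| ≤ c_η * P x := by
        rw [eq1, eq2, eq4, ← integral_sub j1 j2]
        obtain ⟨q1, q2⟩ := small_int hs hη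
        have hint_eq : ∫ z in Ioi (0:ℝ), (Ioc 0 η).indicator (fun z => P x * A * (z^2 / z ^ (1+2*s))) z = c_η * P x := by
          rw [setIntegral_indicator measurableSet_Ioc,
            show Ioi (0:ℝ) ∩ Ioc 0 η = Ioc 0 η from inter_eq_right.2 fun z hz => hz.1, integral_const_mul, q2]
          rw [hcη]; ring
        rw [← hint_eq, ← Real.norm_eq_abs]
        refine norm_integral_le_of_norm_le
          (((integrable_indicator_iff measurableSet_Ioc).2 (q1.const_mul _)).integrableOn) ?_
        refine (ae_restrict_iff' measurableSet_Ioi).2 (ae_of_all _ fun z hz => ?_)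
        have hz0 : (0:ℝ) < z := hz
        have hzp : 0 < z ^ (1+2*s) := Real.rpow_pos_of_pos hz0 _
        have eqz : k z * (g x * sd d x z - d x * sd g x z) -
            (g x * (sd d x z / z ^ (1+2*s)) - d x * (sd g x z / z ^ (1+2*s))) =
            (k z - (z ^ (1+2*s))⁻¹) * (g x * sd d x z - d x * sd g x z) := by
          rw [div_eq_mul_inv, div_eq_mul_inv]; ring
        rw [eqz]
        by_cases h : z ≤ η
        · rw [indicator_of_mem (show z ∈ Ioc 0 η from ⟨hz0, h⟩), norm_mul]
          have hk1 : ‖k z - (z ^ (1+2*s))⁻¹‖ ≤ (z ^ (1+2*s))⁻¹ := by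
            have h1 : k z ≤ (z ^ (1+2*s))⁻¹ := by
              rw [← Real.rpow_neg hz0.le]
              refine Real.rpow_le_rpow_of_nonpos hz0 ?_ (by linarith)
              rw [abs_of_pos hz0]; exact le_max_left _ _
            rw [Real.norm_eq_abs, abs_le]; constructor <;> linarith [(hk0 z).le]
          have hk2 : ‖g x * sd d x z - d x * sd g x z‖ ≤ P x * (A * z^2) := by
            rw [Real.norm_eq_abs]
            refine (abs_sub _ _).trans ?_
            rw [abs_mul, abs_mul, abs_of_pos (hd0 x)]
            simp only [hP]; rw [add_mul]
            have := hd0 x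
            gcongr
            · exact hdA x z hz0
            · exact hgA x z hz0
          calc _ ≤ (z ^ (1+2*s))⁻¹ * (P x * (A * z^2)) :=
                mul_le_mul hk1 hk2 (norm_nonneg _) (by positivity)
            _ = _ := by rw [div_eq_mul_inv]; ring
        · rw [indicator_of_notMem (fun hh => h hh.2)]
          push Not at h
          have : k z = (z ^ (1+2*s))⁻¹ := by
            simp only [hk]; rw [abs_of_pos hz0, max_eq_left h.le, Real.rpow_neg hz0.le]
          rw [this, sub_self, zero_mul, norm_zero]
      have h3 : |e x / C1s s| = |e x| / C1s s := by rw [abs_div, abs_of_pos hC]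
      have := abs_add_le ((∫ y, k (y - x) * X (x, y)) - e x / C1s s) (e x / C1s s)
      rw [sub_add_cancel] at this
      linarith
    have hTle : T ≤ (∫ x, |e x|) / C1s s + c_η * ∫ x, P x := by
      have hI : Integrable (fun x => |e x| / C1s s + c_η * P x) := (ie.abs.div_const _).add (iP.const_mul _)
      have heq : ∫ x, (|e x| / C1s s + c_η * P x) = (∫ x, |e x|) / C1s s + c_η * ∫ x, P x := by
        rw [integral_add (ie.abs.div_const _) (iP.const_mul _), integral_div, integral_const_mul]
      rw [← heq, hTF]
      refine (le_abs_self _).trans ?_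
      rw [← Real.norm_eq_abs]
      refine norm_integral_le_of_norm_le hI (ae_of_all _ fun x => ?_)
      rw [norm_mul, Real.norm_eq_abs, Real.norm_eq_abs]
      calc |m x| * |∫ y, k (y - x) * X (x, y)| ≤ 1 * |∫ y, k (y - x) * X (x, y)| := by
            gcongr; exact hm1 x
        _ ≤ _ := by rw [one_mul]; exact hinner x
    linarith
  -- let `η → 0`
  have hlim : Tendsto (fun η : ℝ => 2 * ((∫ x, |e x|) / C1s s + (A * (η ^ (2 - 2*s) / (2 - 2*s))) * ∫ x, P x))
      (nhdsWithin 0 (Ioi 0)) (nhds (2 * ((∫ x, |e x|) / C1s s + (A * (0 / (2 - 2*s))) * ∫ x, P x))) := by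
    have h0 : Tendsto (fun η : ℝ => η ^ (2 - 2*s)) (nhdsWithin 0 (Ioi 0)) (nhds 0) := by
      have := (Real.continuous_rpow_const (by linarith : 0 ≤ 2 - 2*s)).tendsto 0
      rw [Real.zero_rpow (by linarith)] at this
      exact this.mono_left nhdsWithin_le_nhds
    exact ((((h0.div_const _).const_mul A).mul_const _).const_add _).const_mul 2
  have hfin := ge_of_tendsto hlim (by
    filter_upwards [self_mem_nhdsWithin, mem_nhdsWithin_of_mem_nhds (Iio_mem_nhds (by linarith : (0:ℝ) < 2*N))]
      with η h1 h2
    exact key η h1 (le_of_lt h2))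
  rw [zero_div, mul_zero, zero_mul, add_zero, Real.rpow_neg (by linarith), inv_mul_le_iff₀ (Real.rpow_pos_of_pos (by linarith) _)] at hfin
  refine hfin.trans (le_of_eq ?_)
  ring

/-! ### Mollifiers and functionals on bounded continuous functions -/

open scoped BoundedContinuousFunction

/-- `ρ` is a nonnegative `C²` function of mass one supported in `[-ε, ε]`. -/
structure Mol (ε : ℝ) (ρ : ℝ → ℝ) : Prop where
  c2 : ContDiff ℝ 2 ρ
  cs : HasCompactSupport ρ
  nonneg : ∀ x, 0 ≤ ρ x
  supp : ∀ x, ε < |x| → ρ x = 0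
  int : ∫ x, ρ x = 1

lemma exists_mol {ε : ℝ} (hε : 0 < ε) : ∃ ρ, Mol ε ρ := by
  let f : ContDiffBump (0:ℝ) := ⟨ε/2, ε, by linarith, by linarith⟩
  refine ⟨f.normed volume, f.contDiff_normed, f.hasCompactSupport_normed, f.nonneg_normed,
    fun x hx => ?_, f.integral_normed⟩
  have h : x ∉ Function.support (f.normed volume) := by
    rw [f.support_normed_eq]
    simp only [mem_ball, dist_zero_right, Real.norm_eq_abs, not_lt]
    exact hx.le
  simpa using h

namespace Mol
variable {ε : ℝ} {ρ : ℝ → ℝ}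

lemma integrable (m : Mol ε ρ) : Integrable ρ := m.c2.continuous.integrable_of_hasCompactSupport m.cs

lemma bounds (m : Mol ε ρ) : ∃ M, 0 < M ∧ (∀ x, |ρ x| ≤ M) ∧ (∀ x y, |ρ x - ρ y| ≤ M * |x - y|) ∧
    (∀ x z, 0 ≤ z → |sd ρ x z| ≤ M * z^2) := by
  obtain ⟨h1, h2, c1, c2⟩ := c2_hasDeriv m.c2
  obtain ⟨B0, hB0⟩ := m.c2.continuous.bounded_above_of_compact_support m.cs
  obtain ⟨B1, hB1⟩ := c1.bounded_above_of_compact_support m.cs.deriv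
  obtain ⟨B2, hB2⟩ := c2.bounded_above_of_compact_support m.cs.deriv.deriv
  simp only [Real.norm_eq_abs] at hB0 hB1 hB2
  have p0 := (abs_nonneg _).trans (hB0 0)
  have p1 := (abs_nonneg _).trans (hB1 0)
  have p2 := (abs_nonneg _).trans (hB2 0)
  refine ⟨B0 + B1 + B2 + 1, by linarith, fun x => by linarith [hB0 x], fun x y => ?_, fun x z hz => ?_⟩
  · have := Convex.norm_image_sub_le_of_norm_deriv_le (f := ρ) (s := univ) (C := B1) (x := y) (y := x)
      (fun y _ => (h1 y).differentiableAt) (fun y _ => hB1 y) convex_univ trivial trivial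
    simp only [Real.norm_eq_abs] at this
    exact this.trans (by gcongr; linarith)
  · exact (sd_abs_le_of_deriv2 hz (fun y _ => h1 y) (fun y _ => h2 y) (fun y _ => hB2 y)).trans
      (by gcongr; linarith)

/-- The translate `y ↦ ρ (y - x)` as a bounded continuous function. -/
noncomputable def k (m : Mol ε ρ) (x : ℝ) : ℝ →ᵇ ℝ :=
  BoundedContinuousFunction.ofNormedAddCommGroup (fun y => ρ (y - x))
    (m.c2.continuous.comp (continuous_id.sub continuous_const)) m.bounds.choose
    (fun y => m.bounds.choose_spec.2.1 (y - x))

@[simp] lemma k_apply (m : Mol ε ρ) (x y : ℝ) : m.k x y = ρ (y - x) := rfl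

lemma k_cont (m : Mol ε ρ) : Continuous m.k := by
  obtain ⟨M, hM, -, h, -⟩ := m.bounds
  have : LipschitzWith M.toNNReal m.k := by
    refine LipschitzWith.of_dist_le_mul fun x x' => ?_
    rw [Real.coe_toNNReal _ hM.le]
    refine (BoundedContinuousFunction.dist_le (by positivity)).2 fun y => ?_
    simp only [k_apply, Real.dist_eq]
    refine (h _ _).trans (le_of_eq ?_)
    rw [show y - x - (y - x') = -(x - x') by ring, abs_neg]
  exact this.continuous

lemma int_k (m : Mol ε ρ) (y : ℝ) : Integrable (fun x => ρ (y - x)) ∧ ∫ x, ρ (y - x) = 1 := by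
  refine ⟨m.integrable.comp_sub_left y, ?_⟩
  rw [integral_sub_left_eq_self ρ volume y, m.int]

lemma int_w (m : Mol ε ρ) (w : Set ℝ) (y : ℝ) : ∫ x in w, ρ (y - x) ≤ 1 := by
  rw [← (m.int_k y).2]
  exact setIntegral_le_integral (m.int_k y).1 (Eventually.of_forall fun x => m.nonneg _)

/-- The second difference of `x ↦ m.k x`. -/
noncomputable def D (m : Mol ε ρ) (x z : ℝ) : ℝ →ᵇ ℝ := m.k (x + z) + m.k (x - z) - (2:ℝ) • m.k x

lemma D_apply (m : Mol ε ρ) (x z y : ℝ) : m.D x z y = sd (m.k x) y z := by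
  simp only [D, BoundedContinuousFunction.coe_sub, BoundedContinuousFunction.coe_add, Pi.sub_apply,
    Pi.add_apply, k_apply, BoundedContinuousFunction.coe_smul, smul_eq_mul, sd]
  rw [show y - (x + z) = y - z - x by ring, show y - (x - z) = y + z - x by ring]
  ring

lemma D_cont (m : Mol ε ρ) (x : ℝ) : Continuous (m.D x) := by
  have := m.k_cont
  unfold D
  fun_prop

lemma D_bound (m : Mol ε ρ) : ∃ M, 0 < M ∧ ∀ x z, 0 ≤ z → ‖m.D x z‖ ≤ M * z^2 ∧ ‖m.D x z‖ ≤ M := by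
  obtain ⟨M, hM, h0, -, h⟩ := m.bounds
  refine ⟨4*M, by linarith, fun x z hz => ⟨?_, ?_⟩⟩
  · refine (BoundedContinuousFunction.norm_le (by positivity)).2 fun y => ?_
    rw [D_apply, Real.norm_eq_abs]
    have := h (y - x) z hz
    have e : sd (m.k x) y z = sd ρ (y - x) z := by
      simp only [sd, k_apply]; rw [show y + z - x = y - x + z by ring, show y - z - x = y - x - z by ring]
    rw [e]
    nlinarith [mul_pos hM (by norm_num : (0:ℝ) < 3), sq_nonneg z]
  · refine (BoundedContinuousFunction.norm_le (by positivity)).2 fun y => ?_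
    rw [D_apply, Real.norm_eq_abs]
    exact sd_bdd (fun y => by rw [k_apply]; exact h0 _) y z

lemma D_int {s : ℝ} (hs : s ∈ Ioo (0:ℝ) 1) (m : Mol ε ρ) (x : ℝ) :
    IntegrableOn (fun z => (1 / z ^ (1 + 2*s)) • m.D x z) (Ioi 0) := by
  obtain ⟨M, hM, h⟩ := m.D_bound
  have hb := (kernel_bound hs (f := fun z => ‖m.D x z‖) (m.D_cont x).norm (a := 1) (A := M) (B := M) one_pos
    (fun z hz => by rw [abs_norm]; exact (h x z hz.1.le).1)
    (fun z hz => by rw [abs_norm]; exact (h x z (by linarith)).2)).1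
  refine hb.mono' ?_ ?_
  · refine ContinuousOn.aestronglyMeasurable ?_ measurableSet_Ioi
    have hc : ContinuousOn (fun z : ℝ => 1 / z ^ (1 + 2*s)) (Ioi 0) := by
      refine ContinuousOn.div continuousOn_const ?_ fun z hz => (Real.rpow_pos_of_pos hz _).ne'
      exact fun z hz => (Real.continuousAt_rpow_const z _ (Or.inl (ne_of_gt hz))).continuousWithinAt
    exact hc.smul (m.D_cont x).continuousOn
  · filter_upwards [self_mem_ae_restrict measurableSet_Ioi] with z hz
    have : (0:ℝ) < z ^ (1 + 2*s) := Real.rpow_pos_of_pos hz _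
    rw [norm_smul, Real.norm_eq_abs, abs_of_pos (by positivity)]
    exact le_of_eq (by ring)

/-- The operator `J` applied to `m.k x`, as an element of the space of bounded continuous functions. -/
noncomputable def JJ (s : ℝ) (m : Mol ε ρ) (x : ℝ) : ℝ →ᵇ ℝ :=
  C1s s • ∫ z in Ioi (0:ℝ), (1 / z ^ (1 + 2*s)) • m.D x z

lemma JJ_apply {s : ℝ} (hs : s ∈ Ioo (0:ℝ) 1) (m : Mol ε ρ) (x y : ℝ) :
    m.JJ s x y = J s (m.k x) y := by
  have := (BoundedContinuousFunction.evalCLM ℝ y).integral_comp_comm (m.D_int hs x)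
  simp only [JJ, BoundedContinuousFunction.coe_smul]
  simp only [BoundedContinuousFunction.evalCLM_apply, BoundedContinuousFunction.coe_smul, D_apply,
    smul_eq_mul] at this
  rw [smul_eq_mul, ← this, J]
  congr 1
  refine integral_congr_ae (Eventually.of_forall fun z => ?_)
  simp only []
  ring

lemma JJ_dual {s : ℝ} (hs : s ∈ Ioo (0:ℝ) 1) (m : Mol ε ρ) (Λ : (ℝ →ᵇ ℝ) →L[ℝ] ℝ) (x : ℝ) :
    Λ (m.JJ s x) = J s (fun x => Λ (m.k x)) x := by
  have := Λ.integral_comp_comm (m.D_int hs x)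
  simp only [JJ, map_smul, ← this, J, smul_eq_mul]
  congr 1
  refine integral_congr_ae (Eventually.of_forall fun z => ?_)
  simp only [D, map_sub, map_add, map_smul, sd, smul_eq_mul]
  ring

end Mol

/-- Testing a functional against a window of a continuous family of functions. -/
lemma pairing (Λ : (ℝ →ᵇ ℝ) →L[ℝ] ℝ) {κ : ℝ → (ℝ →ᵇ ℝ)} (hκ : Continuous κ) {q : ℝ → ℝ} (hq : Measurable q)
    {M : ℝ} (hM : ∀ x, |q x| ≤ M) (N : ℝ) (f : ℝ →ᵇ ℝ) {B : ℝ} (hB0 : 0 ≤ B)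
    (hB : ∀ y, |f y - ∫ x in Icc (-N) N, q x * κ x y| ≤ B) :
    |Λ f - ∫ x in Icc (-N) N, q x * Λ (κ x)| ≤ ‖Λ‖ * B := by
  have hi : IntegrableOn (fun x => q x • κ x) (Icc (-N) N) := by
    have h1 : IntegrableOn κ (Icc (-N) N) := hκ.continuousOn.integrableOn_compact isCompact_Icc
    exact Integrable.bdd_smul h1 M hq.aestronglyMeasurable (Eventually.of_forall hM)
  have e1 := Λ.integral_comp_comm hi
  simp only [map_smul, smul_eq_mul] at e1
  rw [e1, ← map_sub, ← Real.norm_eq_abs]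
  refine (Λ.le_opNorm _).trans ?_
  gcongr
  refine (BoundedContinuousFunction.norm_le hB0).2 fun y => ?_
  have e2 := (BoundedContinuousFunction.evalCLM ℝ y).integral_comp_comm hi
  simp only [BoundedContinuousFunction.evalCLM_apply, BoundedContinuousFunction.coe_smul, smul_eq_mul] at e2
  rw [BoundedContinuousFunction.coe_sub, Pi.sub_apply, ← e2]
  exact hB y

lemma pairing_abs (Λ : (ℝ →ᵇ ℝ) →L[ℝ] ℝ) {κ : ℝ → (ℝ →ᵇ ℝ)} (hκ : Continuous κ) {B : ℝ} (hB0 : 0 ≤ B)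
    (hB : ∀ N y, ∫ x in Icc (-N) N, |κ x y| ≤ B) :
    Integrable (fun x => Λ (κ x)) ∧ ∫ x, |Λ (κ x)| ≤ ‖Λ‖ * B := by
  have hc : Continuous fun x => Λ (κ x) := Λ.continuous.comp hκ
  have hw : ∀ N : ℝ, ∫ x in Icc (-N) N, |Λ (κ x)| ≤ ‖Λ‖ * B := by
    intro N
    set q : ℝ → ℝ := fun x => if 0 ≤ Λ (κ x) then 1 else -1 with hq
    have hqm : Measurable q := Measurable.ite (measurableSet_le measurable_const hc.measurable)
      measurable_const measurable_const
    have hq1 : ∀ x, |q x| = 1 := fun x => by simp only [hq]; split_ifs <;> simp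
    have hqa : ∀ x, q x * Λ (κ x) = |Λ (κ x)| := fun x => by
      simp only [hq]; split_ifs with h
      · rw [one_mul, abs_of_nonneg h]
      · rw [neg_one_mul, abs_of_neg (not_le.1 h)]
    have := pairing Λ hκ hqm (fun x => (hq1 x).le) N 0 hB0 (fun y => by
      rw [BoundedContinuousFunction.coe_zero, Pi.zero_apply, zero_sub, abs_neg]
      refine (abs_integral_le_integral_abs).trans (le_trans (le_of_eq ?_) (hB N y))
      refine integral_congr_ae (Eventually.of_forall fun x => ?_)
      simp only [abs_mul, hq1, one_mul])
    simp only [map_zero, zero_sub, abs_neg, hqa] at this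
    exact (le_abs_self _).trans this
  have hI : Integrable (fun x => Λ (κ x)) := by
    refine integrable_of_intervalIntegral_norm_bounded (‖Λ‖ * B) (l := atTop) (a := fun n : ℝ => -n)
      (b := fun n => n) (fun i => (hc.continuousOn.integrableOn_compact isCompact_Icc).mono_set Ioc_subset_Icc_self)
      tendsto_neg_atTop_atBot tendsto_id ?_
    filter_upwards [eventually_ge_atTop 0] with N hN
    rw [intervalIntegral.integral_of_le (by linarith), ← integral_Icc_eq_integral_Ioc]
    exact hw N
  refine ⟨hI, ?_⟩
  have ht := intervalIntegral_tendsto_integral (l := atTop) (a := fun n : ℝ => -n) (b := fun n => n)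
    hI.abs tendsto_neg_atTop_atBot tendsto_id
  refine le_of_tendsto ht ?_
  filter_upwards [eventually_ge_atTop 0] with N hN
  rw [intervalIntegral.integral_of_le (by linarith), ← integral_Icc_eq_integral_Ioc]
  exact hw N

/-! ### Functionals annihilating the range of the linearized operator -/

lemma Pot.cont2 {s α K : ℝ} {W1 W2 : ℝ → ℝ} (P : Pot s W1 W2 α K) : Continuous W2 := by
  have : LipschitzWith K.toNNReal W2 := LipschitzWith.of_dist_le_mul fun x y => by
    rw [Real.coe_toNNReal _ P.K_pos.le]; exact P.lip x y
  exact this.continuous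

lemma Pot.cont1 {s α K : ℝ} {W1 W2 : ℝ → ℝ} (P : Pot s W1 W2 α K) : Continuous W1 :=
  continuous_iff_continuousAt.2 fun v => (P.d1 v).continuousAt

/-- `Λ` vanishes on all functions `J ψ - W''(φ) ψ` with `ψ` of class `C²` and compactly supported. -/
def Annih (s : ℝ) (W2 φ : ℝ → ℝ) (Λ : (ℝ →ᵇ ℝ) →L[ℝ] ℝ) : Prop :=
  ∀ (ψ : ℝ → ℝ) (F : ℝ →ᵇ ℝ), ContDiff ℝ 2 ψ → HasCompactSupport ψ →
    (∀ x, F x = J s ψ x - W2 (φ x) * ψ x) → Λ F = 0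

section
variable {s α K R Q : ℝ} {W1 W2 φ : ℝ → ℝ}

lemma Dec.sd_le (hs : s ∈ Ioo (0:ℝ) 1) (L : Lay s W1 φ) (Dc : Dec s φ R Q) (x : ℝ) {z : ℝ} (hz : 0 ≤ z) :
    |sd φ x z| ≤ Q * z^2 := by
  obtain ⟨h1, h2, -, -⟩ := c2_hasDeriv L.c2
  refine sd_abs_le_of_deriv2 hz (fun y _ => h1 y) (fun y _ => h2 y) fun y _ => ?_
  exact (Dc.p2 y).trans (by nlinarith [wt_le_one hs Dc.hR y, Dc.hQ])

lemma Dec.taylor1 (hs : s ∈ Ioo (0:ℝ) 1) (L : Lay s W1 φ) (Dc : Dec s φ R Q) (x : ℝ) {ε : ℝ} (hε : 0 < ε) :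
    |(φ (x + ε) - φ x) / ε - deriv φ x| ≤ Q * ε := by
  obtain ⟨h1, h2, -, -⟩ := c2_hasDeriv L.c2
  obtain ⟨c, hc, he⟩ := exists_hasDerivAt_eq_slope φ (deriv φ) (show x < x + ε by linarith)
    L.cont.continuousOn (fun y _ => h1 y)
  rw [add_sub_cancel_left] at he
  rw [← he]
  have := Convex.norm_image_sub_le_of_norm_deriv_le (f := deriv φ) (s := univ) (C := Q) (x := x) (y := c)
      (fun y _ => (h2 y).differentiableAt) (fun y _ => (Dc.p2 y).trans
        (by nlinarith [wt_le_one hs Dc.hR y, Dc.hQ])) convex_univ trivial trivial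
  refine this.trans ?_
  have := Dc.hQ
  gcongr
  rw [Real.norm_eq_abs, abs_of_pos (by linarith [hc.1])]; linarith [hc.2]

/-- The mollified functional `g` is nearly proportional to the difference quotient of the layer
solution, on every window and up to an error of order `√ε`. -/
lemma window (hs : s ∈ Ioo (0:ℝ) 1) (P : Pot s W1 W2 α K) (L : Lay s W1 φ) (Dc : Dec s φ R Q)
    {Λ : (ℝ →ᵇ ℝ) →L[ℝ] ℝ} (hΛ : Annih s W2 φ Λ) {N : ℝ} (hN : 0 < N) :
    ∃ C, 0 ≤ C ∧ ∀ ε : ℝ, 0 < ε → ε ≤ 1 → ∀ ρ (m : Mol ε ρ),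
      Integrable (fun x => Λ (m.k x)) ∧ ∫ x, |Λ (m.k x)| ≤ ‖Λ‖ ∧
      ∫ q in Icc (-N) N ×ˢ Icc (-N) N, |Λ (m.k q.1) * ((φ (q.2 + ε) - φ q.2) / ε) -
        ((φ (q.1 + ε) - φ q.1) / ε) * Λ (m.k q.2)| ≤ C * √ε := by
  have hC := C1s_pos hs
  have hK := P.K_pos
  have hQ := Dc.hQ
  have hR0 : 0 < R := by linarith [Dc.hR]
  set T := 2 * (2*N) ^ (1 + 2*s) / C1s s with hT
  have hT0 : 0 ≤ T := by positivity
  set S := ∫ x, Q * wt s R x with hS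
  refine ⟨T * (2 * K * Q^2 * ‖Λ‖) + (‖Λ‖ + S)^2, by positivity, fun ε hε hε1 ρ m => ?_⟩
  have hωc : Continuous fun x => W2 (φ x) := P.cont2.comp L.cont
  set ω : ℝ →ᵇ ℝ := BoundedContinuousFunction.ofNormedAddCommGroup (fun x => W2 (φ x)) hωc K
    (fun x => P.bd _) with hω
  have hωa : ∀ x, ω x = W2 (φ x) := fun x => rfl
  set g : ℝ → ℝ := fun x => Λ (m.k x) with hg
  set d : ℝ → ℝ := fun x => (φ (x + ε) - φ x) / ε with hd
  have hgc : Continuous g := Λ.continuous.comp m.k_cont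
  have hdc : Continuous d := by have := L.cont; simp only [hd]; fun_prop
  obtain ⟨ig, bg⟩ := pairing_abs Λ m.k_cont zero_le_one (fun N y => by
    simp only [Mol.k_apply, abs_of_nonneg (m.nonneg _)]; exact m.int_w _ y)
  rw [mul_one] at bg
  -- the commutator with multiplication by `W''(φ)`
  have hκc : Continuous fun x => ω x • m.k x - ω * m.k x := by
    have := m.k_cont
    have := ω.continuous
    fun_prop
  have hφl : ∀ x y, |y - x| ≤ ε → |φ x - φ y| ≤ Q * ε := by
    intro x y h
    have := Dc.d1 x (y - x) (h.trans hε1)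
    rw [add_sub_cancel] at this
    rw [abs_sub_comm]
    refine this.trans ?_
    have h1 := wt_le_one hs Dc.hR x
    have h2 := (wt_pos (s := s) hR0 x).le
    calc Q * |y - x| * wt s R x ≤ Q * ε * 1 := by gcongr
      _ = _ := by ring
  obtain ⟨ir, br⟩ := pairing_abs Λ hκc (B := K * Q * ε) (by positivity) (fun N y => by
    have hp : ∀ x, |(ω x • m.k x - ω * m.k x) y| ≤ K * Q * ε * ρ (y - x) := by
      intro x
      simp only [BoundedContinuousFunction.coe_sub, Pi.sub_apply, BoundedContinuousFunction.coe_smul,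
        BoundedContinuousFunction.coe_mul, Pi.mul_apply, Mol.k_apply, smul_eq_mul, hωa]
      rw [← sub_mul, abs_mul, abs_of_nonneg (m.nonneg _)]
      by_cases h : |y - x| ≤ ε
      · refine mul_le_mul_of_nonneg_right ?_ (m.nonneg _)
        refine (P.lip _ _).trans ?_
        rw [mul_assoc]
        exact mul_le_mul_of_nonneg_left (hφl x y h) hK.le
      · rw [m.supp _ (not_le.1 h)]; simp
    have i1 : IntegrableOn (fun x => K * Q * ε * ρ (y - x)) (Icc (-N) N) := ((m.int_k y).1.const_mul _).integrableOn
    have c1 : Continuous fun x => (ω x • m.k x - ω * m.k x) y :=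
      (BoundedContinuousFunction.evalCLM ℝ y).continuous.comp hκc
    calc _ ≤ ∫ x in Icc (-N) N, K * Q * ε * ρ (y - x) :=
          integral_mono (c1.abs.continuousOn.integrableOn_compact isCompact_Icc) i1 hp
      _ = K * Q * ε * ∫ x in Icc (-N) N, ρ (y - x) := integral_const_mul _ _
      _ ≤ K * Q * ε * 1 := by gcongr; exact m.int_w _ y
      _ = _ := mul_one _)
  set r : ℝ → ℝ := fun x => Λ (ω x • m.k x - ω * m.k x) with hr
  have hrc : Continuous r := Λ.continuous.comp hκc
  -- the equation satisfied by `g`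
  have hJg : ∀ x, J s g x = W2 (φ x) * g x - r x := by
    intro x
    have h0 : Λ (m.JJ s x - ω * m.k x) = 0 := hΛ (m.k x) _
      (m.c2.comp (contDiff_id.sub contDiff_const))
      (by
        have := m.cs.comp_homeomorph (Homeomorph.addRight (-x))
        have e : (ρ ∘ (Homeomorph.addRight (-x))) = m.k x := by
          funext y; simp [sub_eq_add_neg]
        rwa [e] at this) (fun y => by
        simp [Mol.JJ_apply hs, hωa])
    rw [map_sub, m.JJ_dual hs] at h0
    simp only [hr, map_sub, map_smul, smul_eq_mul, hωa, hg]
    linarith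
  -- the equation satisfied by `d`
  set e1 : ℝ → ℝ := fun x => (W1 (φ (x + ε)) - W1 (φ x)) / ε - W2 (φ x) * d x with he1
  have he1c : Continuous e1 := by
    have := L.cont; have := P.cont1; have := P.cont2; simp only [he1]; fun_prop
  have hdeq : d = fun y => (1/ε) * (φ (y + ε) + (-1) * φ y) := by
    funext y; simp only [hd]; ring
  have hGd : ∀ x, Good s d x := by
    intro x; rw [hdeq]
    exact ((L.good_shift hs ε x).add ((L.good hs x).const_mul (-1))).const_mul (1/ε)
  have hJd : ∀ x, J s d x = W2 (φ x) * d x + e1 x := by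
    intro x
    rw [hdeq, J_const_mul, J_add (L.good_shift hs ε x) ((L.good hs x).const_mul (-1)), J_const_mul,
      L.J_shift, L.eq]
    simp only [he1, hd]; ring
  have hd0 : ∀ x, 0 < d x := fun x => div_pos (sub_pos.2 (L.mono (by linarith))) hε
  have hdwt : ∀ x, d x ≤ Q * wt s R x := by
    intro x
    have := (le_abs_self _).trans (Dc.d1 x ε (by rwa [abs_of_pos hε]))
    rw [abs_of_pos hε] at this
    simp only [hd]; rw [div_le_iff₀ hε]; linarith
  have hdQ : ∀ x, d x ≤ Q := fun x => (hdwt x).trans (by nlinarith [wt_le_one hs Dc.hR x])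
  have iwt : Integrable fun x => Q * wt s R x := (wt_integrable hs hR0).const_mul Q
  have idd : Integrable d := iwt.mono' hdc.aestronglyMeasurable
    (Eventually.of_forall fun x => by rw [Real.norm_eq_abs, abs_of_pos (hd0 x)]; exact hdwt x)
  have he1b : ∀ x, |e1 x| ≤ K * Q^2 * ε := by
    intro x
    have h1 := P.taylor (φ (x + ε)) (φ x)
    have e : e1 x = (W1 (φ (x+ε)) - W1 (φ x) - W2 (φ x) * (φ (x+ε) - φ x)) / ε := by
      simp only [he1, hd]; ring
    rw [e, abs_div, abs_of_pos hε, div_le_iff₀ hε]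
    refine h1.trans ?_
    have e2 : φ (x + ε) - φ x = ε * d x := by simp only [hd]; field_simp
    rw [e2]
    have : (d x)^2 ≤ Q^2 := by have := hd0 x; have := hdQ x; gcongr
    nlinarith [mul_nonneg hK.le (sq_nonneg ε)]
  set e : ℝ → ℝ := fun x => g x * e1 x + d x * r x with he
  have hec : Continuous e := by simp only [he]; fun_prop
  have heb : ∀ x, |e x| ≤ K * Q^2 * ε * |g x| + Q * |r x| := by
    intro x
    simp only [he]
    refine (abs_add_le _ _).trans ?_
    rw [abs_mul, abs_mul, abs_of_pos (hd0 x), mul_comm |g x|]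
    have := he1b x; have := hdQ x
    gcongr
  have iE : Integrable fun x => K * Q^2 * ε * |g x| + Q * |r x| := (ig.abs.const_mul _).add (ir.abs.const_mul _)
  have ie : Integrable e := iE.mono' hec.aestronglyMeasurable (Eventually.of_forall heb)
  have bE : ∫ x, |e x| ≤ 2 * K * Q^2 * ‖Λ‖ * ε := by
    calc ∫ x, |e x| ≤ ∫ x, (K * Q^2 * ε * |g x| + Q * |r x|) := integral_mono ie.abs iE heb
      _ = K * Q^2 * ε * (∫ x, |g x|) + Q * ∫ x, |r x| := by
          rw [integral_add (ig.abs.const_mul _) (ir.abs.const_mul _), integral_const_mul, integral_const_mul]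
      _ ≤ K * Q^2 * ε * ‖Λ‖ + Q * (‖Λ‖ * (K * Q * ε)) := by gcongr
      _ = _ := by ring
  obtain ⟨M, hM, hMD⟩ := m.D_bound
  have hgsd : ∀ x z, 0 < z → |sd g x z| ≤ ‖Λ‖ * (M * z^2) ∧ |sd g x z| ≤ ‖Λ‖ * M := by
    intro x z hz
    have e0 : sd g x z = Λ (m.D x z) := by
      simp only [sd, hg, Mol.D, map_sub, map_add, map_smul, smul_eq_mul]
    rw [e0, ← Real.norm_eq_abs]
    obtain ⟨a, b⟩ := hMD x z hz.le
    exact ⟨(Λ.le_opNorm _).trans (by gcongr), (Λ.le_opNorm _).trans (by gcongr)⟩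
  have hdsd : ∀ x z, 0 < z → |sd d x z| ≤ 2 * Q / ε * z^2 := by
    intro x z hz
    have e0 : sd d x z = (sd φ (x + ε) z - sd φ x z) / ε := by
      simp only [sd, hd]
      rw [show x + z + ε = x + ε + z by ring, show x - z + ε = x + ε - z by ring]; ring
    rw [e0, abs_div, abs_of_pos hε, div_mul_eq_mul_div, div_le_div_iff_of_pos_right hε]
    have a := Dc.sd_le hs L (x + ε) hz.le
    have b := Dc.sd_le hs L x hz.le
    have := abs_sub (sd φ (x + ε) z) (sd φ x z)
    linarith
  have en := energy hs hgc hdc ig idd hd0 (A := ‖Λ‖ * M + 2 * Q / ε) (e := e)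
    (fun x z hz => ((hgsd x z hz).1).trans (by
      have : 0 ≤ 2 * Q / ε * z^2 := by positivity
      nlinarith))
    (fun x z hz => (hdsd x z hz).trans (by
      have : 0 ≤ ‖Λ‖ * M * z^2 := by positivity
      nlinarith))
    (fun x => good_of_bound hs hgc one_pos (A := ‖Λ‖ * M) (B := ‖Λ‖ * M)
      (fun z hz => by have := (hgsd x z hz.1).1; linarith)
      (fun z hz => (hgsd x z (by linarith)).2))
    hGd (fun x => by rw [hJd, hJg]; simp only [he]; ring) ie hN
  refine ⟨ig, bg, ?_⟩
  set w : Set (ℝ × ℝ) := Icc (-N) N ×ˢ Icc (-N) N with hw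
  have hwc : IsCompact w := isCompact_Icc.prod isCompact_Icc
  have hse : 0 < √ε := Real.sqrt_pos.2 hε
  have hss : √ε * √ε = ε := Real.mul_self_sqrt hε.le
  set X : ℝ × ℝ → ℝ := fun q => g q.1 * d q.2 - d q.1 * g q.2 with hX
  set p : ℝ → ℝ := fun x => |g x| + d x with hp
  have hp0 : ∀ x, 0 < p x := fun x => by have := hd0 x; simp only [hp]; positivity
  have hpc : Continuous p := by simp only [hp]; fun_prop
  have hXc : Continuous X := by simp only [hX]; fun_prop
  have hYc : Continuous fun q : ℝ × ℝ => X q ^ 2 / (p q.1 * p q.2) :=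
    (hXc.pow 2).div (by fun_prop) fun q => (mul_pos (hp0 _) (hp0 _)).ne'
  have iY : IntegrableOn (fun q : ℝ × ℝ => X q ^ 2 / (p q.1 * p q.2)) w := hYc.continuousOn.integrableOn_compact hwc
  have ip : IntegrableOn (fun q : ℝ × ℝ => p q.1 * p q.2) w :=
    (Continuous.continuousOn (by fun_prop)).integrableOn_compact hwc
  have pw : ∀ q, |X q| ≤ (1/√ε) * (X q ^ 2 / (p q.1 * p q.2)) + √ε * (p q.1 * p q.2) := by
    intro q
    set A := p q.1 * p q.2 with hA
    have hA0 : 0 < A := mul_pos (hp0 _) (hp0 _)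
    have : 0 ≤ (|X q| - √ε * A)^2 := sq_nonneg _
    have hx0 := abs_nonneg (X q)
    rw [show (1/√ε) * (X q ^ 2 / A) + √ε * A = (X q ^2 + (√ε * A)^2) / (√ε * A) by field_simp]
    rw [le_div_iff₀ (by positivity), ← sq_abs (X q)]
    nlinarith [mul_nonneg hx0 (mul_pos hse hA0).le]
  have iXa : IntegrableOn (fun q => |X q|) w := hXc.abs.continuousOn.integrableOn_compact hwc
  have hpp : ∫ q in w, p q.1 * p q.2 ≤ (‖Λ‖ + S)^2 := by
    rw [hw, Measure.volume_eq_prod, setIntegral_prod_mul (μ := volume) (ν := volume) p p, ← sq]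
    have h1 : ∫ x in Icc (-N) N, p x ≤ ‖Λ‖ + S := by
      have ipp : Integrable p := ig.abs.add idd
      calc ∫ x in Icc (-N) N, p x ≤ ∫ x, p x := setIntegral_le_integral ipp (Eventually.of_forall fun x => (hp0 x).le)
        _ = (∫ x, |g x|) + ∫ x, d x := integral_add ig.abs idd
        _ ≤ ‖Λ‖ + S := add_le_add bg (integral_mono idd iwt hdwt)
    have h0 : 0 ≤ ∫ x in Icc (-N) N, p x := integral_nonneg fun x => (hp0 x).le
    gcongr
  calc ∫ q in w, |X q| ≤ ∫ q in w, ((1/√ε) * (X q ^ 2 / (p q.1 * p q.2)) + √ε * (p q.1 * p q.2)) :=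
        integral_mono iXa ((iY.const_mul _).add (ip.const_mul _)) pw
    _ = (1/√ε) * (∫ q in w, X q ^ 2 / (p q.1 * p q.2)) + √ε * ∫ q in w, p q.1 * p q.2 := by
        rw [integral_add (iY.const_mul _) (ip.const_mul _), integral_const_mul, integral_const_mul]
    _ ≤ (1/√ε) * (T * (2 * K * Q^2 * ‖Λ‖ * ε)) + √ε * (‖Λ‖ + S)^2 := by
        gcongr
        exact en.trans (by gcongr)
    _ = _ := by
        have : ε / √ε = √ε := by rw [div_eq_iff hse.ne', hss]
        calc _ = (T * (2 * K * Q^2 * ‖Λ‖)) * (ε / √ε) + √ε * (‖Λ‖ + S)^2 := by ring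
          _ = _ := by rw [this]; ring

end

/-! ### The approximate corrector -/

section
variable {s α K R Q : ℝ} {W1 W2 φ : ℝ → ℝ}

lemma Dec.int_deriv (hs : s ∈ Ioo (0:ℝ) 1) (L : Lay s W1 φ) (Dc : Dec s φ R Q) : Integrable (deriv φ) := by
  have hR0 : 0 < R := by linarith [Dc.hR]
  exact ((wt_integrable hs hR0).const_mul Q).mono' (c2_hasDeriv L.c2).2.2.1.aestronglyMeasurable
    (Eventually.of_forall Dc.p1)

/-- A functional annihilating the range of the linearized operator is a multiple of `φ'`, hence it
kills every decaying function orthogonal to `φ'`. -/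
lemma annih_kills (hs : s ∈ Ioo (0:ℝ) 1) (P : Pot s W1 W2 α K) (L : Lay s W1 φ) (Dc : Dec s φ R Q)
    {Λ : (ℝ →ᵇ ℝ) →L[ℝ] ℝ} (hΛ : Annih s W2 φ Λ) (f : ℝ →ᵇ ℝ) {Lf : ℝ} (hLf : 0 ≤ Lf)
    (hf : ∀ x y, |x - y| ≤ 1 → |f x - f y| ≤ Lf * |x - y|)
    (hf0 : Tendsto f (cocompact ℝ) (nhds 0)) (hfo : ∫ x, f x * deriv φ x = 0) : Λ f = 0 := by
  have hQ := Dc.hQ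
  have hR0 : 0 < R := by linarith [Dc.hR]
  have iwt : Integrable fun x => Q * wt s R x := (wt_integrable hs hR0).const_mul Q
  set S := ∫ x, Q * wt s R x with hS
  have hS0 : 0 ≤ S := integral_nonneg fun x => by have := wt_pos (s := s) hR0 x; positivity
  have iφ := Dc.int_deriv hs L
  have hφc : Continuous (deriv φ) := (c2_hasDeriv L.c2).2.2.1
  set B := ‖f‖ with hB
  have hfB : ∀ x, |f x| ≤ B := fun x => f.norm_coe_le_norm x
  have hB0 : 0 ≤ B := norm_nonneg f
  have hΛ0 : 0 ≤ ‖Λ‖ := norm_nonneg Λ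
  have main : ∀ τ : ℝ, 0 < τ → |Λ f| ≤ 4 * τ * S * ‖Λ‖ := by
    intro τ hτ
    obtain ⟨N₀, hN₀⟩ : ∃ N₀ : ℝ, ∀ x, N₀ < |x| → |f x| ≤ τ := by
      have := hf0.eventually (Metric.ball_mem_nhds (0:ℝ) hτ)
      rw [← Metric.cobounded_eq_cocompact, ← comap_norm_atTop] at this
      obtain ⟨t, ht, h⟩ := this
      obtain ⟨a, ha⟩ := mem_atTop_sets.1 ht
      refine ⟨a, fun x hx => ?_⟩
      have : f x ∈ ball 0 τ := h (ha _ (show ‖x‖ ≥ a from hx.le))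
      rw [mem_ball_zero_iff] at this
      exact this.le
    have hlim : Tendsto (fun N => φ N - φ (-N)) atTop (nhds (1 - 0)) :=
      L.top.sub (L.bot.comp tendsto_neg_atTop_atBot)
    obtain ⟨N, hN1, hN2, hN3⟩ := ((hlim.eventually (lt_mem_nhds (show (1/2:ℝ) < 1 - 0 by norm_num))).and
      ((eventually_gt_atTop 0).and (eventually_ge_atTop (N₀ + 2)))).exists
    obtain ⟨C, hC, hwin⟩ := window hs P L Dc hΛ hN2
    set w := Icc (-N) N with hw
    have hwc : IsCompact w := isCompact_Icc
    have vw : volume.real w = 2 * N := by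
      rw [hw, Real.volume_real_Icc_of_le (by linarith)]; ring
    have hφw : 1/2 ≤ ∫ x in w, deriv φ x := by
      rw [hw, integral_Icc_eq_integral_Ioc, ← intervalIntegral.integral_of_le (by linarith),
        intervalIntegral.integral_eq_sub_of_hasDerivAt (fun x _ => (c2_hasDeriv L.c2).1 x)
          (hφc.intervalIntegrable _ _)]
      exact hN1.le
    have hfφ : |∫ x in w, f x * deriv φ x| ≤ τ * S := by
      have ifφ : Integrable fun x => f x * deriv φ x :=
        iφ.bdd_mul f.continuous.aestronglyMeasurable (Eventually.of_forall hfB)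
      have h1 := integral_add_compl (measurableSet_Icc (a := -N) (b := N)) ifφ
      rw [hfo] at h1
      rw [show ∫ x in w, f x * deriv φ x = -∫ x in wᶜ, f x * deriv φ x by linarith, abs_neg]
      calc |∫ x in wᶜ, f x * deriv φ x| ≤ ∫ x in wᶜ, |f x * deriv φ x| := abs_integral_le_integral_abs
        _ ≤ ∫ x in wᶜ, τ * (Q * wt s R x) := by
            refine setIntegral_mono_on ifφ.abs.integrableOn (iwt.const_mul τ).integrableOn
              measurableSet_Icc.compl fun x hx => ?_
            rw [abs_mul]
            have : |f x| ≤ τ := hN₀ x (by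
              by_contra h
              exact hx (abs_le.1 ((not_lt.1 h).trans (by linarith))))
            have := Dc.p1 x
            gcongr
        _ ≤ ∫ x, τ * (Q * wt s R x) := setIntegral_le_integral (iwt.const_mul τ)
            (Eventually.of_forall fun x => by have := wt_pos (s := s) hR0 x; positivity)
        _ = τ * S := integral_const_mul _ _
    have key : ∀ ε : ℝ, 0 < ε → ε ≤ 1 → |Λ f| * (1/2 - 2 * N * Q * ε) ≤
        B * (C * √ε) + (τ * S + 2 * N * B * Q * ε) * ‖Λ‖ + ‖Λ‖ * (Lf * ε + τ) * S := by
      intro ε hε hε1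
      obtain ⟨ρ, m⟩ := exists_mol hε
      obtain ⟨ig, bg, bX⟩ := hwin ε hε hε1 ρ m
      set g : ℝ → ℝ := fun x => Λ (m.k x) with hg
      set d : ℝ → ℝ := fun x => (φ (x + ε) - φ x) / ε with hd
      have hgc : Continuous g := Λ.continuous.comp m.k_cont
      have hdc : Continuous d := by have := L.cont; simp only [hd]; fun_prop
      have hdφ : ∀ x, |d x - deriv φ x| ≤ Q * ε := fun x => Dc.taylor1 hs L x hε
      have hd0 : ∀ x, 0 ≤ d x := fun x => div_nonneg (sub_nonneg.2 (L.mono (by linarith)).le) hε.le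
      have hdwt : ∀ x, d x ≤ Q * wt s R x := by
        intro x
        have := (le_abs_self _).trans (Dc.d1 x ε (by rwa [abs_of_pos hε]))
        rw [abs_of_pos hε] at this
        simp only [hd]; rw [div_le_iff₀ hε]; linarith
      have icw : ∀ {h : ℝ → ℝ}, Continuous h → IntegrableOn h w := fun h =>
        h.continuousOn.integrableOn_compact hwc
      -- `f` is recovered from its mollification
      have hpair : |Λ f - ∫ x in w, f x * g x| ≤ ‖Λ‖ * (Lf * ε + τ) := by
        refine pairing Λ m.k_cont f.continuous.measurable hfB N f (by positivity) fun y => ?_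
        have i1 := (m.int_k y).1
        have i2 : Integrable fun x => w.indicator (fun x => f x * ρ (y - x)) x := by
          refine IntegrableOn.integrable_indicator ?_ measurableSet_Icc
          exact (i1.bdd_mul f.continuous.aestronglyMeasurable (Eventually.of_forall hfB)).integrableOn
        have e1 : f y - ∫ x in w, f x * m.k x y =
            ∫ x, (f y * ρ (y - x) - w.indicator (fun x => f x * ρ (y - x)) x) := by
          rw [integral_sub (i1.const_mul _) i2, integral_const_mul, (m.int_k y).2, mul_one,
            integral_indicator measurableSet_Icc]
          rfl
        rw [e1]
        calc _ ≤ ∫ x, |f y * ρ (y - x) - w.indicator (fun x => f x * ρ (y - x)) x| := abs_integral_le_integral_abs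
          _ ≤ ∫ x, (Lf * ε + τ) * ρ (y - x) := by
              refine integral_mono ((i1.const_mul _).sub i2).abs (i1.const_mul _) fun x => ?_
              have hρ := m.nonneg (y - x)
              by_cases h : |y - x| ≤ ε
              · by_cases hx : x ∈ w
                · simp only [indicator_of_mem hx]
                  rw [← sub_mul, abs_mul, abs_of_nonneg hρ]
                  refine mul_le_mul_of_nonneg_right ?_ hρ
                  refine (hf y x (h.trans hε1)).trans ?_
                  have := mul_le_mul_of_nonneg_left h hLf
                  linarith
                · simp only [indicator_of_notMem hx, sub_zero]
                  rw [abs_mul, abs_of_nonneg hρ]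
                  refine mul_le_mul_of_nonneg_right ?_ hρ
                  have h1 : N < |x| := by
                    by_contra h; exact hx (abs_le.1 (not_lt.1 h))
                  have h2 : |f y| ≤ τ := hN₀ y (by
                    have := abs_sub_abs_le_abs_sub x y
                    rw [abs_sub_comm] at this; linarith)
                  have : 0 ≤ Lf * ε := by positivity
                  linarith
              · have h0 := m.supp _ (not_le.1 h)
                simp [h0, indicator]
          _ = Lf * ε + τ := by rw [integral_const_mul, (m.int_k y).2, mul_one]
      -- integrate `f(x)` against the cross term
      have hcross : |(∫ x in w, f x * g x) * (∫ x in w, d x) - (∫ x in w, f x * d x) * ∫ x in w, g x|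
          ≤ B * (C * √ε) := by
        have hfc := f.continuous
        have e1 : (∫ x in w, f x * g x) * (∫ x in w, d x) - (∫ x in w, f x * d x) * ∫ x in w, g x =
            ∫ q in w ×ˢ w, f q.1 * (g q.1 * d q.2 - d q.1 * g q.2) := by
          rw [Measure.volume_eq_prod, ← setIntegral_prod_mul (μ := volume) (ν := volume) (fun x => f x * g x) d,
            ← setIntegral_prod_mul (μ := volume) (ν := volume) (fun x => f x * d x) g,
            ← integral_sub]
          · refine integral_congr_ae (Eventually.of_forall fun q => ?_)
            simp only []; ring
          · exact (Continuous.continuousOn (by fun_prop)).integrableOn_compact (hwc.prod hwc)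
          · exact (Continuous.continuousOn (by fun_prop)).integrableOn_compact (hwc.prod hwc)
        rw [e1]
        have ia : IntegrableOn (fun q : ℝ × ℝ => |g q.1 * d q.2 - d q.1 * g q.2|) (w ×ˢ w) :=
          (Continuous.continuousOn (by fun_prop)).integrableOn_compact (hwc.prod hwc)
        calc _ ≤ ∫ q in w ×ˢ w, |f q.1 * (g q.1 * d q.2 - d q.1 * g q.2)| := abs_integral_le_integral_abs
          _ ≤ ∫ q in w ×ˢ w, B * |g q.1 * d q.2 - d q.1 * g q.2| := by
              refine integral_mono ?_ (ia.const_mul B) fun q => ?_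
              · exact (Continuous.continuousOn (by fun_prop)).integrableOn_compact (hwc.prod hwc)
              · simp only []
                rw [abs_mul]
                exact mul_le_mul_of_nonneg_right (hfB _) (abs_nonneg _)
          _ = B * ∫ q in w ×ˢ w, |g q.1 * d q.2 - d q.1 * g q.2| := integral_const_mul _ _
          _ ≤ B * (C * √ε) := by gcongr
      have hdS : ∫ x in w, d x ≤ S := by
        calc ∫ x in w, d x ≤ ∫ x in w, Q * wt s R x := integral_mono (icw hdc) iwt.integrableOn hdwt
          _ ≤ S := setIntegral_le_integral iwt (Eventually.of_forall fun x => by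
              have := wt_pos (s := s) hR0 x; positivity)
      have hdd0 : 0 ≤ ∫ x in w, d x := integral_nonneg hd0
      have hgS : |∫ x in w, g x| ≤ ‖Λ‖ :=
        (abs_integral_le_integral_abs).trans ((setIntegral_le_integral ig.abs
          (Eventually.of_forall fun x => abs_nonneg _)).trans bg)
      have hclose : ∀ {h : ℝ → ℝ}, Continuous h → ∀ b, (∀ x, |h x| ≤ b) →
          |(∫ x in w, h x * d x) - ∫ x in w, h x * deriv φ x| ≤ 2 * N * b * Q * ε := by
        intro h hh b hb
        rw [← integral_sub (icw (by fun_prop)) (icw (by fun_prop))]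
        have := norm_setIntegral_le_of_norm_le_const (s := w) (μ := volume) (C := b * (Q * ε))
          (f := fun x => h x * d x - h x * deriv φ x) (by exact hwc.measure_lt_top) (fun x _ => by
          rw [← mul_sub, Real.norm_eq_abs, abs_mul]
          have := hb x; have := hdφ x; have hb0 := (abs_nonneg _).trans (hb x)
          gcongr)
        rw [vw] at this
        exact this.trans (le_of_eq (by ring))
      have hd1 : 1/2 - 2 * N * Q * ε ≤ ∫ x in w, d x := by
        have := (abs_le.1 (hclose (h := fun _ => 1) continuous_const 1 (fun _ => by simp))).1
        simp only [one_mul, mul_one] at this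
        linarith
      have hd2 : |∫ x in w, f x * d x| ≤ τ * S + 2 * N * B * Q * ε := by
        have := hclose f.continuous B hfB
        have h3 := abs_sub_abs_le_abs_sub (∫ x in w, f x * d x) (∫ x in w, f x * deriv φ x)
        linarith
      set a := ∫ x in w, f x * g x
      set b := ∫ x in w, d x
      set c := ∫ x in w, f x * d x
      set l := ∫ x in w, g x
      have h1 : |a| * b ≤ B * (C * √ε) + (τ * S + 2 * N * B * Q * ε) * ‖Λ‖ := by
        have h2 : |c * l| ≤ (τ * S + 2 * N * B * Q * ε) * ‖Λ‖ := by
          rw [abs_mul]; gcongr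
        have h3 := abs_sub_abs_le_abs_sub (a * b) (c * l)
        rw [abs_mul a b, abs_of_nonneg hdd0] at h3
        linarith
      have h2 : |Λ f| ≤ |a| + ‖Λ‖ * (Lf * ε + τ) := by
        have := abs_sub_abs_le_abs_sub (Λ f) a; linarith
      calc |Λ f| * (1/2 - 2 * N * Q * ε) ≤ |Λ f| * b := by gcongr
        _ ≤ (|a| + ‖Λ‖ * (Lf * ε + τ)) * b := by gcongr
        _ = |a| * b + ‖Λ‖ * (Lf * ε + τ) * b := by ring
        _ ≤ _ := by
          have : ‖Λ‖ * (Lf * ε + τ) * b ≤ ‖Λ‖ * (Lf * ε + τ) * S := by gcongr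
          linarith
    have lim := le_of_tendsto_of_tendsto (b := nhdsWithin (0:ℝ) (Ioi 0))
      (f := fun ε => |Λ f| * (1/2 - 2 * N * Q * ε))
      (g := fun ε => B * (C * √ε) + (τ * S + 2 * N * B * Q * ε) * ‖Λ‖ + ‖Λ‖ * (Lf * ε + τ) * S)
      (Continuous.tendsto (by fun_prop) 0 |>.mono_left nhdsWithin_le_nhds)
      (Continuous.tendsto (by fun_prop) 0 |>.mono_left nhdsWithin_le_nhds) (by
        filter_upwards [Ioc_mem_nhdsGT (show (0:ℝ) < 1 by norm_num)] with ε hε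
        exact key ε hε.1 hε.2)
    simp only [mul_zero, sub_zero, Real.sqrt_zero, add_zero, zero_add] at lim
    linarith
  have h0 : |Λ f| ≤ 0 := by
    refine ge_of_tendsto (x := nhdsWithin (0:ℝ) (Ioi 0)) (f := fun τ => 4 * τ * S * ‖Λ‖) ?_
      (eventually_mem_nhdsWithin.mono fun τ hτ => main τ hτ)
    have : Tendsto (fun τ : ℝ => 4 * τ * S * ‖Λ‖) (nhds 0) (nhds (4 * 0 * S * ‖Λ‖)) :=
      Continuous.tendsto (by fun_prop) 0
    simp only [mul_zero, zero_mul] at this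
    exact this.mono_left nhdsWithin_le_nhds
  exact abs_nonpos_iff.1 h0

/-- Hahn–Banach: decaying right-hand sides orthogonal to `φ'` are uniform limits of
`J ψ - W''(φ) ψ` with `ψ` compactly supported. -/
lemma approx_solve (hs : s ∈ Ioo (0:ℝ) 1) (P : Pot s W1 W2 α K) (L : Lay s W1 φ) (Dc : Dec s φ R Q)
    (f : ℝ →ᵇ ℝ) {Lf : ℝ} (hLf : 0 ≤ Lf) (hf : ∀ x y, |x - y| ≤ 1 → |f x - f y| ≤ Lf * |x - y|)
    (hf0 : Tendsto f (cocompact ℝ) (nhds 0)) (hfo : ∫ x, f x * deriv φ x = 0) {η : ℝ} (hη : 0 < η) :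
    ∃ ψ : ℝ → ℝ, ContDiff ℝ 2 ψ ∧ HasCompactSupport ψ ∧ ∀ x, |J s ψ x - W2 (φ x) * ψ x - f x| ≤ η := by
  let V : Submodule ℝ (ℝ →ᵇ ℝ) :=
    { carrier := {F | ∃ ψ : ℝ → ℝ, ContDiff ℝ 2 ψ ∧ HasCompactSupport ψ ∧ ∀ x, F x = J s ψ x - W2 (φ x) * ψ x}
      add_mem' := by
        rintro F G ⟨ψ, h1, h2, h3⟩ ⟨χ, h1', h2', h3'⟩
        refine ⟨fun x => ψ x + χ x, h1.add h1', h2.add h2', fun x => ?_⟩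
        obtain ⟨M, hM⟩ := h1.continuous.bounded_above_of_compact_support h2
        obtain ⟨M', hM'⟩ := h1'.continuous.bounded_above_of_compact_support h2'
        rw [J_add (good_of_c2 hs h1 hM x) (good_of_c2 hs h1' hM' x), BoundedContinuousFunction.coe_add,
          Pi.add_apply, h3, h3']
        ring
      zero_mem' := ⟨fun _ => 0, contDiff_const, HasCompactSupport.zero, fun x => by simp [J, sd]⟩
      smul_mem' := by
        rintro c F ⟨ψ, h1, h2, h3⟩
        refine ⟨fun x => c * ψ x, contDiff_const.mul h1, h2.mul_left, fun x => ?_⟩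
        change c * F x = _
        rw [J_const_mul, h3]; ring }
  have hcl : f ∈ closure (V : Set (ℝ →ᵇ ℝ)) := by
    by_contra hn
    rw [← Submodule.topologicalClosure_coe] at hn
    obtain ⟨Λ, u, hu1, hu2⟩ := geometric_hahn_banach_point_closed
      (Submodule.convex (𝕜 := ℝ) V.topologicalClosure) V.isClosed_topologicalClosure hn
    have hV : ∀ F ∈ V, Λ F = 0 := by
      intro F hF
      by_contra hne
      have := hu2 (((u - 1) / Λ F) • F) (V.topologicalClosure.smul_mem _ (V.le_topologicalClosure hF))
      rw [map_smul, smul_eq_mul, div_mul_cancel₀ _ hne] at this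
      linarith
    have hz := annih_kills hs P L Dc (Λ := Λ) (fun ψ F h1 h2 h3 => hV F ⟨ψ, h1, h2, h3⟩) f hLf hf hf0 hfo
    have := hu2 0 (V.topologicalClosure.zero_mem)
    rw [map_zero] at this
    linarith
  obtain ⟨F, ⟨ψ, h1, h2, h3⟩, hF⟩ := Metric.mem_closure_iff.1 hcl η hη
  refine ⟨ψ, h1, h2, fun x => ?_⟩
  rw [← h3, ← Real.dist_eq, dist_comm]
  exact (BoundedContinuousFunction.dist_coe_le_dist x).trans hF.le

lemma Dec.int_sq_pos (hs : s ∈ Ioo (0:ℝ) 1) (L : Lay s W1 φ) (Dc : Dec s φ R Q) :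
    Integrable (fun x => deriv φ x ^ 2) ∧ 0 < ∫ x, deriv φ x ^ 2 := by
  have hc := (c2_hasDeriv L.c2).2.2.1
  have hi : Integrable (fun x => deriv φ x ^ 2) := by
    have := (Dc.int_deriv hs L).bdd_mul (c := Q) hc.aestronglyMeasurable (Eventually.of_forall fun x =>
      (Dc.p1 x).trans (by nlinarith [wt_le_one hs Dc.hR x, Dc.hQ]))
    simpa [sq] using this
  refine ⟨hi, ?_⟩
  refine (integral_pos_iff_support_of_nonneg (fun x => sq_nonneg _) hi).2 ?_
  have : Function.support (fun x => deriv φ x ^ 2) = univ := by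
    ext x; simp [(L.dpos x).ne']
  rw [this]; simp

lemma Dec.omega_tendsto (hs : s ∈ Ioo (0:ℝ) 1) (P : Pot s W1 W2 α K) (L : Lay s W1 φ) :
    Tendsto (fun x => W2 (φ x)) (cocompact ℝ) (nhds α) := by
  have h0 : Tendsto (fun x => W2 (φ x)) atBot (nhds α) := by
    rw [← P.at0]; exact (P.cont2.tendsto 0).comp L.bot
  have h1 : Tendsto (fun x => W2 (φ x)) atTop (nhds α) := by
    have := (P.cont2.tendsto 1).comp L.top
    rwa [← P.sub_one2 1, sub_self, P.at0] at this
  rw [cocompact_eq_atBot_atTop]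
  exact h0.sup h1

/-- The approximate corrector. -/
lemma approx_corrector (hs : s ∈ Ioo (0:ℝ) 1) (P : Pot s W1 W2 α K) (L : Lay s W1 φ) (Dc : Dec s φ R Q)
    (l : ℝ) {η : ℝ} (hη : 0 < η) :
    ∃ ψ : ℝ → ℝ, ContDiff ℝ 2 ψ ∧ HasCompactSupport ψ ∧ ∀ x, |J s ψ x - W2 (φ x) * ψ x -
      (l / α * (W2 (φ x) - α) + l / (∫ y, deriv φ y ^ 2) * deriv φ x)| ≤ η := by
  obtain ⟨h1, h2, c1, c2⟩ := c2_hasDeriv L.c2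
  obtain ⟨iφ2, hpos⟩ := Dc.int_sq_pos hs L
  have iφ := Dc.int_deriv hs L
  have hα := P.pos
  have hK := P.K_pos
  have hQ := Dc.hQ
  set I := ∫ y, deriv φ y ^ 2 with hI
  have hω : Continuous fun x => W2 (φ x) := P.cont2.comp L.cont
  set f0 : ℝ → ℝ := fun x => l / α * (W2 (φ x) - α) + l / I * deriv φ x with hf0
  have hd1 : ∀ x, |deriv φ x| ≤ Q := fun x =>
    (Dc.p1 x).trans (by nlinarith [wt_le_one hs Dc.hR x, Dc.hQ])
  have hd2 : ∀ x, |deriv (deriv φ) x| ≤ Q := fun x =>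
    (Dc.p2 x).trans (by nlinarith [wt_le_one hs Dc.hR x, Dc.hQ])
  let f : ℝ →ᵇ ℝ := BoundedContinuousFunction.ofNormedAddCommGroup f0
    ((continuous_const.mul (hω.sub continuous_const)).add (continuous_const.mul c1))
    (|l / α| * (K + α) + |l / I| * Q) (fun x => by
      simp only [hf0, Real.norm_eq_abs]
      refine (abs_add_le _ _).trans ?_
      rw [abs_mul, abs_mul]
      have := hd1 x
      have := (abs_sub (W2 (φ x)) α).trans (add_le_add (P.bd _) (abs_of_pos hα).le)
      gcongr)
  refine approx_solve hs P L Dc f (Lf := |l / α| * (K * Q) + |l / I| * Q) (by positivity) ?_ ?_ ?_ hη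
  · intro x y _
    change |f0 x - f0 y| ≤ _
    have lφ : |φ x - φ y| ≤ Q * |x - y| := Convex.norm_image_sub_le_of_norm_deriv_le (f := φ) (s := univ)
      (fun y _ => (h1 y).differentiableAt) (fun y _ => hd1 y) convex_univ trivial trivial
    have lφ' : |deriv φ x - deriv φ y| ≤ Q * |x - y| := Convex.norm_image_sub_le_of_norm_deriv_le
      (f := deriv φ) (s := univ)
      (fun y _ => (h2 y).differentiableAt) (fun y _ => hd2 y) convex_univ trivial trivial
    have e : f0 x - f0 y = l / α * (W2 (φ x) - W2 (φ y)) + l / I * (deriv φ x - deriv φ y) := by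
      simp only [hf0]; ring
    rw [e]
    refine (abs_add_le _ _).trans ?_
    rw [abs_mul, abs_mul, add_mul, mul_assoc, mul_assoc |l / I|, mul_assoc K]
    have := (P.lip (φ x) (φ y)).trans (mul_le_mul_of_nonneg_left lφ hK.le)
    gcongr
  · change Tendsto f0 _ _
    have t1 := Dec.omega_tendsto hs P L
    have t2 : Tendsto (deriv φ) (cocompact ℝ) (nhds 0) := by
      have hR0 : 0 < R := by linarith [Dc.hR]
      have hw : Tendsto (fun x => Q * wt s R x) (cocompact ℝ) (nhds (Q * 0)) := by
        refine Tendsto.const_mul Q ?_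
        unfold wt
        refine (tendsto_rpow_neg_atTop (show 0 < 1 + 2*s by linarith [hs.1])).comp ?_
        exact tendsto_atTop_add_const_left _ _ tendsto_norm_cocompact_atTop
      rw [mul_zero] at hw
      exact squeeze_zero_norm Dc.p1 hw
    have := ((t1.sub_const α).const_mul (l / α)).add (t2.const_mul (l / I))
    simpa using this
  · change ∫ x, f0 x * deriv φ x = 0
    have iω : Integrable fun x => W2 (φ x) * deriv φ x :=
      iφ.bdd_mul hω.aestronglyMeasurable (Eventually.of_forall fun x => P.bd _)
    have e1 : ∫ x, W2 (φ x) * deriv φ x = 0 := by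
      have := integral_of_hasDerivAt_of_tendsto (f := fun x => W1 (φ x)) (f' := fun x => W2 (φ x) * deriv φ x)
        (m := 0) (n := 0) (fun x => (P.d1 (φ x)).comp x (h1 x)) iω ?_ ?_
      · simpa using this
      · have := (P.cont1.tendsto 0).comp L.bot
        rwa [P.zero] at this
      · have := (P.cont1.tendsto 1).comp L.top
        rwa [P.one] at this
    have e2 : ∫ x, deriv φ x = 1 := by
      have := integral_of_hasDerivAt_of_tendsto (f := φ) (f' := deriv φ) h1 iφ L.bot L.top
      simpa using this
    have e3 : ∀ x, f0 x * deriv φ x = l / α * (W2 (φ x) * deriv φ x) - l * deriv φ x + l / I * deriv φ x ^ 2 := by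
      intro x; simp only [hf0]; field_simp
    simp only [e3]
    have i3 : Integrable fun x => l / α * (W2 (φ x) * deriv φ x) - l * deriv φ x :=
      (iω.const_mul _).sub (iφ.const_mul _)
    rw [integral_add i3 (iφ2.const_mul _),
      integral_sub (iω.const_mul _) (iφ.const_mul _), integral_const_mul, integral_const_mul,
      integral_const_mul, e1, e2, ← hI, div_mul_cancel₀ _ hpos.ne']
    ring

end

/-! ### Periodic superpositions of a transition profile -/

/-- `Φ` is a bounded `C²` transition profile from `0` to `1` with algebraically decaying derivatives
and an algebraically small antisymmetry defect. -/
structure Prof (s : ℝ) (Φ : ℝ → ℝ) (R Q : ℝ) : Prop where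
  hs : s ∈ Ioo (0:ℝ) 1
  hR : 1 ≤ R
  hQ : 0 < Q
  c2 : ContDiff ℝ 2 Φ
  bd : ∀ x, |Φ x| ≤ Q
  p1 : ∀ x, |deriv Φ x| ≤ Q * wt s R x
  p2 : ∀ x, |deriv (deriv Φ) x| ≤ Q * wt s R x
  sym : ∀ x, |Φ x + Φ (-x) - 1| ≤ Q * wt s R x
  bot : Tendsto Φ atBot (nhds 0)
  top : Tendsto Φ atTop (nhds 1)

lemma wt_shift {s R : ℝ} (hs : s ∈ Ioo (0:ℝ) 1) (hR : 1 ≤ R) {a b : ℝ} (hab : |a| ≤ b) (y : ℝ) :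
    wt s R (a + y) ≤ (R + b) ^ (1 + 2*s) * wt s R y := by
  have hs0 := hs.1
  have h0 : 0 ≤ b := (abs_nonneg a).trans hab
  have ha := abs_nonneg (a + y)
  have h1 : R + |y| ≤ (R + b) * (R + |a + y|) := by
    have : |y| ≤ |a + y| + |a| := by
      have := abs_sub (a + y) a; rwa [add_sub_cancel_left] at this
    nlinarith [mul_nonneg h0 ha]
  unfold wt
  have p1 : 0 < R + |y| := by positivity
  have p2 : 0 < R + b := by linarith
  have p3 : 0 < R + |a + y| := by linarith
  have h2 := Real.rpow_le_rpow p1.le h1 (by linarith : 0 ≤ 1 + 2*s)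
  rw [Real.mul_rpow p2.le p3.le] at h2
  rw [Real.rpow_neg p3.le, Real.rpow_neg p1.le]
  have q1 := Real.rpow_pos_of_pos p1 (1 + 2*s)
  have q3 := Real.rpow_pos_of_pos p3 (1 + 2*s)
  rw [← div_eq_mul_inv, inv_eq_one_div, div_le_div_iff₀ q3 q1]
  linarith

lemma wt_sum {s R ε : ℝ} (hs : s ∈ Ioo (0:ℝ) 1) (hR : 1 ≤ R) (hε : 0 < ε) :
    ∃ B, 0 ≤ B ∧ ∀ (n : ℕ) (z : ℝ), ∑ i ∈ Finset.range n, wt s R ((z - (i + 1)) / ε) ≤ B := by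
  have hR0 : 0 < R := by linarith
  set G : ℝ → ℝ := fun t => wt s R (t / ε) with hG
  have hGc : Continuous G := (wt_continuous hR0).comp (continuous_id.div_const ε)
  have iG : Integrable G := (wt_integrable hs hR0).comp_div hε.ne'
  have hG0 : ∀ t, 0 ≤ G t := fun t => (wt_pos hR0 _).le
  set C := (R + 1/ε) ^ (1 + 2*s) with hC
  have hC0 : 0 ≤ C := by positivity
  refine ⟨C * ∫ t, G t, mul_nonneg hC0 (integral_nonneg hG0), fun n z => ?_⟩
  have hz : Continuous fun t => G (z - t) := hGc.comp (continuous_const.sub continuous_id)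
  calc ∑ i ∈ Finset.range n, wt s R ((z - (i + 1)) / ε)
      ≤ ∑ i ∈ Finset.range n, ∫ t in (i:ℝ)..((i+1:ℕ):ℝ), C * G (z - t) := by
        refine Finset.sum_le_sum fun i _ => ?_
        have h1 : ∫ t in (i:ℝ)..((i+1:ℕ):ℝ), wt s R ((z - (i + 1)) / ε) = wt s R ((z - (i + 1)) / ε) := by
          simp
        rw [← h1]
        refine intervalIntegral.integral_mono_on (by push_cast; linarith) (by simp)
          ((hz.const_mul C).intervalIntegrable _ _) fun t ht => ?_
        push_cast at ht
        have e : (z - (i + 1)) / ε = (t - (i + 1)) / ε + (z - t) / ε := by ring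
        rw [e]
        refine wt_shift hs hR ?_ _
        rw [abs_div, abs_of_pos hε]
        gcongr
        rw [abs_le]; constructor <;> linarith [ht.1, ht.2]
    _ = ∫ t in ((0:ℕ):ℝ)..(n:ℝ), C * G (z - t) :=
        intervalIntegral.sum_integral_adjacent_intervals (a := fun i : ℕ => (i:ℝ))
          fun i _ => (hz.const_mul C).intervalIntegrable _ _
    _ ≤ ∫ t, C * G (z - t) := by
        rw [intervalIntegral.integral_of_le (by simp)]
        exact setIntegral_le_integral ((iG.comp_sub_left z).const_mul C)
          (Eventually.of_forall fun t => mul_nonneg hC0 (hG0 _))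
    _ = C * ∫ t, G t := by rw [integral_const_mul, integral_sub_left_eq_self G volume z]

/-- The pair of transitions at distance `i + 1` from the origin, normalized to be small near `0`. -/
noncomputable def T (ε : ℝ) (Φ : ℝ → ℝ) (i : ℕ) (x : ℝ) : ℝ :=
  Φ ((x - (i + 1)) / ε) + Φ ((x + (i + 1)) / ε) - 1

/-- The superposition of the rescaled profiles centred at all integers. -/
noncomputable def HH (ε : ℝ) (Φ : ℝ → ℝ) (x : ℝ) : ℝ := Φ (x / ε) + ∑' i, T ε Φ i x

/-- First derivative of `T ε Φ i`. -/
noncomputable def T1 (ε : ℝ) (Φ : ℝ → ℝ) (i : ℕ) (x : ℝ) : ℝ :=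
  (deriv Φ ((x - (i + 1)) / ε) + deriv Φ ((x + (i + 1)) / ε)) / ε

/-- Second derivative of `T ε Φ i`. -/
noncomputable def T2 (ε : ℝ) (Φ : ℝ → ℝ) (i : ℕ) (x : ℝ) : ℝ :=
  (deriv (deriv Φ) ((x - (i + 1)) / ε) + deriv (deriv Φ) ((x + (i + 1)) / ε)) / ε / ε

namespace Prof
variable {s : ℝ} {Φ : ℝ → ℝ} {R Q ε : ℝ}

lemma hR0 (p : Prof s Φ R Q) : 0 < R := by linarith [p.hR]

lemma lip (p : Prof s Φ R Q) (a y : ℝ) {b : ℝ} (hb : |a| ≤ b) :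
    |Φ (a + y) - Φ y| ≤ Q * |a| * ((R + b) ^ (1 + 2*s) * wt s R y) := by
  have hQ := p.hQ
  have h := Convex.norm_image_sub_le_of_norm_deriv_le (f := Φ) (s := uIcc y (a + y))
    (C := Q * ((R + b) ^ (1 + 2*s) * wt s R y)) (x := y) (y := a + y)
    (fun t _ => ((c2_hasDeriv p.c2).1 t).differentiableAt) (fun t ht => by
      refine (p.p1 t).trans ?_
      gcongr
      have : t = (t - y) + y := by ring
      rw [this]
      refine wt_shift p.hs p.hR ?_ y
      refine le_trans ?_ hb
      have := abs_sub_left_of_mem_uIcc ht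
      simpa using this) (convex_uIcc _ _) left_mem_uIcc right_mem_uIcc
  simp only [Real.norm_eq_abs, add_sub_cancel_right] at h
  linarith

lemma pairS (p : Prof s Φ R Q) (a y : ℝ) {b : ℝ} (hb : |a| ≤ b) :
    |Φ (a + y) + Φ (a - y) - 1| ≤ Q * (1 + 2 * b) * (R + b) ^ (1 + 2*s) * wt s R y := by
  have h1 := p.lip a y hb
  have h2 := p.lip a (-y) hb
  have h3 := p.sym y
  rw [wt_neg, ← sub_eq_add_neg] at h2
  have hw := (wt_pos (s := s) p.hR0 y)
  have hb0 : 0 ≤ b := (abs_nonneg a).trans hb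
  have h1b : (1:ℝ) ≤ (R + b) ^ (1 + 2*s) := Real.one_le_rpow (by linarith [p.hR]) (by linarith [p.hs.1])
  have hQ := p.hQ
  have e : Φ (a + y) + Φ (a - y) - 1 = (Φ y + Φ (-y) - 1) + (Φ (a + y) - Φ y) + (Φ (a - y) - Φ (-y)) := by ring
  rw [e]
  set D := (R + b) ^ (1 + 2*s)
  have h4 : Q * |a| * (D * wt s R y) ≤ Q * b * (D * wt s R y) := by gcongr
  have h5 : Q * wt s R y ≤ Q * D * wt s R y := by
    have : Q * 1 * wt s R y ≤ Q * D * wt s R y := by gcongr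
    linarith
  calc _ ≤ |Φ y + Φ (-y) - 1| + |Φ (a + y) - Φ y| + |Φ (a - y) - Φ (-y)| := abs_add_three _ _ _
    _ ≤ _ := by nlinarith

lemma cont (p : Prof s Φ R Q) : Continuous Φ := p.c2.continuous

lemma T_der (p : Prof s Φ R Q) (ε : ℝ) (i : ℕ) (x : ℝ) : HasDerivAt (T ε Φ i) (T1 ε Φ i x) x := by
  have h1 : HasDerivAt (fun x : ℝ => (x - (i+1)) / ε) (1/ε) x := ((hasDerivAt_id x).sub_const _).div_const ε
  have h2 : HasDerivAt (fun x : ℝ => (x + (i+1)) / ε) (1/ε) x := ((hasDerivAt_id x).add_const _).div_const ε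
  have := (((c2_hasDeriv p.c2).1 _).comp x h1).add (((c2_hasDeriv p.c2).1 _).comp x h2)
  exact (this.sub_const 1).congr_deriv (by unfold T1; ring)

lemma T1_der (p : Prof s Φ R Q) (ε : ℝ) (i : ℕ) (x : ℝ) : HasDerivAt (T1 ε Φ i) (T2 ε Φ i x) x := by
  have h1 : HasDerivAt (fun x : ℝ => (x - (i+1)) / ε) (1/ε) x := ((hasDerivAt_id x).sub_const _).div_const ε
  have h2 : HasDerivAt (fun x : ℝ => (x + (i+1)) / ε) (1/ε) x := ((hasDerivAt_id x).add_const _).div_const ε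
  have := (((c2_hasDeriv p.c2).2.1 _).comp x h1).add (((c2_hasDeriv p.c2).2.1 _).comp x h2)
  exact (this.div_const ε).congr_deriv (by unfold T2; ring)

lemma T_cont (p : Prof s Φ R Q) (ε : ℝ) (i : ℕ) : Continuous (T ε Φ i) := by
  have := p.cont; unfold T; fun_prop

lemma T2_cont (p : Prof s Φ R Q) (ε : ℝ) (i : ℕ) : Continuous (T2 ε Φ i) := by
  have := (c2_hasDeriv p.c2).2.2.2; unfold T2; fun_prop

lemma v_summable (p : Prof s Φ R Q) (hε : 0 < ε) : Summable fun i : ℕ => wt s R ((i + 1) / ε) := by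
  obtain ⟨B, -, hB⟩ := wt_sum p.hs p.hR hε
  refine summable_of_sum_range_le (c := B) (fun i => (wt_pos p.hR0 _).le) fun n => ?_
  refine le_trans (le_of_eq ?_) (hB n 0)
  refine Finset.sum_congr rfl fun i _ => ?_
  rw [← wt_neg]; congr 1; ring

/-- Locally uniform bounds for the terms of the superposition. -/
lemma T_bounds (p : Prof s Φ R Q) (hε : 0 < ε) (X : ℝ) : ∃ C, 0 ≤ C ∧ ∀ x, |x| ≤ X → ∀ i : ℕ,
    |T ε Φ i x| ≤ C * wt s R ((i + 1) / ε) ∧ |T1 ε Φ i x| ≤ C * wt s R ((i + 1) / ε) ∧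
    |T2 ε Φ i x| ≤ C * wt s R ((i + 1) / ε) := by
  by_cases hX : 0 ≤ X
  swap
  · exact ⟨0, le_rfl, fun x hx => absurd ((abs_nonneg x).trans hx) hX⟩
  have hQ := p.hQ
  have hR := p.hR0
  set b := X / ε with hb
  have hb0 : 0 ≤ b := by positivity
  set D := (R + b) ^ (1 + 2*s) with hD
  have hD0 : 0 < D := by positivity
  refine ⟨Q * (1 + 2*b) * D + 2 * Q * D / ε + 2 * Q * D / ε / ε, by positivity, fun x hx i => ?_⟩
  have hw := wt_pos (s := s) p.hR0 ((i + 1) / ε)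
  set w := wt s R ((i + 1) / ε) with hww
  have ha : |x / ε| ≤ b := by
    rw [hb, abs_div, abs_of_pos hε]; exact div_le_div_of_nonneg_right hx hε.le
  have e1 : (x - (i + 1)) / ε = x / ε + -((i + 1) / ε) := by ring
  have e2 : (x + (i + 1)) / ε = x / ε + (i + 1) / ε := by ring
  have w1 : wt s R ((x - (i + 1)) / ε) ≤ D * w := by
    rw [e1]; have := wt_shift p.hs p.hR ha (-((i + 1) / ε)); rwa [wt_neg] at this
  have w2 : wt s R ((x + (i + 1)) / ε) ≤ D * w := by
    rw [e2]; exact wt_shift p.hs p.hR ha _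
  have q1 : 0 ≤ Q * (1 + 2*b) * D * w := by positivity
  have q2 : 0 ≤ 2 * Q * D / ε * w := by positivity
  have q3 : 0 ≤ 2 * Q * D / ε / ε * w := by positivity
  refine ⟨?_, ?_, ?_⟩
  · have := p.pairS (x / ε) ((i + 1) / ε) ha
    have e : T ε Φ i x = Φ (x / ε + (i + 1) / ε) + Φ (x / ε - (i + 1) / ε) - 1 := by
      unfold T; rw [e1, e2, ← sub_eq_add_neg]; ring
    rw [e]
    nlinarith
  · unfold T1
    rw [abs_div, abs_of_pos hε]
    have h3 : |deriv Φ ((x - (i + 1)) / ε) + deriv Φ ((x + (i + 1)) / ε)| ≤ 2 * Q * D * w := by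
      refine (abs_add_le _ _).trans ?_
      have h1 := (p.p1 ((x - (i + 1)) / ε)).trans (mul_le_mul_of_nonneg_left w1 hQ.le)
      have h2 := (p.p1 ((x + (i + 1)) / ε)).trans (mul_le_mul_of_nonneg_left w2 hQ.le)
      linarith
    have h4 : |deriv Φ ((x - (i + 1)) / ε) + deriv Φ ((x + (i + 1)) / ε)| / ε ≤ 2 * Q * D / ε * w := by
      rw [div_mul_eq_mul_div]; gcongr
    linarith
  · unfold T2
    rw [abs_div, abs_div, abs_of_pos hε]
    have h3 : |deriv (deriv Φ) ((x - (i + 1)) / ε) + deriv (deriv Φ) ((x + (i + 1)) / ε)| ≤ 2 * Q * D * w := by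
      refine (abs_add_le _ _).trans ?_
      have h1 := (p.p2 ((x - (i + 1)) / ε)).trans (mul_le_mul_of_nonneg_left w1 hQ.le)
      have h2 := (p.p2 ((x + (i + 1)) / ε)).trans (mul_le_mul_of_nonneg_left w2 hQ.le)
      linarith
    have h4 : |deriv (deriv Φ) ((x - (i + 1)) / ε) + deriv (deriv Φ) ((x + (i + 1)) / ε)| / ε / ε
        ≤ 2 * Q * D / ε / ε * w := by
      rw [div_mul_eq_mul_div, div_mul_eq_mul_div]; gcongr
    linarith

lemma T_summable (p : Prof s Φ R Q) (hε : 0 < ε) (x : ℝ) : Summable (fun i => T ε Φ i x) ∧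
    Summable (fun i => T1 ε Φ i x) ∧ Summable (fun i => T2 ε Φ i x) := by
  obtain ⟨C, -, h⟩ := p.T_bounds hε |x|
  have hv := (p.v_summable hε).mul_left C
  exact ⟨Summable.of_norm_bounded hv fun i => (h x le_rfl i).1,
    Summable.of_norm_bounded hv fun i => (h x le_rfl i).2.1,
    Summable.of_norm_bounded hv fun i => (h x le_rfl i).2.2⟩

lemma HH_der (p : Prof s Φ R Q) (hε : 0 < ε) (x : ℝ) :
    HasDerivAt (HH ε Φ) (deriv Φ (x / ε) / ε + ∑' i, T1 ε Φ i x) x := by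
  obtain ⟨C, -, h⟩ := p.T_bounds hε (|x| + 1)
  have hv := (p.v_summable hε).mul_left C
  have hx : x ∈ ball (0:ℝ) (|x| + 1) := by rw [mem_ball_zero_iff, Real.norm_eq_abs]; linarith
  have h1 := hasDerivAt_tsum_of_isPreconnected hv (isOpen_ball (x := (0:ℝ)) (ε := |x| + 1))
    (convex_ball (0:ℝ) (|x| + 1)).isPreconnected (fun i y _ => p.T_der ε i y)
    (fun i y hy => (h y (by rw [mem_ball_zero_iff] at hy; exact hy.le) i).2.1) hx (p.T_summable hε x).1 hx
  have h2 : HasDerivAt (fun x => Φ (x / ε)) (deriv Φ (x / ε) * (1 / ε)) x :=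
    ((c2_hasDeriv p.c2).1 (x / ε)).comp x ((hasDerivAt_id x).div_const ε)
  exact (h2.add h1).congr_deriv (by ring)

lemma HH_c2 (p : Prof s Φ R Q) (hε : 0 < ε) : ContDiff ℝ 2 (HH ε Φ) := by
  set G1 : ℝ → ℝ := fun x => deriv Φ (x / ε) / ε + ∑' i, T1 ε Φ i x with hG1
  set G2 : ℝ → ℝ := fun x => deriv (deriv Φ) (x / ε) / ε / ε + ∑' i, T2 ε Φ i x with hG2
  have d1 : deriv (HH ε Φ) = G1 := funext fun x => (p.HH_der hε x).deriv
  have d2 : ∀ x, HasDerivAt G1 (G2 x) x := by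
    intro x
    obtain ⟨C, -, h⟩ := p.T_bounds hε (|x| + 1)
    have hv := (p.v_summable hε).mul_left C
    have hx : x ∈ ball (0:ℝ) (|x| + 1) := by rw [mem_ball_zero_iff, Real.norm_eq_abs]; linarith
    have h1 := hasDerivAt_tsum_of_isPreconnected hv (isOpen_ball (x := (0:ℝ)) (ε := |x| + 1))
      (convex_ball (0:ℝ) (|x| + 1)).isPreconnected (fun i y _ => p.T1_der ε i y)
      (fun i y hy => (h y (by rw [mem_ball_zero_iff] at hy; exact hy.le) i).2.2) hx (p.T_summable hε x).2.1 hx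
    have h0 : HasDerivAt (fun x : ℝ => x / ε) (1 / ε) x := (hasDerivAt_id x).div_const ε
    have h2 : HasDerivAt (fun x => deriv Φ (x / ε)) (deriv (deriv Φ) (x / ε) * (1 / ε)) x :=
      HasDerivAt.comp x (h₂ := deriv Φ) ((c2_hasDeriv p.c2).2.1 (x / ε)) h0
    exact ((h2.div_const ε).add h1).congr_deriv (by simp only [hG2]; ring)
  have c2 : Continuous G2 := by
    have hc := (c2_hasDeriv p.c2).2.2.2
    refine Continuous.add (by fun_prop) ?_
    refine continuous_iff_continuousAt.2 fun x => ?_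
    obtain ⟨C, -, h⟩ := p.T_bounds hε (|x| + 1)
    have hv := (p.v_summable hε).mul_left C
    have := continuousOn_tsum (s := ball (0:ℝ) (|x| + 1)) (fun i => (p.T2_cont ε i).continuousOn) hv
      (fun i y hy => (h y (by rw [mem_ball_zero_iff] at hy; exact hy.le) i).2.2)
    exact this.continuousAt (isOpen_ball.mem_nhds (by rw [mem_ball_zero_iff, Real.norm_eq_abs]; linarith))
  have e2 : deriv G1 = G2 := funext fun x => (d2 x).deriv
  have g1 : ContDiff ℝ 1 G1 := contDiff_one_iff_deriv.2 ⟨fun x => (d2 x).differentiableAt, by rwa [e2]⟩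
  rw [show (2 : WithTop ℕ∞) = 1 + 1 by norm_num, contDiff_succ_iff_deriv]
  refine ⟨fun x => (p.HH_der hε x).differentiableAt, by simp, by rwa [d1]⟩

lemma HH_add_one (p : Prof s Φ R Q) (hε : 0 < ε) (x : ℝ) : HH ε Φ (x + 1) = HH ε Φ x + 1 := by
  have part : ∀ n : ℕ, Φ ((x+1)/ε) + ∑ i ∈ Finset.range n, T ε Φ i (x + 1) =
      (Φ (x/ε) + ∑ i ∈ Finset.range n, T ε Φ i x) + Φ ((x + 1 + n)/ε) - Φ ((x - n)/ε) := by
    intro n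
    induction n with
    | zero => simp
    | succ n ih =>
      rw [Finset.sum_range_succ, Finset.sum_range_succ, ← add_assoc, ih]
      unfold T
      rw [show x + 1 - ((n:ℝ) + 1) = x - n by ring, show x + ((n:ℝ) + 1) = x + 1 + n by ring]
      push_cast
      ring
  have t1 : Tendsto (fun n : ℕ => Φ ((x + 1 + n)/ε)) atTop (nhds 1) :=
    p.top.comp ((tendsto_atTop_add_const_left _ _ tendsto_natCast_atTop_atTop).atTop_div_const hε)
  have t2 : Tendsto (fun n : ℕ => Φ ((x - n)/ε)) atTop (nhds 0) := by
    refine p.bot.comp (Tendsto.atBot_div_const hε ?_)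
    simp only [sub_eq_add_neg]
    exact tendsto_atBot_add_const_left _ _ (tendsto_neg_atTop_atBot.comp tendsto_natCast_atTop_atTop)
  have a1 := ((p.T_summable hε (x+1)).1.hasSum.tendsto_sum_nat).const_add (Φ ((x+1)/ε))
  have a2 := ((((p.T_summable hε x).1.hasSum.tendsto_sum_nat).const_add (Φ (x/ε))).add t1).sub t2
  have := tendsto_nhds_unique a1 (a2.congr fun n => (part n).symm)
  simpa [HH] using this

lemma T_bdd (p : Prof s Φ R Q) (i : ℕ) (x : ℝ) : |T ε Φ i x| ≤ 2 * Q + 1 := by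
  unfold T
  have h1 := p.bd ((x - (i + 1)) / ε)
  have h2 := p.bd ((x + (i + 1)) / ε)
  rw [abs_le] at *
  constructor <;> linarith [h1.1, h1.2, h2.1, h2.2]

lemma T_c2 (p : Prof s Φ R Q) (i : ℕ) : ContDiff ℝ 2 (T ε Φ i) := by
  have h1 : ContDiff ℝ 2 (fun x : ℝ => (x - (i+1)) / ε) := (contDiff_id.sub contDiff_const).div_const ε
  have h2 : ContDiff ℝ 2 (fun x : ℝ => (x + (i+1)) / ε) := (contDiff_id.add contDiff_const).div_const ε
  exact ((p.c2.comp h1).add (p.c2.comp h2)).sub contDiff_const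

/-- Bounds on the second differences of the partial sums, uniform in the number of terms. -/
lemma sd_sum (p : Prof s Φ R Q) (hε : 0 < ε) (x : ℝ) : ∃ A, 0 ≤ A ∧ ∀ (n : ℕ) (z : ℝ), 0 < z →
    (z ≤ 1 → ∑ i ∈ Finset.range n, |sd (T ε Φ i) x z| ≤ A * z^2) ∧
    ∑ i ∈ Finset.range n, |sd (T ε Φ i) x z| ≤ A := by
  obtain ⟨C, hC, h⟩ := p.T_bounds hε (|x| + 1)
  obtain ⟨B, hB0, hB⟩ := wt_sum p.hs p.hR hε
  have hv := p.v_summable hε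
  set S := ∑' i : ℕ, wt s R ((i + 1) / ε) with hS
  have hvn : ∀ n, ∑ i ∈ Finset.range n, wt s R (((i:ℝ) + 1) / ε) ≤ S := fun n =>
    hv.sum_le_tsum _ (fun i _ => (wt_pos p.hR0 _).le)
  have hS0 : 0 ≤ S := tsum_nonneg fun i => (wt_pos p.hR0 _).le
  have hQ := p.hQ
  have hR := p.hR0
  set b := |x / ε| with hb
  set D := Q * (1 + 2 * b) * (R + b) ^ (1 + 2*s) with hD
  have hD0 : 0 ≤ D := by positivity
  refine ⟨C * S + D * (B + B + 2 * S), by positivity, fun n z hz => ⟨fun hz1 => ?_, ?_⟩⟩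
  · calc ∑ i ∈ Finset.range n, |sd (T ε Φ i) x z| ≤ ∑ i ∈ Finset.range n, C * wt s R ((i + 1) / ε) * z^2 := by
          refine Finset.sum_le_sum fun i _ => ?_
          refine sd_abs_le_of_deriv2 hz.le (fun y _ => p.T_der ε i y) (fun y _ => p.T1_der ε i y) fun y hy => ?_
          refine (h y ?_ i).2.2
          have := abs_sub_abs_le_abs_sub y x
          have : |y - x| ≤ z := abs_le.2 ⟨by linarith [hy.1], by linarith [hy.2]⟩
          linarith
      _ = C * (∑ i ∈ Finset.range n, wt s R (((i:ℝ) + 1) / ε)) * z^2 := by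
          rw [Finset.mul_sum, Finset.sum_mul]
      _ ≤ C * S * z^2 := by gcongr; exact hvn n
      _ ≤ _ := by gcongr; nlinarith [mul_nonneg hD0 (by linarith : 0 ≤ B + B + 2*S)]
  · have pw : ∀ i : ℕ, |sd (T ε Φ i) x z| ≤ D * (wt s R ((z - (i+1)) / ε) + wt s R ((-z - (i+1)) / ε)
        + 2 * wt s R ((i + 1) / ε)) := by
      intro i
      have s1 := p.pairS (x/ε) ((z - (i+1))/ε) (le_refl b)
      have s2 := p.pairS (x/ε) ((-z - (i+1))/ε) (le_refl b)
      have s3 := p.pairS (x/ε) ((i+1)/ε) (le_refl b)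
      have e : sd (T ε Φ i) x z =
          (Φ (x/ε + (z - (i+1))/ε) + Φ (x/ε - (z - (i+1))/ε) - 1) +
          (Φ (x/ε + (-z - (i+1))/ε) + Φ (x/ε - (-z - (i+1))/ε) - 1) -
          2 * (Φ (x/ε + (i+1)/ε) + Φ (x/ε - (i+1)/ε) - 1) := by
        unfold sd T
        simp only [← add_div, ← sub_div]
        rw [show x + z - ((i:ℝ)+1) = x + (z - (i+1)) by ring, show x + z + ((i:ℝ)+1) = x - (-z - (i+1)) by ring,
          show x - z - ((i:ℝ)+1) = x + (-z - (i+1)) by ring, show x - z + ((i:ℝ)+1) = x - (z - (i+1)) by ring]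
        ring
      rw [e]
      rw [abs_le] at *
      constructor <;> nlinarith [s1.1, s1.2, s2.1, s2.2, s3.1, s3.2]
    calc ∑ i ∈ Finset.range n, |sd (T ε Φ i) x z| ≤ _ := Finset.sum_le_sum fun i _ => pw i
      _ = D * ((∑ i ∈ Finset.range n, wt s R ((z - (i+1)) / ε)) + (∑ i ∈ Finset.range n, wt s R ((-z - (i+1)) / ε))
        + 2 * ∑ i ∈ Finset.range n, wt s R (((i:ℝ) + 1) / ε)) := by
          rw [← Finset.mul_sum, Finset.sum_add_distrib, Finset.sum_add_distrib, ← Finset.mul_sum]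
      _ ≤ D * (B + B + 2 * S) := by
          have := hB n z; have := hB n (-z); have := hvn n
          gcongr
      _ ≤ _ := by nlinarith [mul_nonneg hC hS0]

/-- The operator `J` can be applied term by term. -/
lemma J_HH (p : Prof s Φ R Q) (hε : 0 < ε) (x : ℝ) : Good s (HH ε Φ) x ∧
    HasSum (fun i => J s (T ε Φ i) x) (J s (HH ε Φ) x - J s (fun y => Φ (y / ε)) x) := by
  have hs := p.hs
  obtain ⟨A, hA, hsd⟩ := p.sd_sum hε x
  have hG : ∀ i, IntegrableOn (fun z => sd (T ε Φ i) x z / z ^ (1 + 2*s)) (Ioi 0) := fun i =>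
    good_of_c2 hs (p.T_c2 i) (p.T_bdd i) x
  have hsum : Summable fun i => ∫ z in Ioi (0:ℝ), ‖sd (T ε Φ i) x z / z ^ (1 + 2*s)‖ := by
    refine summable_of_sum_range_le (c := A * (1 ^ (2 - 2*s) / (2 - 2*s)) + A * (1 ^ (-(2*s)) / (2*s)))
      (fun i => integral_nonneg fun z => norm_nonneg _) fun n => ?_
    rw [← integral_finsetSum _ (fun i _ => (hG i).norm)]
    have hk := kernel_bound hs (f := fun z => ∑ i ∈ Finset.range n, |sd (T ε Φ i) x z|)
      (continuous_finsetSum _ fun i _ => (sd_continuous (p.T_cont ε i) x).abs) (a := 1) (A := A) (B := A) one_pos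
      (fun z hz => by
        rw [abs_of_nonneg (Finset.sum_nonneg fun i _ => abs_nonneg _)]; exact (hsd n z hz.1).1 hz.2)
      (fun z hz => by
        rw [abs_of_nonneg (Finset.sum_nonneg fun i _ => abs_nonneg _)]; exact (hsd n z (by linarith)).2)
    refine le_trans (le_of_eq ?_) ((le_abs_self _).trans hk.2)
    refine setIntegral_congr_fun measurableSet_Ioi fun z hz => ?_
    rw [Finset.sum_div]
    refine Finset.sum_congr rfl fun i _ => ?_
    rw [Real.norm_eq_abs, abs_div, abs_of_pos (Real.rpow_pos_of_pos hz _)]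
  have hts : ∀ z, HasSum (fun i => sd (T ε Φ i) x z) (sd (fun y => ∑' i, T ε Φ i y) x z) := fun z =>
    (((p.T_summable hε (x+z)).1.hasSum).add ((p.T_summable hε (x-z)).1.hasSum)).sub
      (((p.T_summable hε x).1.hasSum).mul_left 2)
  have hI := hasSum_integral_of_summable_integral_norm hG hsum
  have hte : ∀ z, ∑' i, sd (T ε Φ i) x z / z ^ (1 + 2*s) = sd (fun y => ∑' i, T ε Φ i y) x z / z ^ (1 + 2*s) :=
    fun z => ((hts z).div_const _).tsum_eq
  simp only [hte] at hI
  have hGt : Good s (fun y => ∑' i, T ε Φ i y) x := by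
    have hc : Continuous (fun y => ∑' i, T ε Φ i y) := by
      have h1 : Continuous fun y => HH ε Φ y - Φ (y / ε) :=
        (p.HH_c2 hε).continuous.sub (p.cont.comp (continuous_id.div_const ε))
      simpa [HH] using h1
    have hb : ∀ z M, (∀ n, ∑ i ∈ Finset.range n, |sd (T ε Φ i) x z| ≤ M) →
        |sd (fun y => ∑' i, T ε Φ i y) x z| ≤ M := fun z M hM =>
      le_of_tendsto' (hts z).tendsto_sum_nat.abs fun n => (Finset.abs_sum_le_sum_abs _ _).trans (hM n)
    exact good_of_bound hs hc one_pos (A := A) (B := A)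
      (fun z hz => hb z _ fun n => (hsd n z hz.1).1 hz.2)
      (fun z hz => hb z _ fun n => (hsd n z (by linarith)).2)
  have hΦG : Good s (fun y => Φ (y / ε)) x := by
    have := good_of_c2 hs p.c2 p.bd (1/ε * x + 0)
    have := Good.comp_affine (one_div_ne_zero hε.ne') this
    have e : (fun y => Φ (y / ε)) = fun y => Φ (1/ε * y + 0) := by
      funext y; congr 1; ring
    rwa [e]
  refine ⟨hΦG.add hGt, ?_⟩
  have e : J s (HH ε Φ) x = J s (fun y => Φ (y / ε)) x + J s (fun y => ∑' i, T ε Φ i y) x := J_add hΦG hGt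
  rw [e, add_sub_cancel_left]
  exact hI.mul_left (C1s s)

lemma J_scaled (hε : 0 < ε) (Φ : ℝ → ℝ) (c x : ℝ) :
    ε ^ (2*s) * J s (fun y => Φ ((y + c) / ε)) x = J s Φ ((x + c) / ε) := by
  have h := J_comp_affine s Φ (one_div_ne_zero hε.ne') (c / ε) x
  have e : (fun y => Φ ((y + c) / ε)) = fun y => Φ (1 / ε * y + c / ε) := by
    funext y; congr 1; ring
  rw [e, h, abs_of_pos (by positivity), one_div, Real.inv_rpow hε.le, ← mul_assoc,
    mul_inv_cancel₀ (Real.rpow_pos_of_pos hε _).ne', one_mul]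
  congr 1; ring

lemma J_T (p : Prof s Φ R Q) (hε : 0 < ε) (i : ℕ) (x : ℝ) :
    ε ^ (2*s) * J s (T ε Φ i) x = J s Φ ((x - (i+1)) / ε) + J s Φ ((x + (i+1)) / ε) := by
  have hg : ∀ c : ℝ, Good s (fun y => Φ ((y + c) / ε)) x := by
    intro c
    have h1 : ContDiff ℝ 2 (fun y : ℝ => (y + c) / ε) := (contDiff_id.add contDiff_const).div_const ε
    exact good_of_c2 p.hs (p.c2.comp h1) (fun y => p.bd _) x
  have e : J s (T ε Φ i) x = J s (fun y => Φ ((y + -((i:ℝ)+1)) / ε) + Φ ((y + ((i:ℝ)+1)) / ε)) x := by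
    unfold J
    congr 1
    refine setIntegral_congr_fun measurableSet_Ioi fun z _ => ?_
    simp only [sd, T, ← sub_eq_add_neg]
    ring
  rw [e, J_add (hg _) (hg _), mul_add, J_scaled hε, J_scaled hε, ← sub_eq_add_neg]

end Prof

/-! ### Quantitative estimates for the superposition near one transition -/

section
variable {s : ℝ} {W1 W2 φ : ℝ → ℝ} {α K R Q ε : ℝ}

/-- The summable coefficients measuring the interaction with the transition at distance `i + 1`. -/
noncomputable def cf (s : ℝ) (i : ℕ) : ℝ := ((i:ℝ) + 1) ^ (-(1 + 2*s))

lemma cf_pos (s : ℝ) (i : ℕ) : 0 < cf s i := Real.rpow_pos_of_pos (by positivity) _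

lemma cf_summable (hs : s ∈ Ioo (0:ℝ) 1) : Summable (cf s) := by
  have h := (Real.summable_nat_rpow (p := -(1 + 2*s))).2 (by linarith [hs.1])
  have := (summable_nat_add_iff 1).2 h
  refine this.congr fun i => ?_
  simp [cf]

lemma far_rpow (hR : 0 ≤ R) (hε : 0 < ε) {i : ℕ} {y t : ℝ} (ht : 0 ≤ t) (hy : ((i:ℝ) + 1) / (2*ε) ≤ |y|) :
    (R + |y|) ^ (-t) ≤ (2*ε) ^ t * ((i:ℝ) + 1) ^ (-t) := by
  have hi : (0:ℝ) < (i:ℝ) + 1 := by positivity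
  have h0 : 0 < ((i:ℝ) + 1) / (2*ε) := by positivity
  calc (R + |y|) ^ (-t) ≤ (((i:ℝ) + 1) / (2*ε)) ^ (-t) :=
        Real.rpow_le_rpow_of_nonpos h0 (by linarith) (by linarith)
    _ = _ := by
        rw [Real.div_rpow hi.le (by positivity), Real.rpow_neg (by positivity : (0:ℝ) ≤ 2*ε), div_inv_eq_mul, mul_comm]

lemma far_wt (hs : s ∈ Ioo (0:ℝ) 1) (hR : 0 ≤ R) (hε : 0 < ε) {i : ℕ} {y : ℝ}
    (hy : ((i:ℝ) + 1) / (2*ε) ≤ |y|) : wt s R y ≤ (2*ε) ^ (1 + 2*s) * cf s i :=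
  far_rpow hR hε (by linarith [hs.1]) hy

lemma far_pt (hε : 0 < ε) {x : ℝ} (hx : |x| ≤ 1/2) (i : ℕ) :
    ((i:ℝ) + 1) / (2*ε) ≤ (x + (i + 1)) / ε ∧ ((i:ℝ) + 1) / (2*ε) ≤ -((x - (i + 1)) / ε) := by
  have hi : (0:ℝ) ≤ i := by positivity
  rw [abs_le] at hx
  rw [← neg_div]
  constructor <;> rw [div_le_div_iff₀ (by positivity) hε] <;> nlinarith [hx.1, hx.2]

lemma two_eps (hε : 0 < ε) (s : ℝ) : (2*ε) ^ (1 + 2*s) = 2 ^ (1 + 2*s) * (ε * ε ^ (2*s)) := by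
  rw [Real.mul_rpow (by norm_num) hε.le, Real.rpow_add hε, Real.rpow_one]

lemma Dec.T_est (hs : s ∈ Ioo (0:ℝ) 1) (L : Lay s W1 φ) (Dc : Dec s φ R Q) (hε : 0 < ε) {x : ℝ}
    (hx : |x| ≤ 1/2) (i : ℕ) :
    |T ε φ i x| ≤ 2 * Q * 2 ^ (1 + 2*s) * (ε ^ (2*s) * (ε + |x|)) * cf s i ∧
    |T1 ε φ i x| ≤ 2 * Q * 2 ^ (1 + 2*s) * ε ^ (2*s) * cf s i := by
  have hQ := Dc.hQ
  have hR : 0 ≤ R := by linarith [Dc.hR]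
  have hw : ∀ y, ((i:ℝ) + 1) / (2*ε) ≤ |y| → wt s R y ≤ 2 ^ (1 + 2*s) * (ε * ε ^ (2*s)) * cf s i := fun y hy => by
    have := far_wt hs hR hε hy; rwa [two_eps hε] at this
  set E := ε ^ (2*s) with hE
  have hE0 : 0 < E := Real.rpow_pos_of_pos hε _
  set G := (2:ℝ) ^ (1 + 2*s) with hG
  have hG0 : 0 < G := by positivity
  have hc := cf_pos s i
  set c := cf s i
  have hi : (0:ℝ) ≤ i := by positivity
  have hp : ∀ t, |t| ≤ 1/2 → |deriv φ ((t - (i+1))/ε)| ≤ Q * (G * (ε * E) * c) ∧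
      |deriv φ ((t + (i+1))/ε)| ≤ Q * (G * (ε * E) * c) := by
    intro t ht
    obtain ⟨f1, f2⟩ := far_pt hε ht i
    exact ⟨(Dc.p1 _).trans (mul_le_mul_of_nonneg_left (hw _ (f2.trans (neg_le_abs _))) hQ.le),
      (Dc.p1 _).trans (mul_le_mul_of_nonneg_left (hw _ (f1.trans (le_abs_self _))) hQ.le)⟩
  have hT1 : ∀ t, |t| ≤ 1/2 → |T1 ε φ i t| ≤ 2 * Q * G * E * c := by
    intro t ht
    obtain ⟨a, b⟩ := hp t ht
    unfold T1
    rw [abs_div, abs_of_pos hε, div_le_iff₀ hε]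
    refine (abs_add_le _ _).trans ?_
    nlinarith
  refine ⟨?_, hT1 x hx⟩
  have hd : ∀ y, HasDerivAt (T ε φ i) (T1 ε φ i y) y := by
    intro y
    have h1 : HasDerivAt (fun x : ℝ => (x - (i+1)) / ε) (1/ε) y := ((hasDerivAt_id y).sub_const _).div_const ε
    have h2 : HasDerivAt (fun x : ℝ => (x + (i+1)) / ε) (1/ε) y := ((hasDerivAt_id y).add_const _).div_const ε
    have := (((c2_hasDeriv L.c2).1 _).comp y h1).add (((c2_hasDeriv L.c2).1 _).comp y h2)
    exact (this.sub_const 1).congr_deriv (by unfold T1; ring)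
  have hm := Convex.norm_image_sub_le_of_norm_hasDerivWithin_le (f := T ε φ i) (s := uIcc 0 x)
    (C := 2 * Q * G * E * c) (x := 0) (y := x) (fun t _ => (hd t).hasDerivWithinAt) (fun t ht => by
      refine hT1 t (le_trans ?_ hx)
      have := abs_sub_left_of_mem_uIcc ht
      simpa using this) (convex_uIcc _ _) left_mem_uIcc right_mem_uIcc
  rw [Real.norm_eq_abs, Real.norm_eq_abs, sub_zero] at hm
  have h0 : |T ε φ i 0| ≤ Q * (G * (ε * E) * c) := by
    have h := Dc.sym ((0 + (i+1))/ε)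
    obtain ⟨f1, -⟩ := far_pt hε (x := 0) (by norm_num) i
    have h2 := h.trans (mul_le_mul_of_nonneg_left (hw _ (f1.trans (le_abs_self _))) hQ.le)
    have e : T ε φ i 0 = φ ((0 + (i+1))/ε) + φ (-((0 + (i+1))/ε)) - 1 := by
      unfold T
      rw [show -((0 + ((i:ℝ)+1))/ε) = (0 - (i+1))/ε by ring]; ring
    rwa [e]
  have h3 := abs_sub_abs_le_abs_sub (T ε φ i x) (T ε φ i 0)
  have : 0 ≤ Q * (G * (ε * E) * c) := by positivity
  nlinarith

lemma Dec.pair_est (hs : s ∈ Ioo (0:ℝ) 1) (P : Pot s W1 W2 α K) (L : Lay s W1 φ) (Dc : Dec s φ R Q)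
    (hε : 0 < ε) (hε1 : ε ≤ 1) {x : ℝ} (hx : |x| ≤ 1/2) (i : ℕ) :
    |W1 (φ ((x - (i+1))/ε)) + W1 (φ ((x + (i+1))/ε)) - α * T ε φ i x| ≤
      (K * (8 * Q * Q * 2 ^ (1 + 2*s) * 2 ^ (2*s)) + K * (2 * Q^2 * (2 ^ (2*s))^2)) * (ε ^ (2*s))^2 * cf s i := by
  have hK := P.K_pos
  have hQ := Dc.hQ
  have hs0 := hs.1
  have hR : 0 ≤ R := by linarith [Dc.hR]
  have hp := P.pair (φ ((x - (i+1))/ε)) (φ ((x + (i+1))/ε))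
  obtain ⟨f1, f2⟩ := far_pt hε hx i
  have hi : (0:ℝ) ≤ i := by positivity
  have hi1 : (1:ℝ) ≤ i + 1 := by linarith
  have hpos : 0 ≤ ((i:ℝ) + 1) / (2*ε) := by positivity
  set n := ((i:ℝ) + 1) ^ (-(2*s)) with hn
  have hn0 : 0 < n := by positivity
  have hn1 : n ≤ 1 := Real.rpow_le_one_of_one_le_of_nonpos hi1 (by linarith)
  set E := ε ^ (2*s) with hE
  have hE0 : 0 < E := Real.rpow_pos_of_pos hε _
  set g := (2:ℝ) ^ (2*s) with hg
  have hg0 : 0 < g := by positivity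
  have e2 : (2*ε) ^ (2*s) = g * E := Real.mul_rpow (by norm_num) hε.le
  have q1 : |φ ((x - (i+1))/ε)| ≤ Q * (g * E) * n := by
    rw [abs_of_pos (L.pos _)]
    have h1 := Dc.tl (-((x - (i+1))/ε)) (hpos.trans f2)
    rw [neg_neg] at h1
    have h2 := far_rpow hR hε (y := -((x - (i+1))/ε)) (t := 2*s) (by linarith) (f2.trans (le_abs_self _))
    rw [abs_of_nonneg (hpos.trans f2), e2] at h2
    calc _ ≤ _ := h1
      _ ≤ Q * (g * E * n) := by gcongr
      _ = _ := by ring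
  have q2 : |φ ((x + (i+1))/ε) - 1| ≤ Q * (g * E) * n := by
    rw [abs_of_neg (by linarith [L.lt_one ((x + (i+1))/ε)])]
    have h1 := Dc.tr ((x + (i+1))/ε) (hpos.trans f1)
    have h2 := far_rpow hR hε (y := ((x + (i+1))/ε)) (t := 2*s) (by linarith) (f1.trans (le_abs_self _))
    rw [abs_of_nonneg (hpos.trans f1), e2] at h2
    have h3 := mul_le_mul_of_nonneg_left h2 hQ.le
    linarith
  have hT := (Dc.T_est hs L hε hx i).1
  set c := cf s i with hc
  have hc0 : 0 < c := cf_pos s i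
  set G := (2:ℝ) ^ (1 + 2*s) with hG
  have hG0 : 0 < G := by positivity
  have hT' : |T ε φ i x| ≤ 2 * Q * G * (E * 2) * c := by
    refine hT.trans ?_
    gcongr
    linarith
  set a := φ ((x - (i+1))/ε) with ha
  set b := φ ((x + (i+1))/ε) with hb
  have hab : a + b - 1 = T ε φ i x := rfl
  rw [hab] at hp
  refine hp.trans ?_
  set B := Q * (g * E) with hB
  have hB0 : 0 < B := by positivity
  have m1 : K * (|a| + |b - 1|) * |T ε φ i x| ≤ K * (8 * Q * Q * G * g) * E^2 * c := by
    calc K * (|a| + |b - 1|) * |T ε φ i x| ≤ K * (B * 1 + B * 1) * (2 * Q * G * (E * 2) * c) := by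
          gcongr
          · exact q1.trans (by gcongr)
          · exact q2.trans (by gcongr)
      _ = _ := by simp only [hB]; ring
  have m2 : (if s < 1/2 then 0 else K * (a^2 + (b-1)^2)) ≤ K * (2 * Q^2 * g^2) * E^2 * c := by
    split_ifs with h
    · positivity
    · push Not at h
      have hnc : n^2 ≤ c := by
        rw [hn, ← Real.rpow_natCast, ← Real.rpow_mul (by positivity)]
        exact Real.rpow_le_rpow_of_exponent_le hi1 (by push_cast; linarith)
      have u1 : a^2 ≤ (B * n)^2 := sq_le_sq' (by linarith [(abs_le.1 q1).1]) (abs_le.1 q1).2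
      have u2 : (b-1)^2 ≤ (B * n)^2 := sq_le_sq' (by linarith [(abs_le.1 q2).1]) (abs_le.1 q2).2
      calc K * (a^2 + (b-1)^2) ≤ K * ((B * n)^2 + (B * n)^2) := by gcongr
        _ = K * (2 * Q^2 * g^2) * E^2 * n^2 := by simp only [hB]; ring
        _ ≤ _ := by gcongr
  calc _ ≤ _ := add_le_add m1 m2
    _ = _ := by ring

/-- Far from its support, a compactly supported function has an algebraically small fractional
Laplacian. -/
lemma J_far (hs : s ∈ Ioo (0:ℝ) 1) {ψ : ℝ → ℝ} {ρ M : ℝ} (hρ : 0 < ρ)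
    (hM : ∀ x, |ψ x| ≤ M) (hsupp : ∀ x, ρ < |x| → ψ x = 0) :
    ∃ C, 0 ≤ C ∧ ∀ y, 2 * ρ ≤ |y| → |J s ψ y| ≤ C * |y| ^ (-(1 + 2*s)) := by
  have hM0 : 0 ≤ M := (abs_nonneg _).trans (hM 0)
  have hs0 := hs.1
  set D := M * (1 + ρ) ^ (1 + 2*s) with hD
  have hD0 : 0 ≤ D := by positivity
  have hψ : ∀ x, |ψ x| ≤ D * wt s 1 x := by
    intro x
    by_cases h : ρ < |x|
    · rw [hsupp x h, abs_zero]; exact mul_nonneg hD0 (wt_pos one_pos x).le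
    · push Not at h
      refine (hM x).trans ?_
      have : (1:ℝ) ≤ (1 + ρ) ^ (1 + 2*s) * wt s 1 x := by
        unfold wt
        have h1 : (1 + ρ) ^ (-(1 + 2*s)) ≤ (1 + |x|) ^ (-(1 + 2*s)) :=
          Real.rpow_le_rpow_of_nonpos (by positivity) (by linarith) (by linarith)
        calc (1:ℝ) = (1 + ρ) ^ (1 + 2*s) * (1 + ρ) ^ (-(1 + 2*s)) := by
              rw [← Real.rpow_add (by positivity)]; simp
          _ ≤ _ := by gcongr
      calc M = M * 1 := by ring
        _ ≤ M * ((1 + ρ) ^ (1 + 2*s) * wt s 1 x) := by gcongr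
        _ = _ := by ring
  have hC := C1s_pos hs
  refine ⟨C1s s * (D * 2 ^ (1 + 2*s) * (1 / s)), by positivity, fun y hy => ?_⟩
  obtain ⟨iw, ew⟩ := wt_translate hs one_pos y
  have hy0 : 0 < |y| := by linarith
  have key : ∀ z ∈ Ioi (0:ℝ), ‖sd ψ y z / z ^ (1 + 2*s)‖ ≤
      D * (2 ^ (1 + 2*s) * |y| ^ (-(1 + 2*s))) * (wt s 1 (y + z) + wt s 1 (y - z)) := by
    intro z hz
    have hz0 : (0:ℝ) < z := hz
    have w1 := wt_pos (s := s) one_pos (y + z)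
    have w2 := wt_pos (s := s) one_pos (y - z)
    have hy1 : ψ y = 0 := hsupp y (by linarith)
    by_cases h : z < |y| / 2
    · have a1 : ψ (y + z) = 0 := hsupp _ (by
        have := abs_sub_abs_le_abs_sub y (-z); rw [abs_neg, abs_of_pos hz0, sub_neg_eq_add] at this; linarith)
      have a2 : ψ (y - z) = 0 := hsupp _ (by
        have := abs_sub_abs_le_abs_sub y z; rw [abs_of_pos hz0] at this; linarith)
      simp only [sd, a1, a2, hy1]
      norm_num
      positivity
    · push Not at h
      have h1 : |sd ψ y z| ≤ D * (wt s 1 (y + z) + wt s 1 (y - z)) := by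
        simp only [sd, hy1, mul_zero, sub_zero]
        refine (abs_add_le _ _).trans ?_
        linarith [hψ (y+z), hψ (y-z)]
      have h2 : z ^ (-(1 + 2*s)) ≤ 2 ^ (1 + 2*s) * |y| ^ (-(1 + 2*s)) := by
        calc z ^ (-(1 + 2*s)) ≤ (|y| / 2) ^ (-(1 + 2*s)) :=
              Real.rpow_le_rpow_of_nonpos (by positivity) h (by linarith)
          _ = _ := by
              rw [Real.div_rpow hy0.le (by norm_num), Real.rpow_neg (by norm_num : (0:ℝ) ≤ 2), div_inv_eq_mul, mul_comm]
      rw [norm_div, Real.norm_eq_abs, Real.norm_eq_abs, abs_of_pos (Real.rpow_pos_of_pos hz0 _), div_eq_mul_inv,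
        ← Real.rpow_neg hz0.le]
      calc _ ≤ D * (wt s 1 (y + z) + wt s 1 (y - z)) * (2 ^ (1 + 2*s) * |y| ^ (-(1 + 2*s))) := by gcongr
        _ = _ := by ring
  have hb := norm_integral_le_of_norm_le (iw.const_mul (D * (2 ^ (1 + 2*s) * |y| ^ (-(1 + 2*s)))))
    ((ae_restrict_iff' measurableSet_Ioi).2 (Eventually.of_forall key))
  rw [integral_const_mul, ew, Real.one_rpow] at hb
  unfold J
  rw [abs_mul, abs_of_pos hC]
  calc _ ≤ C1s s * (D * (2 ^ (1 + 2*s) * |y| ^ (-(1 + 2*s))) * (1 / s)) := by gcongr; exact hb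
    _ = _ := by ring

end

/-! ### The approximate travelling profile -/

section
variable {s : ℝ} {W1 W2 φ : ℝ → ℝ} {α K R Q ε : ℝ}

lemma supp_wt (hs : s ∈ Ioo (0:ℝ) 1) (hR : 0 < R) {f : ℝ → ℝ} {ρ M : ℝ}
    (hM : ∀ x, |f x| ≤ M) (hsupp : ∀ x, ρ < |x| → f x = 0) :
    ∃ D, 0 ≤ D ∧ ∀ x, |f x| ≤ D * wt s R x := by
  have hM0 : 0 ≤ M := (abs_nonneg _).trans (hM 0)
  have hs0 := hs.1
  by_cases hρ : 0 ≤ ρ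
  swap
  · refine ⟨0, le_rfl, fun x => ?_⟩
    rw [hsupp x (by linarith [abs_nonneg x])]; simp
  refine ⟨M * (R + ρ) ^ (1 + 2*s), by positivity, fun x => ?_⟩
  by_cases h : ρ < |x|
  · rw [hsupp x h, abs_zero]; exact mul_nonneg (by positivity) (wt_pos hR x).le
  · push Not at h
    refine (hM x).trans ?_
    have : (1:ℝ) ≤ (R + ρ) ^ (1 + 2*s) * wt s R x := by
      unfold wt
      have h1 : (R + ρ) ^ (-(1 + 2*s)) ≤ (R + |x|) ^ (-(1 + 2*s)) :=
        Real.rpow_le_rpow_of_nonpos (by positivity) (by linarith) (by linarith)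
      calc (1:ℝ) = (R + ρ) ^ (1 + 2*s) * (R + ρ) ^ (-(1 + 2*s)) := by
            rw [← Real.rpow_add (by positivity)]; simp
        _ ≤ _ := by gcongr
    calc M = M * 1 := by ring
      _ ≤ M * ((R + ρ) ^ (1 + 2*s) * wt s R x) := by gcongr
      _ = _ := by ring

/-- Uniform bounds and a common support radius for a compactly supported `C²` function and its
derivatives. -/
lemma compact_data {ψ : ℝ → ℝ} (h2 : ContDiff ℝ 2 ψ) (hc : HasCompactSupport ψ) :
    ∃ ρ M, 1 ≤ ρ ∧ (∀ x, |ψ x| ≤ M) ∧ (∀ x, |deriv ψ x| ≤ M) ∧ (∀ x, |deriv (deriv ψ) x| ≤ M) ∧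
    (∀ x, ρ < |x| → ψ x = 0) ∧ (∀ x, ρ < |x| → deriv ψ x = 0) ∧ (∀ x, ρ < |x| → deriv (deriv ψ) x = 0) := by
  obtain ⟨-, -, c1, c2⟩ := c2_hasDeriv h2
  obtain ⟨M0, h0⟩ := hc.exists_bound_of_continuous h2.continuous
  obtain ⟨M1, h1⟩ := hc.deriv.exists_bound_of_continuous c1
  obtain ⟨M2, h2'⟩ := hc.deriv.deriv.exists_bound_of_continuous c2
  obtain ⟨ρ, hρ⟩ := hc.isCompact.isBounded.subset_closedBall 0
  have hn : ∀ x, max ρ 1 < |x| → x ∉ tsupport ψ := fun x hx hx' => by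
    have := hρ hx'
    rw [mem_closedBall_zero_iff, Real.norm_eq_abs] at this
    linarith [le_max_left ρ 1]
  have z1 : ∀ x, max ρ 1 < |x| → x ∉ tsupport (deriv ψ) := fun x hx hx' =>
    hn x hx (closure_minimal (support_deriv_subset (f := ψ)) (isClosed_tsupport ψ) hx')
  refine ⟨max ρ 1, max M0 (max M1 M2), le_max_right _ _, fun x => (h0 x).trans (le_max_left _ _),
    fun x => (h1 x).trans ((le_max_left _ _).trans (le_max_right _ _)),
    fun x => (h2' x).trans ((le_max_right _ _).trans (le_max_right _ _)),
    fun x hx => image_eq_zero_of_notMem_tsupport (hn x hx),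
    fun x hx => image_eq_zero_of_notMem_tsupport (z1 x hx), fun x hx => ?_⟩
  by_contra hne
  exact z1 x hx (support_deriv_subset hne)

lemma prof_of (hs : s ∈ Ioo (0:ℝ) 1) (L : Lay s W1 φ) (Dc : Dec s φ R Q) {ψ : ℝ → ℝ}
    (h2 : ContDiff ℝ 2 ψ) (hc : HasCompactSupport ψ) (θ : ℝ) :
    ∃ Q', Prof s (fun x => φ x + θ * ψ x) R Q' := by
  have hR : 0 < R := by linarith [Dc.hR]
  have hQ := Dc.hQ
  obtain ⟨ρ, M, hρ, m0, m1, m2, z0, z1, z2⟩ := compact_data h2 hc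
  obtain ⟨A, hA, a⟩ := supp_wt hs hR m0 z0
  obtain ⟨B, hB, b⟩ := supp_wt hs hR m1 z1
  obtain ⟨C, hC, c⟩ := supp_wt hs hR m2 z2
  obtain ⟨f1, f2, -, -⟩ := c2_hasDeriv L.c2
  obtain ⟨g1, g2, -, -⟩ := c2_hasDeriv h2
  have hM0 : 0 ≤ M := (abs_nonneg _).trans (m0 0)
  have d1 : deriv (fun x => φ x + θ * ψ x) = fun x => deriv φ x + θ * deriv ψ x :=
    funext fun x => ((f1 x).add ((g1 x).const_mul θ)).deriv
  have d2 : deriv (fun x => deriv φ x + θ * deriv ψ x) = fun x => deriv (deriv φ) x + θ * deriv (deriv ψ) x :=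
    funext fun x => ((f2 x).add ((g2 x).const_mul θ)).deriv
  have lim : ∀ l : Filter ℝ, l ≤ cocompact ℝ → Tendsto (fun x => θ * ψ x) l (nhds 0) := by
    intro l hl
    have : (fun x => θ * ψ x) =ᶠ[l] fun _ => 0 := by
      have := (isCompact_closedBall (0:ℝ) ρ).compl_mem_cocompact
      filter_upwards [hl this] with x hx
      rw [z0 x (by simpa using hx), mul_zero]
    exact tendsto_const_nhds.congr' this.symm
  have key : ∀ {f g : ℝ → ℝ} {D : ℝ}, 0 ≤ D → (∀ x, |f x| ≤ Q * wt s R x) → (∀ x, |g x| ≤ D * wt s R x) →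
      ∀ x, |f x + θ * g x| ≤ (Q + |θ| * D) * wt s R x := by
    intro f g D hD hf hg x
    refine (abs_add_le _ _).trans ?_
    rw [abs_mul]
    have := mul_le_mul_of_nonneg_left (hg x) (abs_nonneg θ)
    linarith [hf x]
  set Q' := 1 + Q + |θ| * (2 * A + B + C + M) with hQ'
  have up : ∀ {D x : ℝ}, D ≤ 2 * A + B + C + M → (Q + |θ| * D) * wt s R x ≤ Q' * wt s R x := by
    intro D x hD
    have := wt_pos (s := s) hR x
    have := mul_le_mul_of_nonneg_left hD (abs_nonneg θ)
    gcongr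
    linarith
  refine ⟨Q', hs, Dc.hR, by positivity, L.c2.add (contDiff_const.mul h2), fun x => ?_, fun x => ?_, fun x => ?_,
    fun x => ?_, ?_, ?_⟩
  · refine (abs_add_le _ _).trans ?_
    rw [abs_mul]
    have h3 := mul_le_mul_of_nonneg_left ((m0 x).trans (by linarith : M ≤ 2 * A + B + C + M)) (abs_nonneg θ)
    have := L.abs_le_one x
    linarith
  · rw [d1]; exact (key hB Dc.p1 b x).trans (up (by linarith))
  · rw [d1, d2]; exact (key hC Dc.p2 c x).trans (up (by linarith))
  · have hg : ∀ x, |ψ x + ψ (-x)| ≤ (2*A) * wt s R x := fun x => by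
      refine (abs_add_le _ _).trans ?_
      have := a (-x); rw [wt_neg] at this
      linarith [a x]
    have := (key (by linarith : 0 ≤ 2*A) Dc.sym hg x).trans (up (by linarith))
    refine le_trans (le_of_eq ?_) this
    congr 1; ring
  · simpa using L.bot.add (lim atBot (by rw [cocompact_eq_atBot_atTop]; exact le_sup_left))
  · simpa using L.top.add (lim atTop (by rw [cocompact_eq_atBot_atTop]; exact le_sup_right))

lemma sq_three {a b : ℝ} (ha : 0 < a) (hb : 0 < b) :
    b^2 ≤ (a + b)^2 ∧ a * b ≤ (a + b)^2 ∧ a^2 ≤ (a + b)^2 := by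
  refine ⟨?_, ?_, ?_⟩ <;> nlinarith [mul_pos ha hb]

lemma cell_alg {ε α : ℝ} (hε : ε ≠ 0) (hα : α ≠ 0) (θ c l Jp ω v d0 d1 e e1 A w : ℝ) {w0 : ℝ} :
    ε * θ * c * ((d0 + θ * d1) / ε + e1) - θ * l - (A + (w0 + θ * Jp)) + w =
    -(θ * (Jp - ω * v - (l / α * (ω - α) + c * d0))) + (ω - α) * e - (A - α * e) + θ^2 * (c * d1)
        + ε * (θ * (c * e1)) + (w - w0 - ω * (θ * v + e + θ * l / α)) := by
  field_simp
  ring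

set_option maxHeartbeats 1000000 in
/-- The superposition of corrected layers, shifted by a constant, nearly solves the travelling
equation in the period cell around the origin. -/
lemma cell_est (hs : s ∈ Ioo (0:ℝ) 1) (P : Pot s W1 W2 α K) (L : Lay s W1 φ) (Dc : Dec s φ R Q)
    (l c : ℝ) {η : ℝ} {ψ : ℝ → ℝ} (h2 : ContDiff ℝ 2 ψ) (hcs : HasCompactSupport ψ)
    (hψ : ∀ x, |J s ψ x - W2 (φ x) * ψ x - (l / α * (W2 (φ x) - α) + c * deriv φ x)| ≤ η) :
    ∃ C ε₀, 0 ≤ C ∧ 0 < ε₀ ∧ ∀ θ ε, 0 < θ → 0 < ε → ε ≤ ε₀ →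
      ∃ h : ℝ → ℝ, ContDiff ℝ 2 h ∧ (∀ x, h (x + 1) = h x + 1) ∧ (∀ x, Good s h x) ∧
      ∀ x, |x| ≤ 1/2 → |ε * θ * c * deriv h x - θ * l - ε ^ (2*s) * J s h x + W1 (h x)| ≤
        θ * η + C * (θ + ε ^ (2*s))^2 + C * |W2 (φ (x / ε)) - α| * (ε ^ (2*s) * (ε + |x|)) := by
  have hK := P.K_pos
  have hQ := Dc.hQ
  have hα := P.pos
  obtain ⟨ρ, M, hρ, m0, m1, m2, z0, z1, z2⟩ := compact_data h2 hcs
  have hM0 : 0 ≤ M := (abs_nonneg _).trans (m0 0)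
  obtain ⟨CJ, hCJ, hJf⟩ := J_far hs (by linarith : 0 < ρ) m0 z0
  have hsum := cf_summable hs
  set Z := ∑' i, cf s i with hZ
  have hZ0 : 0 ≤ Z := tsum_nonneg fun i => (cf_pos s i).le
  set G := (2:ℝ) ^ (1 + 2*s) with hG
  have hG0 : 0 < G := by positivity
  set CT := 2 * Q * G with hCT
  have hCT0 : 0 < CT := by positivity
  set Cp := K * (8 * Q * Q * G * 2 ^ (2*s)) + K * (2 * Q^2 * (2 ^ (2*s))^2) with hCp
  have hCp0 : 0 < Cp := by positivity
  set Cd := M + 2 * CT * Z + |l| / α with hCd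
  have hCd0 : 0 ≤ Cd := by positivity
  refine ⟨CT * Z + (Cp * Z + 2 * CJ * G * Z + |c| * M + |c| * (CT * Z) + K * Cd^2), 1 / (4 * ρ), by positivity,
    by positivity, ?_⟩
  intro θ ε hθ hε hε₀
  have hερ : ε * (4 * ρ) ≤ 1 := by rwa [le_div_iff₀ (by positivity)] at hε₀
  have hε1 : ε ≤ 1 := by nlinarith
  set E := ε ^ (2*s) with hE
  have hE0 : 0 < E := Real.rpow_pos_of_pos hε _
  set Φ : ℝ → ℝ := fun x => φ x + θ * ψ x with hΦ
  obtain ⟨Q', p⟩ : ∃ Q', Prof s Φ R Q' := prof_of hs L Dc h2 hcs θ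
  set κ := θ * l / α with hκ
  have hJκ : ∀ x, J s (fun y => HH ε Φ y + κ) x = J s (HH ε Φ) x := by
    intro x; unfold J; congr 2; funext z; simp only [sd]; ring_nf
  have hGκ : ∀ x, Good s (fun y => HH ε Φ y + κ) x := by
    intro x
    have := (p.J_HH hε x).1
    unfold Good at *
    refine this.congr_fun (fun z _ => ?_) measurableSet_Ioi
    simp only [sd]; ring_nf
  refine ⟨fun y => HH ε Φ y + κ, (p.HH_c2 hε).add contDiff_const, fun x => ?_, hGκ, fun x hx => ?_⟩
  · simp only [p.HH_add_one hε]; ring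
  -- all neighbouring transitions are centred away from the support of `ψ`
  have far : ∀ i : ℕ, 2 * ρ ≤ |(x - (i+1))/ε| ∧ 2 * ρ ≤ |(x + (i+1))/ε| ∧
      ((i:ℝ) + 1) / (2*ε) ≤ |(x - (i+1))/ε| ∧ ((i:ℝ) + 1) / (2*ε) ≤ |(x + (i+1))/ε| := by
    intro i
    obtain ⟨f1, f2⟩ := far_pt hε hx i
    have f1' := f1.trans (le_abs_self _)
    have f2' := f2.trans (neg_le_abs _)
    have : 2 * ρ ≤ ((i:ℝ) + 1) / (2*ε) := by
      rw [le_div_iff₀ (by positivity)]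
      have : (0:ℝ) ≤ i := by positivity
      nlinarith
    exact ⟨this.trans f2', this.trans f1', f2', f1'⟩
  have hT : ∀ i, T ε Φ i x = T ε φ i x := by
    intro i
    obtain ⟨a, b, -, -⟩ := far i
    simp only [T, hΦ, z0 _ (by linarith : ρ < |(x - (i+1))/ε|), z0 _ (by linarith : ρ < |(x + (i+1))/ε|)]
    ring
  obtain ⟨f1, -, -, -⟩ := c2_hasDeriv L.c2
  obtain ⟨g1, -, -, -⟩ := c2_hasDeriv h2
  have d1 : ∀ y, deriv Φ y = deriv φ y + θ * deriv ψ y := fun y => ((f1 y).add ((g1 y).const_mul θ)).deriv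
  have hT1 : ∀ i, T1 ε Φ i x = T1 ε φ i x := by
    intro i
    obtain ⟨a, b, -, -⟩ := far i
    simp only [T1, d1, z1 _ (by linarith : ρ < |(x - (i+1))/ε|), z1 _ (by linarith : ρ < |(x + (i+1))/ε|)]
    ring
  have hJΦ : ∀ y, J s Φ y = W1 (φ y) + θ * J s ψ y := by
    intro y
    rw [hΦ, J_add (L.good hs y) ((good_of_c2 hs h2 m0 y).const_mul θ), J_const_mul, L.eq]
  set e := ∑' i, T ε φ i x with he
  set e1 := ∑' i, T1 ε φ i x with he1
  have sT : Summable fun i => T ε φ i x := by simpa only [hT] using (p.T_summable hε x).1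
  have be : |e| ≤ CT * (E * (ε + |x|)) * Z :=
    tsum_of_norm_bounded (f := fun i => T ε φ i x) (hsum.hasSum.mul_left (CT * (E * (ε + |x|))))
      fun i => (Dc.T_est hs L hε hx i).1
  have be1 : |e1| ≤ CT * E * Z :=
    tsum_of_norm_bounded (f := fun i => T1 ε φ i x) (hsum.hasSum.mul_left (CT * E))
      fun i => (Dc.T_est hs L hε hx i).2
  have hhx : HH ε Φ x = φ (x/ε) + θ * ψ (x/ε) + e := by
    simp only [HH, hT]; rfl
  have hdx : deriv (fun y => HH ε Φ y + κ) x = (deriv φ (x/ε) + θ * deriv ψ (x/ε)) / ε + e1 := by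
    rw [((p.HH_der hε x).add_const κ).deriv, d1]; simp only [hT1, he1]
  set A := E * J s (HH ε Φ) x - (W1 (φ (x/ε)) + θ * J s ψ (x/ε)) with hA
  have hAs : HasSum (fun i : ℕ => (W1 (φ ((x - (i+1))/ε)) + W1 (φ ((x + (i+1))/ε)) - α * T ε φ i x) +
      θ * (J s ψ ((x - (i+1))/ε) + J s ψ ((x + (i+1))/ε))) (A - α * e) := by
    have h := ((p.J_HH hε x).2.mul_left E).sub (sT.hasSum.mul_left α)
    have e0 : E * J s (fun y => Φ (y/ε)) x = W1 (φ (x/ε)) + θ * J s ψ (x/ε) := by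
      have := Prof.J_scaled (s := s) hε Φ 0 x
      simp only [add_zero] at this
      rw [this, hJΦ]
    rw [mul_sub, e0] at h
    refine h.congr_fun fun i => ?_
    rw [p.J_T hε i x, hJΦ, hJΦ]; ring
  have bA : |A - α * e| ≤ (Cp * E^2 + θ * (2 * CJ * G * E)) * Z := by
    have hbd : ∀ i : ℕ, ‖(W1 (φ ((x - (i+1))/ε)) + W1 (φ ((x + (i+1))/ε)) - α * T ε φ i x) +
        θ * (J s ψ ((x - (i+1))/ε) + J s ψ ((x + (i+1))/ε))‖ ≤ (Cp * E^2 + θ * (2 * CJ * G * E)) * cf s i := by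
      intro i
      obtain ⟨a, b, a', b'⟩ := far i
      have hci := cf_pos s i
      have h1 := Dc.pair_est hs P L hε hε1 hx i
      have hj : ∀ y, 2 * ρ ≤ |y| → ((i:ℝ) + 1) / (2*ε) ≤ |y| → |J s ψ y| ≤ CJ * G * E * cf s i := by
        intro y hy hy'
        have h3 := far_rpow (R := 0) le_rfl hε (t := 1 + 2*s) (by linarith [hs.1]) hy'
        rw [zero_add, two_eps hε] at h3
        calc |J s ψ y| ≤ CJ * |y| ^ (-(1 + 2*s)) := hJf y hy
          _ ≤ CJ * (G * (ε * E) * cf s i) := mul_le_mul_of_nonneg_left h3 hCJ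
          _ ≤ CJ * (G * (1 * E) * cf s i) := by gcongr
          _ = _ := by ring
      have j1 := hj _ a a'
      have j2 := hj _ b b'
      rw [Real.norm_eq_abs]
      refine (abs_add_le _ _).trans ?_
      rw [abs_mul, abs_of_pos hθ]
      have j3 := mul_le_mul_of_nonneg_left ((abs_add_le _ _).trans (add_le_add j1 j2)) hθ.le
      calc _ ≤ _ := add_le_add h1 j3
        _ = _ := by ring
    have := tsum_of_norm_bounded (hsum.hasSum.mul_left (Cp * E^2 + θ * (2 * CJ * G * E))) hbd
    rwa [hAs.tsum_eq] at this
  set ω := W2 (φ (x/ε)) with hω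
  set R1 := J s ψ (x/ε) - ω * ψ (x/ε) - (l / α * (ω - α) + c * deriv φ (x/ε)) with hR1
  have bR1 : |R1| ≤ η := hψ (x/ε)
  set d := θ * ψ (x/ε) + e + κ with hd
  have bd : |d| ≤ Cd * (θ + E) := by
    have b1 : |θ * ψ (x/ε)| ≤ θ * M := by rw [abs_mul, abs_of_pos hθ]; exact mul_le_mul_of_nonneg_left (m0 _) hθ.le
    have b2 : |e| ≤ 2 * CT * Z * E := by
      refine be.trans ?_
      calc CT * (E * (ε + |x|)) * Z ≤ CT * (E * 2) * Z := by gcongr; linarith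
        _ = _ := by ring
    have b3 : |κ| = θ * (|l| / α) := by rw [hκ, abs_div, abs_mul, abs_of_pos hθ, abs_of_pos hα]; ring
    have b4 := abs_add_three (θ * ψ (x/ε)) e κ
    have : 0 ≤ |l| / α := by positivity
    have : 0 ≤ 2 * CT * Z := by positivity
    calc |d| ≤ θ * M + 2 * CT * Z * E + θ * (|l| / α) := by rw [← b3]; linarith
      _ ≤ M * (θ + E) + 2 * CT * Z * (θ + E) + |l| / α * (θ + E) := by
          have q1 := mul_nonneg hM0 hE0.le
          have q2 := mul_nonneg ‹0 ≤ 2 * CT * Z› hθ.le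
          have q3 := mul_nonneg ‹0 ≤ |l| / α› hE0.le
          linarith only [q1, q2, q3]
      _ = _ := by rw [hCd]; ring
  set r := W1 (HH ε Φ x + κ) - W1 (φ (x/ε)) - ω * d with hr
  have br : |r| ≤ K * (Cd * (θ + E))^2 := by
    have h := P.taylor (HH ε Φ x + κ) (φ (x/ε))
    have e0 : HH ε Φ x + κ - φ (x/ε) = d := by rw [hhx, hd]; ring
    rw [e0] at h
    refine h.trans ?_
    have := sq_le_sq' (by linarith [(abs_le.1 bd).1]) (abs_le.1 bd).2
    gcongr
  have main : ε * θ * c * deriv (fun y => HH ε Φ y + κ) x - θ * l - E * J s (fun y => HH ε Φ y + κ) x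
      + W1 (HH ε Φ x + κ) = -(θ * R1) + (ω - α) * e - (A - α * e) + θ^2 * (c * deriv ψ (x/ε))
        + ε * (θ * (c * e1)) + r := by
    rw [hdx, hJκ]
    have : E * J s (HH ε Φ) x = A + (W1 (φ (x/ε)) + θ * J s ψ (x/ε)) := by rw [hA]; ring
    rw [this, hr, hR1, hd, hκ]
    exact cell_alg hε.ne' hα.ne' _ _ _ _ _ _ _ _ _ _ _ _
  rw [main]
  have t1 : |-(θ * R1)| ≤ θ * η := by rw [abs_neg, abs_mul, abs_of_pos hθ]; gcongr
  have t2 : |(ω - α) * e| ≤ |ω - α| * (CT * (E * (ε + |x|)) * Z) := by rw [abs_mul]; gcongr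
  have t4 : |θ^2 * (c * deriv ψ (x/ε))| ≤ θ^2 * (|c| * M) := by
    rw [abs_mul, abs_mul, abs_of_pos (by positivity : 0 < θ^2)]
    have := m1 (x/ε)
    gcongr
  have t5 : |ε * (θ * (c * e1))| ≤ 1 * (θ * (|c| * (CT * E * Z))) := by
    rw [abs_mul, abs_mul, abs_mul, abs_of_pos hε, abs_of_pos hθ]
    gcongr
  have tri : ∀ a b c d e f : ℝ, |a + b - c + d + e + f| ≤ |a| + |b| + |c| + |d| + |e| + |f| := by
    intro a b c d e f
    have := abs_add_le (a + b - c + d + e) f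
    have := abs_add_le (a + b - c + d) e
    have := abs_add_le (a + b - c) d
    have := abs_sub (a + b) c
    have := abs_add_le a b
    linarith
  refine (tri _ _ _ _ _ _).trans ?_
  obtain ⟨sq1, sq2, sq3⟩ := sq_three hθ hE0
  have u1 : Cp * Z * E^2 ≤ Cp * Z * (θ + E)^2 := by gcongr
  have u2 : 2 * CJ * G * Z * (θ * E) ≤ 2 * CJ * G * Z * (θ + E)^2 := by gcongr
  have u3 : |c| * M * θ^2 ≤ |c| * M * (θ + E)^2 := by gcongr
  have u4 : |c| * (CT * Z) * (θ * E) ≤ |c| * (CT * Z) * (θ + E)^2 := by gcongr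
  have pos1 : 0 ≤ CT * Z * (θ + E)^2 := by positivity
  have pos2 : 0 ≤ (Cp * Z + 2 * CJ * G * Z + |c| * M + |c| * (CT * Z) + K * Cd^2) * |ω - α| * (E * (ε + |x|)) := by
    positivity
  linarith only [t1, t2, bA, t4, t5, br, u1, u2, u3, u4, pos1, pos2]
end

section
variable {s : ℝ} {W1 W2 φ : ℝ → ℝ} {α K R Q ε : ℝ}

lemma int_shift {h : ℝ → ℝ} (hh : ∀ x, h (x + 1) = h x + 1) (x : ℝ) (n : ℤ) : h (x + n) = h x + n := by
  have hp : Function.Periodic (fun y => h y - y) 1 := fun y => by simp only [hh]; ring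
  have := hp.int_mul n x
  simp only [mul_one] at this
  linarith

lemma deriv_int_shift {h : ℝ → ℝ} (hh : ∀ x, h (x + 1) = h x + 1) (x : ℝ) (n : ℤ) :
    deriv h (x + n) = deriv h x := by
  rw [← deriv_comp_add_const]
  have : (fun y : ℝ => h (y + n)) = fun y => h y + n := funext fun y => int_shift hh y n
  rw [this, deriv_add_const]

lemma J_int_shift {h : ℝ → ℝ} (hh : ∀ x, h (x + 1) = h x + 1) (x : ℝ) (n : ℤ) :
    J s h (x + n) = J s h x := by
  unfold J
  congr 2; funext z
  simp only [sd]
  rw [show x + n + z = x + z + n by ring, show x + n - z = x - z + n by ring, int_shift hh, int_shift hh,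
    int_shift hh]
  ring

/-- For small `δ` there is a profile `h`, with `h (x + 1) = h x + 1`, which solves the travelling
equation with speed `δ^(1+2s) |p₀| l / ∫ (φ')²` and forcing `δ^(2s) l` up to an error small compared
with `δ^(2s)`. -/
lemma exists_profile (hs : s ∈ Ioo (0:ℝ) 1) (P : Pot s W1 W2 α K) (L : Lay s W1 φ) (Dc : Dec s φ R Q)
    (l : ℝ) {p₀ η : ℝ} (hp : p₀ ≠ 0) (hη : 0 < η) :
    ∀ᶠ δ in nhdsWithin (0:ℝ) (Ioi 0), ∃ h : ℝ → ℝ, ContDiff ℝ 2 h ∧ (∀ x, h (x + 1) = h x + 1) ∧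
      (∀ x, Good s h x) ∧
      ∀ x, |(δ ^ (1 + 2*s) * (|p₀| * (l / ∫ y, deriv φ y ^ 2))) * deriv h x - δ ^ (2*s) * l
        - (δ * |p₀|) ^ (2*s) * J s h x + W1 (h x)| ≤ η * δ ^ (2*s) := by
  have hK := P.K_pos
  have hs0 := hs.1
  have hp0 : 0 < |p₀| := abs_pos.2 hp
  obtain ⟨ψ, h2, hcs, hψ⟩ := approx_corrector hs P L Dc l (by linarith : 0 < η/4)
  obtain ⟨C, ε₀, hC, hε₀, H⟩ := cell_est hs P L Dc l (l / ∫ y, deriv φ y ^ 2) h2 hcs hψ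
  set c := l / ∫ y, deriv φ y ^ 2 with hc
  set π := |p₀| ^ (2*s) with hπ
  have hπ0 : 0 < π := by positivity
  set η' := η / (8 * (C * π + 1)) with hη'
  have hη'0 : 0 < η' := by positivity
  have hη'1 : C * π * 2 * η' ≤ η / 4 := by
    rw [hη', ← mul_div_assoc, div_le_iff₀ (by positivity)]
    nlinarith [mul_nonneg hC hπ0.le]
  obtain ⟨X, hX⟩ : ∃ X : ℝ, ∀ y, X < |y| → |W2 (φ y) - α| ≤ η' := by
    have h := (Dec.omega_tendsto hs P L).eventually (closedBall_mem_nhds α hη'0)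
    have h' := (hasBasis_cocompact).eventually_iff.1 h
    obtain ⟨S, hS, hS'⟩ := h'
    obtain ⟨X, hX⟩ := hS.isBounded.subset_closedBall 0
    refine ⟨X, fun y hy => ?_⟩
    have : y ∉ S := fun hyS => by
      have := hX hyS; rw [mem_closedBall_zero_iff, Real.norm_eq_abs] at this; linarith
    simpa [Real.dist_eq] using hS' this
  have t1 : Tendsto (fun δ : ℝ => δ ^ (2*s)) (nhdsWithin 0 (Ioi 0)) (nhds 0) := by
    have := (Real.continuousAt_rpow_const 0 (2*s) (Or.inr (by linarith))).tendsto
    rw [Real.zero_rpow (by linarith)] at this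
    exact this.mono_left nhdsWithin_le_nhds
  have t2 : Tendsto (fun δ : ℝ => δ * |p₀|) (nhdsWithin 0 (Ioi 0)) (nhds 0) := by
    have : Tendsto (fun δ : ℝ => δ * |p₀|) (nhds 0) (nhds (0 * |p₀|)) := tendsto_id.mul_const _
    rw [zero_mul] at this
    exact this.mono_left nhdsWithin_le_nhds
  have t3 : Tendsto (fun δ : ℝ => C * (1 + π)^2 * δ ^ (2*s)) (nhdsWithin 0 (Ioi 0)) (nhds 0) := by
    simpa using t1.const_mul (C * (1 + π)^2)
  have t4 : Tendsto (fun δ : ℝ => C * (2*K) * π * (1 + |X|) * (δ * |p₀|)) (nhdsWithin 0 (Ioi 0)) (nhds 0) := by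
    simpa using t2.const_mul (C * (2*K) * π * (1 + |X|))
  filter_upwards [self_mem_nhdsWithin, t2.eventually (eventually_le_nhds hε₀),
    t2.eventually (eventually_le_nhds one_pos), t3.eventually (eventually_le_nhds (by linarith : 0 < η/4)),
    t4.eventually (eventually_le_nhds (by linarith : 0 < η/4))] with δ hδ e1 e2 e3 e4
  have hδ0 : 0 < δ := hδ
  set θ := δ ^ (2*s) with hθ
  have hθ0 : 0 < θ := Real.rpow_pos_of_pos hδ0 _
  set ε := δ * |p₀| with hε
  have hε0 : 0 < ε := mul_pos hδ0 hp0
  have hE : ε ^ (2*s) = π * θ := by rw [hε, Real.mul_rpow hδ0.le hp0.le, mul_comm]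
  obtain ⟨h, hc2, hh, hg, hest⟩ := H θ ε hθ0 hε0 e1
  refine ⟨h, hc2, hh, hg, ?_⟩
  have hlam : δ ^ (1 + 2*s) * (|p₀| * c) = ε * θ * c := by
    rw [Real.rpow_add hδ0, Real.rpow_one, hε]; ring
  have cell : ∀ x, |x| ≤ 1/2 → |(δ ^ (1 + 2*s) * (|p₀| * c)) * deriv h x - θ * l - ε ^ (2*s) * J s h x + W1 (h x)|
      ≤ η * θ := by
    intro x hx
    rw [hlam]
    refine (hest x hx).trans ?_
    rw [hE]
    have a1 : C * (θ + π * θ)^2 ≤ η/4 * θ := by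
      calc C * (θ + π * θ)^2 = C * (1 + π)^2 * θ * θ := by ring
        _ ≤ η/4 * θ := by gcongr
    have a2 : C * |W2 (φ (x/ε)) - α| * (π * θ * (ε + |x|)) ≤ η/4 * θ := by
      by_cases hx0 : X < |x/ε|
      · calc C * |W2 (φ (x/ε)) - α| * (π * θ * (ε + |x|)) ≤ C * η' * (π * θ * 2) := by
              gcongr
              · exact hX _ hx0
              · linarith
          _ = C * π * 2 * η' * θ := by ring
          _ ≤ _ := by gcongr
      · push Not at hx0
        rw [abs_div, abs_of_pos hε0, div_le_iff₀ hε0] at hx0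
        have hb : |W2 (φ (x/ε)) - α| ≤ 2 * K := by
          refine (abs_sub _ _).trans ?_
          have := P.bd (φ (x/ε)); have h0 := P.bd 0; rw [P.at0] at h0; linarith
        have hxx : |x| ≤ |X| * ε := hx0.trans (by gcongr; exact le_abs_self X)
        calc C * |W2 (φ (x/ε)) - α| * (π * θ * (ε + |x|)) ≤ C * (2*K) * (π * θ * (ε + |X| * ε)) := by gcongr
          _ = C * (2*K) * π * (1 + |X|) * ε * θ := by ring
          _ ≤ _ := by gcongr
    nlinarith [mul_pos hη hθ0]
  intro x
  have hx := cell (x - round x) (abs_sub_round x)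
  have ex : x = (x - round x) + (round x : ℤ) := by ring
  have w : W1 (h (x - round x) + (round x : ℤ)) = W1 (h (x - round x)) := by
    have hP : Function.Periodic W1 1 := P.per1
    simpa using hP.int_mul (round x) (h (x - round x))
  rw [ex, deriv_int_shift hh, J_int_shift hh, int_shift hh, w]
  exact hx
end

/-! ### Comparison with smooth strict supersolutions -/

/-- A smooth cut-off whose dilations have small fractional Laplacian. -/
lemma exists_cutoff {s : ℝ} (hs : s ∈ Ioo (0:ℝ) 1) : ∃ χ : ℝ → ℝ, ContDiff ℝ 2 χ ∧ (∀ x, 0 ≤ χ x ∧ χ x ≤ 1) ∧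
    (∀ x, |x| ≤ 1 → χ x = 1) ∧ (∀ x, 2 ≤ |x| → χ x = 0) ∧
    ∃ C, 0 ≤ C ∧ ∀ r, 0 < r → ∀ x, |J s (fun y => χ (r * y)) x| ≤ C * r ^ (2*s) := by
  let B : ContDiffBump (0:ℝ) := ⟨1, 2, one_pos, by norm_num⟩
  have c2 : ContDiff ℝ 2 (B : ℝ → ℝ) := B.contDiff
  obtain ⟨ρ, M, -, m0, m1, m2, -, -, -⟩ := compact_data c2 B.hasCompactSupport
  have hM0 : 0 ≤ M := (abs_nonneg _).trans (m0 0)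
  obtain ⟨d1, d2, -, -⟩ := c2_hasDeriv c2
  have hb : ∀ x, |J s B x| ≤ C1s s * (M * (1 ^ (2 - 2*s) / (2 - 2*s)) + 4 * M * (1 ^ (-(2*s)) / (2*s))) := fun x =>
    J_bound hs c2.continuous one_pos
      (fun z hz => sd_abs_le_of_deriv2 hz.1.le (fun y _ => d1 y) (fun y _ => d2 y) fun y _ => m2 y)
      (fun z _ => sd_bdd m0 x z)
  refine ⟨B, c2, fun x => ⟨B.nonneg, B.le_one⟩, fun x hx => B.one_of_mem_closedBall (by simpa using hx),
    fun x hx => B.zero_of_le_dist (by simpa using hx), _, (abs_nonneg _).trans (hb 0), fun r hr x => ?_⟩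
  have h := J_comp_affine s B hr.ne' 0 x
  simp only [add_zero] at h
  rw [h, abs_mul, abs_of_pos hr, abs_of_pos (Real.rpow_pos_of_pos hr _), mul_comm]
  gcongr
  exact hb _

set_option maxHeartbeats 1000000 in
/-- A continuous viscosity subsolution starting below a smooth bounded strict supersolution stays
below it. At a maximum point of the penalized difference, the test function has the same fractional
Laplacian as the supersolution up to the contribution of a slowly varying cut-off. -/
lemma comparison {s : ℝ} (hs : s ∈ Ioo (0:ℝ) 1) {f : ℝ → ℝ → ℝ} {K : ℝ} (hK : 0 ≤ K)
    (hf : ∀ y u v, |f y u - f y v| ≤ K * |u - v|) {w : ℝ → ℝ → ℝ}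
    (hw : ContinuousOn (fun q : ℝ × ℝ => w q.1 q.2) (Ici 0 ×ˢ univ))
    (hsub : IsSubsol1 s (fun _ y v _ I => I + f y v) (fun _ => 0) w) {b bt : ℝ → ℝ → ℝ}
    (hb : ContDiff ℝ 2 (fun q : ℝ × ℝ => b q.1 q.2)) (hbt : ∀ t y, HasDerivAt (fun t => b t y) (bt t y) t)
    (hbb : ∀ T, ∃ M, ∀ t ∈ Icc (0:ℝ) T, ∀ y, |b t y| ≤ M) (h0 : ∀ y, 0 ≤ b 0 y) {η : ℝ} (hη : 0 < η)
    (hsup : ∀ t y, J s (b t) y + f y (b t y) + η ≤ bt t y) {t₁ y₁ : ℝ} (ht₁ : 0 ≤ t₁) : w t₁ y₁ ≤ b t₁ y₁ := by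
  obtain ⟨-, hwb, hw0, htest⟩ := hsub
  have hw0' : ∀ y, w 0 y ≤ b 0 y := fun y => (hw0 y).trans (h0 y)
  rcases ht₁.eq_or_lt with h | ht
  · rw [← h]; exact hw0' y₁
  by_contra hcon
  push Not at hcon
  obtain ⟨M₁, hM₁⟩ := hwb (2*t₁) (by linarith)
  obtain ⟨M₂, hM₂⟩ := hbb (2*t₁)
  have hM₁0 : 0 ≤ M₁ := (abs_nonneg _).trans (hM₁ t₁ ⟨ht, by linarith⟩ 0)
  have hM₂0 : 0 ≤ M₂ := (abs_nonneg _).trans (hM₂ t₁ ⟨ht.le, by linarith⟩ 0)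
  set M := M₁ + M₂ with hM
  set g : ℝ → ℝ → ℝ := fun t y => Real.exp (-(K*t)) * (w t y - b t y) with hg
  have gle : ∀ t ∈ Icc (0:ℝ) (2*t₁), ∀ y, g t y ≤ M := by
    intro t htt y
    rcases htt.1.eq_or_lt with h | h
    · have : g t y ≤ 0 := by
        simp only [hg]
        rw [← h]
        exact mul_nonpos_of_nonneg_of_nonpos (Real.exp_pos _).le (by linarith [hw0' y])
      linarith
    · have h1 := abs_le.1 (hM₁ t ⟨h, htt.2⟩ y)
      have h2 := abs_le.1 (hM₂ t htt y)
      have h3 : Real.exp (-(K*t)) ≤ 1 := Real.exp_le_one_iff.2 (by have := mul_nonneg hK htt.1; linarith)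
      calc g t y ≤ Real.exp (-(K*t)) * M := by
            apply mul_le_mul_of_nonneg_left _ (Real.exp_pos _).le; linarith [h1.2, h2.1]
        _ ≤ 1 * M := by gcongr
        _ = M := one_mul M
  have hg0 : ∀ y, g 0 y ≤ 0 := fun y =>
    mul_nonpos_of_nonneg_of_nonpos (Real.exp_pos _).le (by linarith [hw0' y])
  set m₀ := g t₁ y₁ with hm₀
  have hm₀pos : 0 < m₀ := mul_pos (Real.exp_pos _) (by linarith)
  set κ := m₀ / 2 with hκ
  have hκ0 : 0 < κ := by positivity
  set N := (M + 1) / (κ * t₁) with hN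
  have hN0 : 0 < N := by positivity
  have hend : M < κ * Real.exp (N * (2*t₁ - t₁)) := by
    have := Real.add_one_le_exp (N * (2*t₁ - t₁))
    have e : κ * (N * (2*t₁ - t₁) + 1) = M + 1 + κ := by rw [hN]; field_simp; ring
    have := mul_le_mul_of_nonneg_left this hκ0.le
    linarith
  set A := M + 1 with hA
  have hA0 : 0 < A := by positivity
  obtain ⟨χ, χ2, χ01, χ1, χ0, C, hC, hχ⟩ := exists_cutoff hs
  -- the dilation parameter is chosen so small that the cut-off contributes less than `η`
  obtain ⟨r, hr, hr1, hr2⟩ : ∃ r : ℝ, 0 < r ∧ r * |y₁| ≤ 1 ∧ Real.exp (K * (2*t₁)) * A * (C * r ^ (2*s)) < η := by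
    have l1 : Tendsto (fun r : ℝ => r * |y₁|) (nhdsWithin 0 (Ioi 0)) (nhds 0) := by
      have : Tendsto (fun r : ℝ => r * |y₁|) (nhds 0) (nhds (0 * |y₁|)) := tendsto_id.mul_const _
      rw [zero_mul] at this
      exact this.mono_left nhdsWithin_le_nhds
    have l2 : Tendsto (fun r : ℝ => Real.exp (K * (2*t₁)) * A * (C * r ^ (2*s))) (nhdsWithin 0 (Ioi 0)) (nhds 0) := by
      have := (Real.continuousAt_rpow_const 0 (2*s) (Or.inr (by linarith [hs.1]))).tendsto
      rw [Real.zero_rpow (by linarith [hs.1])] at this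
      have := ((this.mono_left (nhdsWithin_le_nhds (s := Ioi 0))).const_mul C).const_mul (Real.exp (K * (2*t₁)) * A)
      simpa using this
    obtain ⟨r, h1, h2, h3⟩ := ((self_mem_nhdsWithin (s := Ioi (0:ℝ)) (a := 0)) |> fun h => 
      (eventually_mem_set.2 h).and ((l1.eventually (eventually_le_nhds one_pos)).and
      (l2.eventually (eventually_lt_nhds hη)))).exists
    exact ⟨r, h1, h2, h3⟩
  set pen : ℝ → ℝ → ℝ := fun t y => A * (1 - χ (r*y)) + κ * Real.exp (N * (t - t₁)) with hpen
  have pen0 : ∀ t y, 0 ≤ pen t y := fun t y => by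
    have := (χ01 (r*y)).2
    have := mul_nonneg hA0.le (by linarith : 0 ≤ 1 - χ (r*y))
    have := mul_pos hκ0 (Real.exp_pos (N * (t - t₁)))
    simp only [hpen]; linarith
  set P : ℝ × ℝ → ℝ := fun q => g q.1 q.2 - pen q.1 q.2 with hP
  set S : Set (ℝ × ℝ) := Icc 0 (2*t₁) ×ˢ Icc (-(2/r)) (2/r) with hS
  have hSc : IsCompact S := isCompact_Icc.prod isCompact_Icc
  have hχc := χ2.continuous
  have hbc := hb.continuous
  have hPc : ContinuousOn P S := by
    have hsubS : S ⊆ Ici 0 ×ˢ univ := fun q hq => ⟨hq.1.1, trivial⟩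
    have c1 : ContinuousOn (fun q : ℝ × ℝ => Real.exp (-(K*q.1)) * (w q.1 q.2 - b q.1 q.2)) S :=
      (Continuous.continuousOn (by fun_prop)).mul ((hw.mono hsubS).sub hbc.continuousOn)
    exact c1.sub (Continuous.continuousOn (by simp only [hpen]; fun_prop))
  have y1S : |y₁| ≤ 2/r := by rw [le_div_iff₀ hr]; linarith
  have h1S : (t₁, y₁) ∈ S := ⟨⟨ht.le, by simp only; linarith⟩, abs_le.1 y1S⟩
  obtain ⟨⟨t₀, x₀⟩, h0S, hmaxS⟩ := hSc.exists_isMaxOn ⟨_, h1S⟩ hPc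
  have hP1 : P (t₁, y₁) = m₀ / 2 := by
    have : χ (r * y₁) = 1 := χ1 _ (by rw [abs_mul, abs_of_pos hr]; exact hr1)
    simp only [hP, hpen, this, sub_self, mul_zero, Real.exp_zero, mul_one, zero_add]
    rw [← hm₀, hκ]; ring
  set m := P (t₀, x₀) with hm
  have hmpos : 0 < m := by
    have := hmaxS h1S
    simp only [mem_setOf_eq] at this
    rw [hP1] at this
    linarith
  have ht00 : 0 < t₀ := by
    rcases h0S.1.1.eq_or_lt with h | h
    · exfalso
      simp only at h
      have h1 := hg0 x₀
      have h2 := pen0 0 x₀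
      have : m = g 0 x₀ - pen 0 x₀ := by rw [hm, ← h]
      linarith
    · exact h
  have ht02 : t₀ < 2*t₁ := by
    rcases h0S.1.2.eq_or_lt with h | h
    · exfalso
      simp only at h
      have h1 := gle (2*t₁) ⟨by linarith, le_rfl⟩ x₀
      have h3 := mul_nonneg hA0.le (by linarith [(χ01 (r*x₀)).2] : 0 ≤ 1 - χ (r*x₀))
      have : m = g (2*t₁) x₀ - (A * (1 - χ (r*x₀)) + κ * Real.exp (N * (2*t₁ - t₁))) := by rw [hm, h]
      linarith
    · exact h
  have hmax : ∀ t ∈ Icc (0:ℝ) (2*t₁), ∀ y, g t y - pen t y ≤ m := by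
    intro t htt y
    by_cases hy : |y| ≤ 2/r
    · exact hmaxS (a := (t, y)) ⟨htt, abs_le.1 hy⟩
    · push Not at hy
      have hχy : χ (r*y) = 0 := χ0 _ (by rw [abs_mul, abs_of_pos hr]; rw [div_lt_iff₀ hr] at hy; linarith)
      have h1 := gle t htt y
      have h2 := mul_pos hκ0 (Real.exp_pos (N * (t - t₁)))
      simp only [hpen, hχy]
      linarith
  set v : ℝ → ℝ → ℝ := fun t y => b t y + Real.exp (K*t) * (m + pen t y) with hv
  have hexp : ∀ t, Real.exp (K*t) * Real.exp (-(K*t)) = 1 := fun t => by rw [← Real.exp_add]; simp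
  have hwv : ∀ t ∈ Icc (0:ℝ) (2*t₁), ∀ y, w t y - v t y ≤ 0 := by
    intro t htt y
    have h1 : g t y ≤ m + pen t y := by linarith [hmax t htt y]
    have h2 := mul_le_mul_of_nonneg_left h1 (Real.exp_pos (K*t)).le
    have h3 : Real.exp (K*t) * g t y = w t y - b t y := by
      simp only [hg]; rw [← mul_assoc, hexp, one_mul]
    simp only [hv]; linarith
  have hwv0 : w t₀ x₀ - v t₀ x₀ = 0 := by
    have h1 : g t₀ x₀ = m + pen t₀ x₀ := by rw [hm]; simp only [hP]; ring
    have h3 : Real.exp (K*t₀) * g t₀ x₀ = w t₀ x₀ - b t₀ x₀ := by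
      simp only [hg]; rw [← mul_assoc, hexp, one_mul]
    rw [h1] at h3
    simp only [hv]; linarith
  have hvc : ContDiff ℝ 2 (fun q : ℝ × ℝ => v q.1 q.2) := by
    have k1 : ContDiff ℝ 2 (fun q : ℝ × ℝ => χ (r * q.2)) := χ2.comp (contDiff_const.mul contDiff_snd)
    have k2 : ContDiff ℝ 2 (fun q : ℝ × ℝ => Real.exp (K * q.1)) := (contDiff_const.mul contDiff_fst).exp
    have k3 : ContDiff ℝ 2 (fun q : ℝ × ℝ => Real.exp (N * (q.1 - t₁))) :=
      (contDiff_const.mul (contDiff_fst.sub contDiff_const)).exp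
    exact hb.add (k2.mul (contDiff_const.add ((contDiff_const.mul (contDiff_const.sub k1)).add (contDiff_const.mul k3))))
  obtain ⟨τ, hτ, hτ1, hτ2⟩ : ∃ τ, 0 < τ ∧ τ < t₀ ∧ t₀ + τ ≤ 2*t₁ :=
    ⟨min (t₀/2) (2*t₁ - t₀), lt_min (by linarith) (by linarith), (min_le_left _ _).trans_lt (by linarith),
      by linarith [min_le_right (t₀/2) (2*t₁ - t₀)]⟩
  have hvisc := htest t₀ x₀ ht00 v hvc τ 1 hτ hτ1 one_pos (fun t x htt _ => by
    rw [hwv0]; exact hwv t ⟨by linarith [htt.1], by linarith [htt.2]⟩ x)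
  have hE0 := Real.exp_pos (K*t₀)
  have ht0I : t₀ ∈ Icc (0:ℝ) (2*t₁) := ⟨ht00.le, ht02.le⟩
  have vder : HasDerivAt (fun t => v t x₀) (bt t₀ x₀ + (Real.exp (K*t₀) * K * (m + pen t₀ x₀) +
      Real.exp (K*t₀) * (κ * (Real.exp (N * (t₀ - t₁)) * N)))) t₀ := by
    have k1 : HasDerivAt (fun t : ℝ => Real.exp (K*t)) (Real.exp (K*t₀) * (K*1)) t₀ :=
      ((hasDerivAt_id t₀).const_mul K).exp
    have k2 : HasDerivAt (fun t : ℝ => Real.exp (N * (t - t₁))) (Real.exp (N * (t₀ - t₁)) * (N*1)) t₀ :=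
      (((hasDerivAt_id t₀).sub_const t₁).const_mul N).exp
    have k3 := (hbt t₀ x₀).add (k1.mul (((k2.const_mul κ).const_add (A * (1 - χ (r*x₀)))).const_add m))
    exact k3.congr_deriv (by simp only [hpen]; ring)
  rw [vder.deriv] at hvisc
  -- the nonlocal term
  have bt0c2 : ContDiff ℝ 2 (b t₀) := hb.comp (contDiff_const.prodMk contDiff_id)
  have vt0c2 : ContDiff ℝ 2 (v t₀) := hvc.comp (contDiff_const.prodMk contDiff_id)
  have wt0c : Continuous (w t₀) := by
    rw [← continuousOn_univ]
    exact hw.comp (f := fun y : ℝ => (t₀, y)) (by fun_prop) (fun y _ => ⟨ht00.le, trivial⟩)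
  set χr : ℝ → ℝ := fun y => χ (r*y) with hχr
  have χrc2 : ContDiff ℝ 2 χr := χ2.comp (contDiff_const.mul contDiff_id)
  have χrb : ∀ y, |χr y| ≤ 1 := fun y => abs_le.2 ⟨by linarith [(χ01 (r*y)).1], (χ01 (r*y)).2⟩
  set Mv := M₂ + Real.exp (K*t₀) * (m + (A + κ * Real.exp (N * (t₀ - t₁)))) with hMv
  have vb : ∀ y, |v t₀ y| ≤ Mv := by
    intro y
    refine (abs_add_le _ _).trans (add_le_add (hM₂ t₀ ht0I y) ?_)
    rw [abs_of_nonneg (mul_nonneg hE0.le (by linarith [pen0 t₀ y]))]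
    simp only [hpen]
    have := mul_nonneg hA0.le (χ01 (r*y)).1
    gcongr
    linarith
  have hsplit := split_le_J hs wt0c vt0c2 (M := max M₁ Mv)
    (fun y => (hM₁ t₀ ⟨ht00, ht02.le⟩ y).trans (le_max_left _ _)) (fun y => (vb y).trans (le_max_right _ _)) x₀
    (fun y => by rw [hwv0]; exact hwv t₀ ht0I y) one_pos
  have hJv : J s (v t₀) x₀ = J s (b t₀) x₀ + (-(Real.exp (K*t₀) * A)) * J s χr x₀ := by
    rw [← J_const_mul, ← J_add (good_of_c2 hs bt0c2 (hM₂ t₀ ht0I) x₀)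
      ((good_of_c2 hs χrc2 χrb x₀).const_mul _)]
    unfold J
    congr 2; funext z; simp only [sd, hv, hpen, hχr]; ring
  have hJχ : |(-(Real.exp (K*t₀) * A)) * J s χr x₀| < η := by
    rw [abs_mul, abs_neg, abs_of_pos (by positivity)]
    refine lt_of_le_of_lt ?_ hr2
    have := hχ r hr x₀
    gcongr
  have hd : w t₀ x₀ - b t₀ x₀ = Real.exp (K*t₀) * (m + pen t₀ x₀) := by
    have := hwv0; simp only [hv] at this; linarith
  have hdpos : 0 ≤ w t₀ x₀ - b t₀ x₀ := by
    rw [hd]; exact mul_nonneg hE0.le (by linarith [pen0 t₀ x₀])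
  have hfl := (abs_le.1 (hf x₀ (w t₀ x₀) (b t₀ x₀))).2
  rw [abs_of_nonneg hdpos] at hfl
  have hsp := hsup t₀ x₀
  have hpos : 0 ≤ Real.exp (K*t₀) * (κ * (Real.exp (N * (t₀ - t₁)) * N)) := by positivity
  have hKd : Real.exp (K*t₀) * K * (m + pen t₀ x₀) = K * (w t₀ x₀ - b t₀ x₀) := by rw [hd]; ring
  have hlast := (abs_lt.1 hJχ).2
  rw [hJv] at hsplit
  rw [hKd] at hvisc
  linarith only [hvisc, hsplit, hfl, hsp, hpos, hlast]

/-! ### Travelling waves as barriers for the effective Hamiltonian -/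

lemma fracI1_neg (s : ℝ) (u : ℝ → ℝ) (r x : ℝ) :
    fracI1 s (fun y => - u y) r x = - fracI1 s u r x := by
  have hd : deriv (fun y => - u y) x = - deriv u x := deriv.fun_neg
  unfold fracI1
  rw [← mul_neg, ← integral_neg, hd]
  congr 2
  funext z
  ring

lemma fracI2_neg (s : ℝ) (u : ℝ → ℝ) (r x : ℝ) :
    fracI2 s (fun y => - u y) r x = - fracI2 s u r x := by
  unfold fracI2
  rw [← mul_neg, ← integral_neg]
  congr 2
  funext z
  ring

/-- Reflection `w ↦ -w` turns supersolutions into subsolutions of the reflected equation. -/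
lemma subsol_neg {s : ℝ} {W1 : ℝ → ℝ} {p L : ℝ} {w : ℝ → ℝ → ℝ}
    (hsup : IsSupersol1 s (fun _ y v _ I => I + L - W1 (v + p * y)) (fun _ => 0) w) :
    IsSubsol1 s (fun _ y v _ I => I + -L - -W1 (-(v + -p * y))) (fun _ => 0) (fun t y => - w t y) := by
  obtain ⟨h1, h2, h3, h4⟩ := hsup
  refine ⟨h1.neg, fun T hT => ?_, fun x => by simpa using h3 x, ?_⟩
  · obtain ⟨M, hM⟩ := h2 T hT
    exact ⟨M, fun t ht x => by rw [abs_neg]; exact hM t ht x⟩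
  · intro t₀ x₀ ht₀ φ hφ τ r hτ hτ' hr hmax
    have := h4 t₀ x₀ ht₀ (fun t x => - φ t x) hφ.neg τ r hτ hτ' hr
      (fun t x ht hx => by have := hmax t x ht hx; linarith)
    have e1 : deriv (fun t => - φ t x₀) t₀ = - deriv (fun t => φ t x₀) t₀ := deriv.fun_neg
    have e4 : -(-w t₀ x₀ + -p * x₀) = w t₀ x₀ + p * x₀ := by ring
    simp only [e1, fracI1_neg] at this
    simp only [fracI2_neg, e4]
    linarith

lemma slope_neg {w : ℝ → ℝ → ℝ} {lam : ℝ} (h : SlopeLim1 w lam) : SlopeLim1 (fun t y => - w t y) (-lam) := by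
  intro ε hε R hR
  obtain ⟨T, hT⟩ := h ε hε R hR
  refine ⟨T, fun τ hτ y hy => ?_⟩
  have := hT τ hτ y hy
  rwa [show -w τ y / τ - -lam = -(w τ y / τ - lam) by ring, abs_neg]

/-- A strict travelling supersolution of speed `lam` bounds the asymptotic slope from above. -/
lemma slope_le {s : ℝ} (hs : s ∈ Ioo (0:ℝ) 1) {W1 : ℝ → ℝ} {K : ℝ} (hK : 0 ≤ K)
    (hlip : ∀ a b, |W1 a - W1 b| ≤ K * |a - b|) (hper : ∀ v, W1 (v + 1) = W1 v)
    {p L lam m mu : ℝ} (hp : p ≠ 0) (hm : 0 < m) {w : ℝ → ℝ → ℝ}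
    (hwc : ContinuousOn (fun q : ℝ × ℝ => w q.1 q.2) (Ici 0 ×ˢ univ))
    (hw : IsSubsol1 s (fun _ y v _ I => I + L - W1 (v + p * y)) (fun _ => 0) w)
    (hmu : SlopeLim1 w mu) {h : ℝ → ℝ} (hh : ContDiff ℝ 2 h) (hq : ∀ x, h (x + 1) = h x + 1)
    (hstrict : ∀ x, L + m ≤ lam * deriv h x - |p| ^ (2*s) * J s h x + W1 (h x)) : mu ≤ lam := by
  obtain ⟨C, hC0, hC⟩ := exists_bound_periodic (f := fun x => h x - x)
    (hh.continuous.sub continuous_id) (fun v => by simp only [hq]; ring)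
  obtain ⟨n, hn⟩ := exists_nat_ge C
  have hpern : ∀ v, W1 (v + n) = W1 v := by
    intro v
    have : Function.Periodic W1 1 := hper
    simpa using this.nat_mul n v
  have hcomp : ∀ t, 0 ≤ t → w t 0 ≤ h (p * 0 + lam * t) - p * 0 + n := by
    intro t ht
    have hw' : IsSubsol1 s (fun _ y v _ I => I + (L - W1 (v + p * y))) (fun _ => 0) w := by
      have e : (fun (_ y v _ I : ℝ) => I + (L - W1 (v + p * y))) = fun _ y v _ I => I + L - W1 (v + p * y) := by
        funext _ y v _ I; ring
      rw [e]; exact hw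
    refine comparison hs hK (f := fun y v => L - W1 (v + p * y)) ?_ hwc hw'
      (b := fun t y => h (p * y + lam * t) - p * y + n)
      (bt := fun t y => lam * deriv h (p * y + lam * t)) ?_ ?_ ?_ ?_ hm ?_ ht
    · intro y u v
      have := hlip (v + p * y) (u + p * y)
      rw [show L - W1 (u + p * y) - (L - W1 (v + p * y)) = W1 (v + p * y) - W1 (u + p * y) by ring]
      rwa [show v + p * y - (u + p * y) = -(u - v) by ring, abs_neg] at this
    · fun_prop
    · intro t y
      have hd : HasDerivAt h (deriv h (p * y + lam * t)) (p * y + lam * t) :=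
        (hh.differentiable (by norm_num) _).hasDerivAt
      have hi : HasDerivAt (fun t : ℝ => p * y + lam * t) (lam * 1) t :=
        ((hasDerivAt_id t).const_mul lam).const_add _
      exact (((hd.comp t hi).sub_const (p * y)).add_const (n:ℝ)).congr_deriv (by ring)
    · intro T
      refine ⟨C + |lam| * T + n, fun t ht y => ?_⟩
      have h1 := hC (p * y + lam * t)
      have h2 : |lam * t| ≤ |lam| * T := by
        rw [abs_mul, abs_of_nonneg ht.1]
        exact mul_le_mul_of_nonneg_left ht.2 (abs_nonneg _)
      have h3 : (0:ℝ) ≤ n := n.cast_nonneg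
      rw [abs_le] at *
      constructor <;> linarith [h1.1, h1.2, h2.1, h2.2]
    · intro y
      have h1 := (abs_le.1 (hC (p * y + lam * 0))).1
      have : h (p * y + lam * 0) - (p * y + lam * 0) + n ≥ 0 := by linarith
      linarith
    · intro t y
      have e : J s (fun y => h (p * y + lam * t) - p * y + n) y = |p| ^ (2*s) * J s h (p * y + lam * t) := by
        rw [← J_comp_affine s h hp]
        unfold J
        congr 2
        funext z
        rw [← sd_add_affine (fun y => h (p * y + lam * t)) (-p) n]
        congr 2
        funext y; ring
      have := hstrict (p * y + lam * t)
      rw [e, show h (p * y + lam * t) - p * y + n + p * y = h (p * y + lam * t) + n by ring, hpern]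
      linarith
  have hlin : ∀ t, 0 ≤ t → w t 0 ≤ lam * t + (C + n) := by
    intro t ht
    have h1 := hcomp t ht
    have h2 := (abs_le.1 (hC (p * 0 + lam * t))).2
    linarith
  refine le_of_forall_pos_le_add fun ε hε => ?_
  obtain ⟨T, hT⟩ := hmu (ε / 2) (by positivity) 1 one_pos
  have hn0 : (0:ℝ) ≤ n := n.cast_nonneg
  set t := max T (max 1 (2 * (C + n) / ε)) with htdef
  have ht1 : 1 ≤ t := (le_max_left _ _).trans (le_max_right _ _)
  have ht0 : 0 < t := by linarith
  have ht2 : 2 * (C + n) ≤ t * ε := by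
    rw [← div_le_iff₀ hε]; exact (le_max_right _ _).trans (le_max_right _ _)
  have h1 := (abs_le.1 (hT t (le_max_left _ _) 0 (by simp))).1
  have h2 : w t 0 / t ≤ lam + ε / 2 := by
    rw [div_le_iff₀ ht0]
    linarith [hlin t ht0.le]
  linarith

/-- The lower counterpart of `slope_le`, obtained by reflecting the solution and the profile. -/
lemma le_slope {s : ℝ} (hs : s ∈ Ioo (0:ℝ) 1) {W1 : ℝ → ℝ} {K : ℝ} (hK : 0 ≤ K)
    (hlip : ∀ a b, |W1 a - W1 b| ≤ K * |a - b|) (hper : ∀ v, W1 (v + 1) = W1 v)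
    {p L lam m mu : ℝ} (hp : p ≠ 0) (hm : 0 < m) {w : ℝ → ℝ → ℝ}
    (hwc : ContinuousOn (fun q : ℝ × ℝ => w q.1 q.2) (Ici 0 ×ˢ univ))
    (hw : IsSupersol1 s (fun _ y v _ I => I + L - W1 (v + p * y)) (fun _ => 0) w)
    (hmu : SlopeLim1 w mu) {h : ℝ → ℝ} (hh : ContDiff ℝ 2 h) (hq : ∀ x, h (x + 1) = h x + 1)
    (hstrict : ∀ x, lam * deriv h x - |p| ^ (2*s) * J s h x + W1 (h x) ≤ L - m) : lam ≤ mu := by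
  refine neg_le_neg_iff.1 (slope_le hs hK (W1 := fun v => - W1 (-v)) (p := -p) (L := -L) (m := m)
    (h := fun x => - h (-x)) ?_ ?_ (neg_ne_zero.2 hp) hm hwc.neg (subsol_neg hw) (slope_neg hmu) ?_ ?_ ?_)
  · intro a b
    have := hlip (-b) (-a)
    rw [show -W1 (-a) - -W1 (-b) = W1 (-b) - W1 (-a) by ring]
    rwa [show -b - -a = a - b by ring] at this
  · intro v
    have := hper (-(v + 1))
    rw [← this]; congr 2; ring
  · fun_prop
  · intro x
    have := hq (-(x + 1))
    rw [show -(x + 1) + 1 = -x by ring] at this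
    rw [this]; ring
  · intro x
    have hd : deriv (fun x => - h (-x)) x = deriv h (-x) := by
      rw [deriv.fun_neg, deriv_comp_neg, neg_neg]
    have hJ : J s (fun x => - h (-x)) x = - J s h (-x) := by
      unfold J
      rw [← mul_neg, ← integral_neg]
      congr 2
      funext z
      simp only [sd]
      rw [show -(x + z) = -x - z by ring, show -(x - z) = -x + z by ring]
      ring
    have := hstrict (-x)
    rw [hd, hJ, abs_neg, neg_neg]
    linarith

/-- Two-sided estimate of the effective Hamiltonian at relative precision `η`. -/
lemma slope_bounds {s : ℝ} (hs : s ∈ Ioo (0:ℝ) 1) {W φ : ℝ → ℝ} (hW : WAssump s W)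
    (hφ : IsLayerSolution s W φ) {Hbar : ℝ → ℝ → ℝ}
    (hHbar : ∀ p L : ℝ, ∃ w : ℝ → ℝ → ℝ,
      IsSol1 s (fun _ y v _ I => I + L - deriv W (v + p * y)) (fun _ => 0) w ∧ SlopeLim1 w (Hbar p L))
    {p₀ L₀ η : ℝ} (hp₀ : p₀ ≠ 0) (hη : 0 < η) :
    ∀ᶠ δ in nhdsWithin (0:ℝ) (Ioi 0),
      δ ^ (1 + 2*s) * (|p₀| * ((L₀ - 2*η) / ∫ y, deriv φ y ^ 2)) ≤ Hbar (δ * p₀) (δ ^ (2*s) * L₀) ∧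
      Hbar (δ * p₀) (δ ^ (2*s) * L₀) ≤ δ ^ (1 + 2*s) * (|p₀| * ((L₀ + 2*η) / ∫ y, deriv φ y ^ 2)) := by
  obtain ⟨K, hK, P⟩ := exists_pot hW
  have Ly := exists_lay hs hφ
  obtain ⟨R, Q, Dc⟩ := exists_dec hs P Ly
  filter_upwards [exists_profile hs P Ly Dc (L₀ + 2*η) hp₀ hη, exists_profile hs P Ly Dc (L₀ - 2*η) hp₀ hη,
    self_mem_nhdsWithin] with δ hu hl hδ
  have hδ0 : (0:ℝ) < δ := hδ
  have hθ : 0 < δ ^ (2*s) := Real.rpow_pos_of_pos hδ0 _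
  have habs : |δ * p₀| = δ * |p₀| := by rw [abs_mul, abs_of_pos hδ0]
  have hpne : δ * p₀ ≠ 0 := mul_ne_zero hδ0.ne' hp₀
  obtain ⟨w, ⟨hwc, hsub, hsup⟩, hmu⟩ := hHbar (δ * p₀) (δ ^ (2*s) * L₀)
  have hm : 0 < η * δ ^ (2*s) := mul_pos hη hθ
  constructor
  · obtain ⟨h, h2, hq, -, he⟩ := hl
    refine le_slope hs hK.le P.lip1 P.per1 hpne hm hwc hsup hmu h2 hq fun x => ?_
    have := (abs_le.1 (he x)).2
    rw [habs]
    linarith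
  · obtain ⟨h, h2, hq, -, he⟩ := hu
    refine slope_le hs hK.le P.lip1 P.per1 hpne hm hwc hsub hmu h2 hq fun x => ?_
    have := (abs_le.1 (he x)).1
    rw [habs]
    linarith

end Oro

/-- **Orowan's law (Theorem 1.4).** For `N = 1`, `I_s = −(−Δ)^s`, `σ ≡ 0`, under assumption
(W), for `p₀ ≠ 0` the effective Hamiltonian satisfies
`H̄(δp₀, δ^{2s}L₀)/δ^{1+2s} → c₀|p₀|L₀` as `δ → 0⁺`, with `c₀ = (∫(φ')²)⁻¹`. -/
theorem orowan_law
    (s : ℝ) (hs : s ∈ Set.Ioo (0:ℝ) 1)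
    (W : ℝ → ℝ) (hW : WAssump s W)
    (φ : ℝ → ℝ) (hφ : IsLayerSolution s W φ)
    -- `H̄` is the effective Hamiltonian given by the ergodicity theorem (with `σ ≡ 0`):
    (Hbar : ℝ → ℝ → ℝ)
    (hHbar : ∀ p L : ℝ, ∃ w : ℝ → ℝ → ℝ,
      IsSol1 s (fun _ y v _ I => I + L - deriv W (v + p * y)) (fun _ => 0) w ∧
      SlopeLim1 w (Hbar p L))
    (p₀ L₀ : ℝ) (hp₀ : p₀ ≠ 0) :
    Tendsto (fun δ : ℝ => Hbar (δ * p₀) (δ ^ (2*s) * L₀) / δ ^ (1 + 2*s))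
      (nhdsWithin 0 (Set.Ioi 0))
      (nhds ((∫ x : ℝ, (deriv φ x) ^ 2)⁻¹ * |p₀| * L₀)) := by
  obtain ⟨K, -, P⟩ := Oro.exists_pot hW
  have Ly := Oro.exists_lay hs hφ
  obtain ⟨R, Q, Dc⟩ := Oro.exists_dec hs P Ly
  have hI := (Oro.Dec.int_sq_pos hs Ly Dc).2
  set I := ∫ x : ℝ, (deriv φ x) ^ 2 with hIdef
  have hp : 0 < |p₀| := abs_pos.2 hp₀
  rw [Metric.tendsto_nhds]
  intro ε hε
  -- with this `η` the two bounds differ from the limit by `ε / 2`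
  have hη : 0 < ε * I / (4 * |p₀|) := by positivity
  filter_upwards [Oro.slope_bounds hs hW hφ hHbar (L₀ := L₀) hp₀ hη, self_mem_nhdsWithin] with δ hb hδ
  have hδ0 : 0 < δ ^ (1 + 2*s) := Real.rpow_pos_of_pos hδ _
  obtain ⟨h1, h2⟩ := hb
  rw [← hIdef] at h1 h2
  have e1 : |p₀| * ((L₀ - 2 * (ε * I / (4 * |p₀|))) / I) = I⁻¹ * |p₀| * L₀ - ε / 2 := by
    field_simp; ring
  have e2 : |p₀| * ((L₀ + 2 * (ε * I / (4 * |p₀|))) / I) = I⁻¹ * |p₀| * L₀ + ε / 2 := by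
    field_simp; ring
  rw [e1, ← le_div_iff₀' hδ0] at h1
  rw [e2, ← div_le_iff₀' hδ0] at h2
  rw [Real.dist_eq, abs_lt]
  constructor <;> linarith
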